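/- Let K be a totally real biquadratic field with √5 ∈ K, and suppose K is not one of ℚ(√2,√5), ℚ(√3,√5), ℚ(√5,√6), ℚ(√5,√7). Then the Pythagoras number of the ring of integers O_K equals exactly 5. -/

import Mathlib

/-!
Such a field is `K = ℚ(√5, √m)` with `m ≥ 11` squarefree and prime to `5` (`exists_radicand`), and
its ring of integers is `ℤ[φ] ⊕ ℤ[φ]ω`, where `φ` is the golden ratio and `ω` is `(1 + √m) / 2` or
`√m` (`isGen_one`, `isGen_two_three`). Writing integers as `u + vω`, a sum of `n` squares in `O_K` is
the value at `(1, ω)` of a binary quadratic form over `ℤ[φ]` that is a sum of `n` squares of linear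
forms.

*Upper bound.* Every sum of squares of binary linear forms over `ℤ[φ]` is a sum of five (`rep_five`).
It suffices to treat six squares, whose coefficients may be assumed not all even. After a suitable
one of the six is split off, the remaining form `(a, b, c)` has odd leading coefficient `a` (up to
exchanging the variables), and such a form is a sum of four squares (`four_linear`): by `exists_pure`
there is a pure icosian `v` of norm `ac - b²`; the icosian `z = b + v` has norm `ac` and factors as
`z = g h` with `N g = a` (`exists_factor`, a consequence of the icosians being norm-Euclidean); units
move both factors into the Lipschitz order because `a` is odd, and the coordinates of `ḡ` and `h` are
the coefficients of the four linear forms.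

`exists_pure` rests on the theorem that a totally positive element `D` is a sum of three squares in
`ℚ(√5)` (`threeSq`). The proof follows the classical one over `ℚ`: Dirichlet's theorem on primes in
progressions provides an auxiliary `q` such that `D` is the first minor of a positive definite
ternary form of determinant one, and reduction of such forms (`Unimod.orthPair`) gives a rational
vector of norm `D`. Elements divisible by the prime above `5` need a separate choice of `q`.

*Lower bound.* The element `ω² + (ω + 1)² + 1 + 2φ²` if `m ≡ 1` mod `4`, and otherwise
`(k + 1 + ω)² + (k + ω)² + 1 + 2φ²` with `(2k + 1)²` between about `2m` and `6m`, is not a sum of four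
squares `∑ (xᵢ + yᵢω)²`: positivity and the Cauchy–Schwarz inequality in both embeddings force
`∑ yᵢ² = 2` (`lower_one`, `lower_two`), and that is impossible by parity (`parity`).
-/

/-- The totally real biquadratic field `ℚ(√p, √q)` as a subfield of `ℝ`. -/
noncomputable def biqField (p q : ℕ) : IntermediateField ℚ ℝ :=
  IntermediateField.adjoin ℚ {Real.sqrt p, Real.sqrt q}

/-- The ring of integers of a subfield `K` of `ℝ`, viewed as the set of elements
of `K` that are integral over `ℤ`. -/
def ringOfInt (K : IntermediateField ℚ ℝ) : Set ℝ :=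
  {x : ℝ | x ∈ K ∧ IsIntegral ℤ x}

/-- `α` is a sum of `n` squares of elements of `S`. -/
def SumOfNSquaresIn (S : Set ℝ) (n : ℕ) (α : ℝ) : Prop :=
  ∃ x : Fin n → ℝ, (∀ i, x i ∈ S) ∧ α = ∑ i, x i ^ 2

/-- `α` is a sum of squares of elements of `S`. -/
def IsSumOfSquaresIn (S : Set ℝ) (α : ℝ) : Prop := ∃ n, SumOfNSquaresIn S n α

/-- `K` is a totally real biquadratic field. -/
def IsBiquadratic (K : IntermediateField ℚ ℝ) : Prop :=
  ∃ p q : ℕ, Squarefree p ∧ Squarefree q ∧ 1 < p ∧ 1 < q ∧ p ≠ q ∧ K = biqField p q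

namespace GoldenPyth

/-! ### The ring `ℤ[φ]` and its two real embeddings -/

/-- The ring `ℤ[φ]`, `φ² = φ + 1`, of integers of `ℚ(√5)`; the element `⟨a, b⟩` is `a + bφ`. -/
abbrev O := QuadraticAlgebra ℤ 1 1

/-- The golden ratio as an element of `ℤ[φ]`. -/
def φ : O := ⟨0, 1⟩

/-- The golden ratio as a real number. -/
noncomputable def gr : ℝ := Real.goldenRatio

lemma gr_pos : 0 < gr := Real.goldenRatio_pos

lemma gr_sq : gr ^ 2 = gr + 1 := Real.goldenRatio_sq

lemma gr_lo : 1.618 < gr := by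
  have h := gr_sq
  have h0 : 0 < gr := Real.goldenRatio_pos
  nlinarith

lemma gr_hi : gr < 1.6181 := by
  have h := gr_sq
  have h0 : 0 < gr := Real.goldenRatio_pos
  nlinarith

@[simp] lemma O_re_one : (1 : O).re = 1 := rfl
@[simp] lemma O_im_one : (1 : O).im = 0 := rfl
@[simp] lemma O_re_ofNat (n : ℕ) [n.AtLeastTwo] : (ofNat(n) : O).re = ofNat(n) := rfl
@[simp] lemma O_im_ofNat (n : ℕ) [n.AtLeastTwo] : (ofNat(n) : O).im = 0 := rfl
@[simp] lemma phi_re : φ.re = 0 := rfl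
@[simp] lemma phi_im : φ.im = 1 := rfl

lemma phi_sq : φ ^ 2 = φ + 1 := by
  ext <;> simp [φ, pow_two]

lemma O_eq (x : O) : x = (x.re : O) + (x.im : O) * φ := by
  ext <;> simp

/-- The embedding `ℤ[φ] → ℝ` sending `φ` to the golden ratio. -/
noncomputable def σ₁ : O →+* ℝ where
  toFun x := x.re + x.im * gr
  map_one' := by simp
  map_zero' := by simp
  map_add' x y := by simp; ring
  map_mul' x y := by
    have := gr_sq
    simp
    linear_combination (-(x.im : ℝ) * y.im) * this

/-- The embedding `ℤ[φ] → ℝ` sending `φ` to its conjugate `1 - φ`. -/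
noncomputable def σ₂ : O →+* ℝ where
  toFun x := x.re + x.im * (1 - gr)
  map_one' := by simp
  map_zero' := by simp
  map_add' x y := by simp; ring
  map_mul' x y := by
    have := gr_sq
    simp
    linear_combination (-(x.im : ℝ) * y.im) * this

lemma s1_def (x : O) : σ₁ x = x.re + x.im * gr := rfl
lemma s2_def (x : O) : σ₂ x = x.re + x.im * (1 - gr) := rfl

@[simp] lemma s1_phi : σ₁ φ = gr := by simp [s1_def]
@[simp] lemma s2_phi : σ₂ φ = 1 - gr := by simp [s2_def]

/-- The norm `ℤ[φ] → ℤ`. -/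
def nm (x : O) : ℤ := x.re ^ 2 + x.re * x.im - x.im ^ 2

lemma nm_cast (x : O) : (nm x : ℝ) = σ₁ x * σ₂ x := by
  have := gr_sq
  simp only [nm, s1_def, s2_def]
  push_cast
  linear_combination ((x.im : ℝ) ^ 2) * this

lemma nm_mul (x y : O) : nm (x * y) = nm x * nm y := by
  simp [nm]; ring

lemma nm_int (n : ℤ) : nm (n : O) = n ^ 2 := by simp [nm]

lemma s1_injective : Function.Injective σ₁ := by
  rw [injective_iff_map_eq_zero]
  intro x hx
  have hirr : Irrational gr := Real.goldenRatio_irrational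
  rw [s1_def] at hx
  have him : x.im = 0 := by
    by_contra h
    have := (hirr.intCast_mul h).intCast_add x.re
    rw [hx] at this
    exact this.ne_zero rfl
  have hre : x.re = 0 := by
    rw [him] at hx; simpa using hx
  ext <;> simp [him, hre]

lemma s2_injective : Function.Injective σ₂ := by
  rw [injective_iff_map_eq_zero]
  intro x hx
  have hirr : Irrational gr := Real.goldenRatio_irrational
  have hx' : (x.re + x.im : ℤ) + (((-x.im : ℤ) : ℝ) * gr) = 0 := by
    rw [s2_def] at hx; push_cast; linear_combination hx
  have him : x.im = 0 := by
    by_contra h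
    have := (hirr.intCast_mul (neg_ne_zero.mpr h)).intCast_add (x.re + x.im)
    rw [hx'] at this
    exact this.ne_zero rfl
  have hre : x.re = 0 := by
    rw [s2_def, him] at hx; simpa using hx
  ext <;> simp [him, hre]

instance : IsDomain O := s1_injective.isDomain σ₁

lemma s1_eq_zero {x : O} : σ₁ x = 0 ↔ x = 0 := map_eq_zero_iff σ₁ s1_injective
lemma s2_eq_zero {x : O} : σ₂ x = 0 ↔ x = 0 := map_eq_zero_iff σ₂ s2_injective

lemma nm_eq_zero {x : O} : nm x = 0 ↔ x = 0 := by
  constructor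
  · intro h
    have h2 := nm_cast x
    rw [h] at h2
    rw [Int.cast_zero] at h2
    rcases mul_eq_zero.mp h2.symm with h | h
    · exact s1_eq_zero.mp h
    · exact s2_eq_zero.mp h
  · rintro rfl; simp [nm]

/-- Totally positive elements of `ℤ[φ]`. -/
def TP (x : O) : Prop := 0 < σ₁ x ∧ 0 < σ₂ x

/-- Totally nonnegative elements of `ℤ[φ]`. -/
def TN (x : O) : Prop := 0 ≤ σ₁ x ∧ 0 ≤ σ₂ x

lemma TP.tn {x : O} (h : TP x) : TN x := ⟨h.1.le, h.2.le⟩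

lemma TP.ne_zero {x : O} (h : TP x) : x ≠ 0 := by
  rintro rfl; simpa using h.1

lemma TN.tp {x : O} (h : TN x) (h0 : x ≠ 0) : TP x :=
  ⟨lt_of_le_of_ne h.1 (fun e => h0 (s1_eq_zero.mp e.symm)),
   lt_of_le_of_ne h.2 (fun e => h0 (s2_eq_zero.mp e.symm))⟩

lemma TP.nm_pos {x : O} (h : TP x) : 0 < nm x := by
  have := nm_cast x
  have h3 := mul_pos h.1 h.2
  rw [← this] at h3
  exact_mod_cast h3

lemma TN.nm_nonneg {x : O} (h : TN x) : 0 ≤ nm x := by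
  have := nm_cast x
  have h3 := mul_nonneg h.1 h.2
  rw [← this] at h3
  exact_mod_cast h3

lemma TP.mul {x y : O} (h : TP x) (h' : TP y) : TP (x * y) := by
  constructor
  · rw [map_mul]; exact mul_pos h.1 h'.1
  · rw [map_mul]; exact mul_pos h.2 h'.2

lemma TP.add {x y : O} (h : TP x) (h' : TP y) : TP (x + y) := by
  constructor
  · rw [map_add]; exact add_pos h.1 h'.1
  · rw [map_add]; exact add_pos h.2 h'.2

lemma TP.of_mul {x y : O} (h : TP x) (h' : TP (x * y)) : TP y := by
  have h1 := h'.1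
  have h2 := h'.2
  rw [map_mul] at h1 h2
  exact ⟨(mul_pos_iff_of_pos_left h.1).mp h1, (mul_pos_iff_of_pos_left h.2).mp h2⟩

lemma TP.of_mul_tn {x y : O} (h : TP x) (h' : TN (x * y)) : TN y := by
  have h1 := h'.1
  have h2 := h'.2
  rw [map_mul] at h1 h2
  exact ⟨(mul_nonneg_iff_of_pos_left h.1).mp h1, (mul_nonneg_iff_of_pos_left h.2).mp h2⟩

lemma tp_sq {x : O} (h : x ≠ 0) : TP (x ^ 2) := by
  constructor
  · rw [map_pow]; exact pow_pos_of_ne (mt s1_eq_zero.mp h)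
  · rw [map_pow]; exact pow_pos_of_ne (mt s2_eq_zero.mp h)
where
  pow_pos_of_ne {r : ℝ} (h : r ≠ 0) : 0 < r ^ 2 := by positivity

lemma tn_sq (x : O) : TN (x ^ 2) := by
  constructor <;> rw [map_pow] <;> positivity

lemma TN.add {x y : O} (h : TN x) (h' : TN y) : TN (x + y) := by
  constructor
  · rw [map_add]; exact add_nonneg h.1 h'.1
  · rw [map_add]; exact add_nonneg h.2 h'.2

lemma tp_int {n : ℤ} (h : 0 < n) : TP (n : O) := by
  constructor
  · rw [map_intCast]; exact_mod_cast h
  · rw [map_intCast]; exact_mod_cast h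

lemma tp_nat {n : ℕ} (h : 0 < n) : TP (n : O) := by
  constructor
  · rw [map_natCast]; exact_mod_cast h
  · rw [map_natCast]; exact_mod_cast h

lemma tp_one : TP (1 : O) := by constructor <;> simp

/-- `φ` is a unit; its inverse is `φ - 1`. -/
lemma phi_mul_inv : φ * (φ - 1) = 1 := by linear_combination phi_sq

lemma two_dvd_iff {x : O} : (2 : O) ∣ x ↔ 2 ∣ x.re ∧ 2 ∣ x.im := by
  have := QuadraticAlgebra.algebraMap_dvd_iff (R := ℤ) (a := 1) (b := 1) (r := 2) (z := x)
  rw [← this]; rfl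

lemma int_dvd_iff {n : ℤ} {x : O} : (n : O) ∣ x ↔ n ∣ x.re ∧ n ∣ x.im := by
  have := QuadraticAlgebra.algebraMap_dvd_iff (R := ℤ) (a := 1) (b := 1) (r := n) (z := x)
  rw [← this]; rfl

/-- The element `√5 = 2φ - 1`. -/
def r5 : O := ⟨-1, 2⟩

/-- The totally positive generator `2 + φ = √5 φ` of the prime above `5`. -/
def s5 : O := ⟨2, 1⟩

lemma r5_eq : r5 = 2 * φ - 1 := by ext <;> simp [r5]
lemma s5_eq : s5 = 2 + φ := by ext <;> simp [s5]
lemma r5_sq : r5 ^ 2 = 5 := by ext <;> simp [r5, pow_two]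
lemma s5_eq' : s5 = r5 * φ := by ext <;> simp [s5, r5]
lemma tp_s5 : TP s5 := by
  have := gr_lo
  have := gr_hi
  constructor
  · simp [s1_def, s5]; linarith
  · simp [s2_def, s5]; linarith


/-! ### Scaling by units and the covering constant of `ℤ[φ]` -/

/-- Every positive real can be moved into `[φ⁻¹, φ]` by the square of a unit of `ℤ[φ]`. -/
lemma exists_unit_scale (l : ℝ) (hl : 0 < l) :
    ∃ u v : O, u * v = 1 ∧ gr⁻¹ ≤ l * σ₁ u ^ 2 ∧ l * σ₁ u ^ 2 ≤ gr := by
  have h0 := gr_pos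
  have hlo := gr_lo
  obtain ⟨n, h1, h2⟩ := exists_mem_Ico_zpow (x := l * gr) (y := gr ^ 2) (by positivity)
    (by nlinarith)
  let U : Oˣ := ⟨φ, φ - 1, phi_mul_inv, by rw [mul_comm]; exact phi_mul_inv⟩
  have hU : ∀ k : ℤ, σ₁ ((U ^ k : Oˣ) : O) = gr ^ k := by
    intro k
    have e : ((Units.map (σ₁ : O →* ℝ) (U ^ k) : ℝˣ) : ℝ) = gr ^ k := by
      rw [map_zpow, Units.val_zpow_eq_zpow_val]
      simp [U]
    rw [← e]; rfl
  refine ⟨((U ^ (-n) : Oˣ) : O), ((U ^ n : Oˣ) : O), ?_, ?_, ?_⟩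
  · rw [← Units.val_mul, ← zpow_add]; simp
  · rw [hU]
    have e : (gr ^ (-n)) ^ 2 = ((gr ^ 2) ^ n)⁻¹ := by
      rw [← zpow_natCast, ← zpow_natCast, ← zpow_mul, ← zpow_mul, ← zpow_neg]
      congr 1; push_cast; ring
    rw [e, inv_le_iff_one_le_mul₀ h0]
    have hp : 0 < (gr ^ 2) ^ n := by positivity
    rw [show l * ((gr ^ 2) ^ n)⁻¹ * gr = (l * gr) / (gr ^ 2) ^ n by field_simp]
    rwa [one_le_div hp]
  · rw [hU]
    have e : (gr ^ (-n)) ^ 2 = ((gr ^ 2) ^ n)⁻¹ := by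
      rw [← zpow_natCast, ← zpow_natCast, ← zpow_mul, ← zpow_mul, ← zpow_neg]
      congr 1; push_cast; ring
    rw [e]
    have hp : 0 < (gr ^ 2) ^ n := by positivity
    rw [zpow_add_one₀ (by positivity)] at h2
    rw [← div_eq_mul_inv, div_le_iff₀ hp]
    nlinarith

lemma unit_s_sq {u v : O} (h : u * v = 1) : (σ₁ u * σ₂ u) ^ 2 = 1 := by
  have h1 : nm u * nm v = 1 := by rw [← nm_mul, h]; simp [nm]
  have h2 : nm u ^ 2 = 1 := by
    rcases Int.eq_one_or_neg_one_of_mul_eq_one h1 with h | h <;> rw [h] <;> norm_num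
  rw [← nm_cast]; exact_mod_cast h2

lemma gr_inv : gr⁻¹ = gr - 1 := by
  have h0 := gr_pos
  have hg := gr_sq
  field_simp
  linear_combination -hg

/-- Rounding in the lattice `ℤ[φ] ⊂ ℝ²` for a diagonal form of weights `s, s⁻¹` with
`φ⁻¹ ≤ s ≤ φ`; `covering` reduces arbitrary weights to these by scaling with a unit. -/
lemma covering_core (s s' y₁ y₂ : ℝ) (hss : s * s' = 1) (hs1 : gr - 1 ≤ s) (hs2 : s ≤ gr) :
    ∃ p q : ℤ, s * (y₁ - (p + q * gr)) ^ 2 + s' * (y₂ - (p + q * (1 - gr))) ^ 2 ≤ 9 / 8 := by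
  have hg := gr_sq
  have hlo := gr_lo
  have hhi := gr_hi
  have hspos : 0 < s := by linarith
  have hs'pos : 0 < s' := by
    by_contra h; push Not at h; nlinarith
  obtain ⟨A, hA⟩ : ∃ A, A = s + s' := ⟨_, rfl⟩
  have hA2 : 2 ≤ A := by nlinarith [sq_nonneg (s - s')]
  have hA5 : A ≤ 5 / 2 := by
    have : s * A = s ^ 2 + 1 := by rw [hA]; linear_combination hss
    nlinarith [mul_nonneg (sub_nonneg.mpr hs1) (sub_nonneg.mpr hs2)]
  have hApos : 0 < A := by linarith
  have hd : 2 * gr - 1 ≠ 0 := by linarith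
  obtain ⟨Q, hQ⟩ : ∃ Q, Q * (2 * gr - 1) = y₁ - y₂ :=
    ⟨(y₁ - y₂) / (2 * gr - 1), by field_simp⟩
  obtain ⟨P, hP⟩ : ∃ P, P = y₁ - Q * gr := ⟨_, rfl⟩
  obtain ⟨B, hB⟩ : ∃ B, B = s * gr + s' * (1 - gr) := ⟨_, rfl⟩
  refine ⟨round (P + B * (Q - round Q) / A), round Q, ?_⟩
  have hq2 : (Q - round Q) ^ 2 ≤ 1 / 4 := by
    have := abs_sub_round Q
    rw [← sq_abs]; nlinarith [abs_nonneg (Q - round Q)]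
  generalize round Q = q at *
  have hp2 := abs_sub_round (P + B * (Q - q) / A)
  generalize round (P + B * (Q - q) / A) = p at *
  have hp3 : (P + B * (Q - q) / A - p) ^ 2 ≤ 1 / 4 := by
    rw [← sq_abs]; nlinarith [abs_nonneg (P + B * (Q - q) / A - p)]
  have e1 : y₁ - (p + q * gr) = (P - p) + (Q - q) * gr := by rw [hP]; ring
  have e2 : y₂ - (p + q * (1 - gr)) = (P - p) + (Q - q) * (1 - gr) := by
    rw [hP]; linear_combination hQ
  rw [e1, e2]
  rw [show P + B * (Q - q) / A - p = (P - p) + B * (Q - q) / A by ring] at hp3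
  generalize (Q - q : ℝ) = y at *
  generalize (P - p : ℝ) = x at *
  have key : s * (x + y * gr) ^ 2 + s' * (x + y * (1 - gr)) ^ 2
      = A * (x + B * y / A) ^ 2 + 5 / A * y ^ 2 := by
    field_simp
    rw [hA, hB]
    linear_combination (4 * s * s' * y ^ 2) * hg + 5 * y ^ 2 * hss
  rw [key]
  have h5A : 5 / A ≤ 9 / 2 - A := by
    rw [div_le_iff₀ hApos]; nlinarith
  have h5A0 : 0 < 5 / A := by positivity
  calc A * (x + B * y / A) ^ 2 + 5 / A * y ^ 2 ≤ A * (1 / 4) + 5 / A * (1 / 4) := by gcongr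
    _ ≤ 9 / 8 := by linarith

/-- A weighted form of the covering property of the lattice `ℤ[φ] ⊂ ℝ²`. -/
lemma covering (l₁ l₂ : ℝ) (h1 : 0 < l₁) (h12 : l₁ * l₂ = 1) (x₁ x₂ : ℝ) :
    ∃ t : O, l₁ * (x₁ - σ₁ t) ^ 2 + l₂ * (x₂ - σ₂ t) ^ 2 ≤ 9 / 8 := by
  obtain ⟨u, v, huv, hs1, hs2⟩ := exists_unit_scale l₁ h1
  have hu := unit_s_sq huv
  rw [gr_inv] at hs1
  obtain ⟨p, q, hpq⟩ := covering_core (l₁ * σ₁ u ^ 2) (l₂ * σ₂ u ^ 2) (σ₁ v * x₁) (σ₂ v * x₂)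
    (by linear_combination (l₁ * l₂) * hu + h12) hs1 hs2
  have hv1 : σ₁ u * σ₁ v = 1 := by rw [← map_mul, huv, map_one]
  have hv2 : σ₂ u * σ₂ v = 1 := by rw [← map_mul, huv, map_one]
  refine ⟨u * ⟨p, q⟩, le_trans (le_of_eq ?_) hpq⟩
  have e1 : x₁ - σ₁ (u * ⟨p, q⟩) = σ₁ u * (σ₁ v * x₁ - (p + q * gr)) := by
    rw [map_mul, s1_def ⟨p, q⟩]; linear_combination (-x₁) * hv1
  have e2 : x₂ - σ₂ (u * ⟨p, q⟩) = σ₂ u * (σ₂ v * x₂ - (p + q * (1 - gr))) := by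
    rw [map_mul, s2_def ⟨p, q⟩]; linear_combination (-x₂) * hv2
  rw [e1, e2]
  ring

/-- The inequality behind the descent: translating `b` by a multiple of `a` brings the norm of
`b² + γ` below `nm a ^ 2`, provided `nm γ ≤ nm a` and `6 ≤ nm a`. The two components of each
element are its images in the two real embeddings. -/
lemma real_reduction (a₁ a₂ g₁ g₂ b₁ b₂ : ℝ) (ha1 : 0 < a₁) (ha2 : 0 < a₂) (hg1 : 0 < g₁)
    (hg2 : 0 < g₂) (hN : 6 ≤ a₁ * a₂) (hga : g₁ * g₂ ≤ a₁ * a₂) :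
    ∃ t : O, ((b₁ - σ₁ t * a₁) ^ 2 + g₁) * ((b₂ - σ₂ t * a₂) ^ 2 + g₂) < (a₁ * a₂) ^ 2 := by
  set k := √(g₁ * g₂) / (a₁ * a₂) with hk
  have hkpos : 0 < k := by positivity
  have hk2 : k ^ 2 * (a₁ * a₂) ^ 2 = g₁ * g₂ := by
    rw [hk, div_pow, Real.sq_sqrt (by positivity)]; field_simp
  have hk7 : k < 7 / 16 := by
    by_contra h
    push Not at h
    have : (49 / 256 : ℝ) ≤ k ^ 2 := by nlinarith
    have : (49 / 256 : ℝ) * (a₁ * a₂) ^ 2 ≤ a₁ * a₂ := by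
      calc _ ≤ k ^ 2 * (a₁ * a₂) ^ 2 := by gcongr
        _ ≤ _ := by rw [hk2]; exact hga
    nlinarith
  set l₁ := k * a₁ ^ 2 / g₁ with hl1
  set l₂ := k * a₂ ^ 2 / g₂ with hl2
  have hll : l₁ * l₂ = 1 := by
    rw [hl1, hl2]; field_simp; linear_combination hk2
  obtain ⟨t, ht⟩ := covering l₁ l₂ (by positivity) hll (b₁ / a₁) (b₂ / a₂)
  refine ⟨t, ?_⟩
  have hl2pos : 0 < l₂ := by positivity
  have hl1pos : 0 < l₁ := by positivity
  set X := l₁ * ((b₁ / a₁ - σ₁ t) ^ 2) + k with hX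
  set Y := l₂ * ((b₂ / a₂ - σ₂ t) ^ 2) + k with hY
  have hXY : X + Y < 2 := by linarith
  have hX0 : 0 < X := by positivity
  have hY0 : 0 < Y := by positivity
  have hXYm : X * Y < 1 := by nlinarith [sq_nonneg (X - Y)]
  have e : ((b₁ - σ₁ t * a₁) ^ 2 + g₁) * ((b₂ - σ₂ t * a₂) ^ 2 + g₂)
      = (l₁ * l₂)⁻¹ * (X * Y) * (a₁ * a₂) ^ 2 := by
    rw [hX, hY, hl1, hl2]
    field_simp
  rw [e, hll]
  have : 0 < (a₁ * a₂) ^ 2 := by positivity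
  nlinarith

/-- Totally positive elements of norm at most `5`, up to squares of units. -/
lemma small_norm {a : O} (ha : TP a) (hN : nm a ≤ 5) :
    ∃ u v a₀ : O, u * v = 1 ∧ a = u ^ 2 * a₀ ∧ (a₀ = 1 ∨ a₀ = 2 ∨ a₀ = s5) := by
  have hg := gr_sq
  have hlo := gr_lo
  have hhi := gr_hi
  have h0 := gr_pos
  have hNpos : (0 : ℝ) < nm a := by exact_mod_cast ha.nm_pos
  set r := √(nm a : ℝ) with hr
  have hr2 : r ^ 2 = nm a := Real.sq_sqrt hNpos.le
  have hrpos : 0 < r := Real.sqrt_pos.mpr hNpos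
  obtain ⟨u, v, huv, h1, h2⟩ := exists_unit_scale (σ₁ a / r) (div_pos ha.1 hrpos)
  have hv : v * u = 1 := by rw [mul_comm]; exact huv
  rw [gr_inv] at h1
  obtain ⟨x, hx⟩ : ∃ x, x = σ₁ a / r * σ₁ u ^ 2 := ⟨_, rfl⟩
  rw [← hx] at h1 h2
  obtain ⟨c, hc⟩ : ∃ c, c = a * u ^ 2 := ⟨_, rfl⟩
  have hac : a = v ^ 2 * c := by
    rw [hc]; linear_combination (-a * (v * u + 1)) * hv
  have hu0 : u ≠ 0 := by rintro rfl; simp at huv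
  have hcTP : TP c := by rw [hc]; exact ha.mul (tp_sq hu0)
  have hnc : nm c = nm a := by
    rw [hc, nm_mul, pow_two, nm_mul]
    have := unit_s_sq huv
    rw [← nm_cast] at this
    have h3 : nm u ^ 2 = 1 := by exact_mod_cast this
    rw [← pow_two, h3, mul_one]
  have hs1 : σ₁ c = r * x := by
    rw [hc, map_mul, map_pow, hx]; field_simp
  have hx0 : 0 < x := by linarith
  have hs2 : σ₂ c * x = r := by
    have := nm_cast c
    rw [hnc, ← hr2, hs1] at this
    have h3 : r * (σ₂ c * x) = r * r := by linear_combination -this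
    exact mul_left_cancel₀ hrpos.ne' h3
  have him : (c.im : ℝ) * (2 * gr - 1) * x = r * (x ^ 2 - 1) := by
    have e1 := s1_def c
    have e2 := s2_def c
    linear_combination x * (hs1 - e1) - hs2 + x * e2
  have hb1 : x ^ 2 - 1 ≤ x := by nlinarith
  have hb2 : -x ≤ x ^ 2 - 1 := by nlinarith
  have hb : (x ^ 2 - 1) ^ 2 ≤ x ^ 2 := by nlinarith
  have him2 : 5 * (c.im : ℝ) ^ 2 ≤ nm a := by
    have h5 : (2 * gr - 1) ^ 2 = 5 := by linear_combination 4 * hg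
    have : 5 * (c.im : ℝ) ^ 2 * x ^ 2 ≤ nm a * x ^ 2 := by
      calc _ = ((c.im : ℝ) * (2 * gr - 1) * x) ^ 2 := by rw [mul_pow, mul_pow, h5]; ring
        _ = r ^ 2 * (x ^ 2 - 1) ^ 2 := by rw [him]; ring
        _ ≤ r ^ 2 * x ^ 2 := by gcongr
        _ = _ := by rw [hr2]
    exact le_of_mul_le_mul_right this (by positivity)
  have him3 : 5 * c.im ^ 2 ≤ nm a := by exact_mod_cast him2
  have hre : nm c = c.re ^ 2 + c.re * c.im - c.im ^ 2 := rfl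
  have htr : 0 < 2 * c.re + c.im := by
    have := add_pos hcTP.1 hcTP.2
    rw [s1_def, s2_def] at this
    have h3 : (0 : ℝ) < 2 * c.re + c.im := by linarith
    exact_mod_cast h3
  have hi1 : c.im ≤ 1 := by nlinarith
  have hi2 : -1 ≤ c.im := by nlinarith
  obtain hi | hi | hi : c.im = -1 ∨ c.im = 0 ∨ c.im = 1 := by omega
  · rw [hi] at hre him3 htr
    have : c.re = 3 := by nlinarith
    refine ⟨v * (φ - 1), u * φ, s5, ?_, ?_, Or.inr (Or.inr rfl)⟩
    · linear_combination (v * u) * phi_mul_inv + hv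
    · have : c = (φ - 1) ^ 2 * s5 := by ext <;> simp [hi, this, s5, pow_two]
      rw [hac, this]; ring
  · rw [hi] at hre him3 htr
    have h3 : c.re = 1 ∨ c.re = 2 := by
      have : c.re ≤ 2 := by nlinarith
      omega
    refine ⟨v, u, c, hv, hac, ?_⟩
    rcases h3 with h3 | h3
    · left; ext <;> simp [h3, hi]
    · right; left; ext <;> simp [h3, hi]
  · rw [hi] at hre him3 htr
    have : c.re = 2 := by nlinarith
    refine ⟨v, u, c, hv, hac, Or.inr (Or.inr ?_)⟩
    ext <;> simp [hi, this, s5]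

/-! ### Reduction of ternary forms of determinant one -/

/-- `a` and `γ` are the leading minors of sizes one and two of a symmetric `3 × 3` matrix over
`ℤ[φ]` of determinant one that is totally positive definite. -/
def Unimod (a γ : O) : Prop :=
  TP a ∧ TP γ ∧ ∃ b c d e k : O, a * d - b ^ 2 = γ ∧
    a * (d * k - e ^ 2) - b * (b * k - e * c) + c * (b * e - d * c) = 1

/-- `a` and `γ` are, up to squares, the norms of two orthogonal vectors of `ℤ[φ]³`. -/
def OrthPair (a γ : O) : Prop :=
  ∃ u₁ u₂ u₃ v₁ v₂ v₃ w w' : O, w ≠ 0 ∧ w' ≠ 0 ∧ u₁ ^ 2 + u₂ ^ 2 + u₃ ^ 2 = a * w ^ 2 ∧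
    v₁ ^ 2 + v₂ ^ 2 + v₃ ^ 2 = γ * w' ^ 2 ∧ u₁ * v₁ + u₂ * v₂ + u₃ * v₃ = 0

/-- Passing to the adjoint matrix, with the basis reversed, exchanges the two minors. -/
lemma Unimod.symm {a γ : O} (h : Unimod a γ) : Unimod γ a := by
  obtain ⟨ha, hγ, b, c, d, e, k, h1, h2⟩ := h
  refine ⟨hγ, ha, b * c - a * e, b * e - c * d, a * k - c ^ 2, c * e - b * k, d * k - e ^ 2, ?_, ?_⟩
  · subst h1; linear_combination a * h2
  · subst h1
    linear_combination (a * (d * k - e ^ 2) - b * (b * k - e * c) + c * (b * e - d * c) + 1) * h2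

lemma OrthPair.symm {a γ : O} (h : OrthPair a γ) : OrthPair γ a := by
  obtain ⟨u₁, u₂, u₃, v₁, v₂, v₃, w, w', h1, h2, h3, h4, h5⟩ := h
  exact ⟨v₁, v₂, v₃, u₁, u₂, u₃, w', w, h2, h1, h4, h3, by linear_combination h5⟩

/-- If `u ⊥ v` have norms `α` and `γ`, where `aα = β² + γ`, then `βu + u × v` is orthogonal to `v`
and has norm `α (β² + γ) = aα²`; dividing it by `α` gives norm `a`. In the statement `α` is the
primed element. -/
lemma OrthPair.step {a a' β γ : O} (hγ : a * a' = β ^ 2 + γ) (ha' : a' ≠ 0)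
    (h : OrthPair a' γ) : OrthPair a γ := by
  obtain ⟨u₁, u₂, u₃, v₁, v₂, v₃, w, w', h1, h2, h3, h4, h5⟩ := h
  refine ⟨β * w' * u₁ + (u₂ * v₃ - u₃ * v₂), β * w' * u₂ + (u₃ * v₁ - u₁ * v₃),
    β * w' * u₃ + (u₁ * v₂ - u₂ * v₁), v₁, v₂, v₃, a' * w * w', w',
    mul_ne_zero (mul_ne_zero ha' h1) h2, h2, ?_, h4, by linear_combination (β * w') * h5⟩
  linear_combination (β ^ 2 * w' ^ 2) * h3 + (v₁ ^ 2 + v₂ ^ 2 + v₃ ^ 2) * h3 +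
    (a' * w ^ 2) * h4 - (u₁ * v₁ + u₂ * v₂ + u₃ * v₃) * h5 - (a' * w ^ 2 * w' ^ 2) * hγ

lemma OrthPair.scale {a γ u v : O} (h : OrthPair a γ) :
    OrthPair (u ^ 2 * a) (v ^ 2 * γ) := by
  obtain ⟨u₁, u₂, u₃, v₁, v₂, v₃, w, w', h1, h2, h3, h4, h5⟩ := h
  refine ⟨u * u₁, u * u₂, u * u₃, v * v₁, v * v₂, v * v₃, w, w', h1, h2, ?_, ?_, ?_⟩
  · linear_combination u ^ 2 * h3
  · linear_combination v ^ 2 * h4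
  · linear_combination u * v * h5

/-- Reduction modulo `√5`. -/
def red5 : O →+* ZMod 5 where
  toFun x := x.re + 3 * x.im
  map_one' := by simp
  map_zero' := by simp
  map_add' x y := by simp; ring
  map_mul' x y := by
    simp
    have : (5 : ZMod 5) = 0 := rfl
    linear_combination (-(x.im : ZMod 5) * y.im) * this

/-- Minors `2` and `2 + φ` do not occur together: modulo `√5` the determinant condition would make
`-2` times a unit square a square. -/
lemma not_unimod_two_s5 {u u' v : O} (hu : u * u' = 1) : ¬ Unimod (u ^ 2 * 2) (v ^ 2 * s5) := by
  rintro ⟨-, -, b, c, d, e, k, h1, h2⟩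
  have h3 : (v ^ 2 * s5) * (u ^ 2 * 2 * k - c ^ 2) - (u ^ 2 * 2 * e - b * c) ^ 2 = u ^ 2 * 2 := by
    rw [← h1]; linear_combination u ^ 2 * 2 * h2
  have h4 := congrArg red5 h3
  have h5 := congrArg red5 hu
  have hs : red5 s5 = 0 := rfl
  simp only [map_sub, map_mul, map_pow, hs, map_one, mul_zero, zero_mul, zero_sub, map_ofNat] at h4 h5
  revert h4 h5
  generalize red5 u ^ 2 * 2 * red5 e - red5 b * red5 c = x
  generalize red5 u = y
  generalize red5 u' = z
  revert x y z
  decide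

/-- The base of the descent: both minors are `1`, `2` or `2 + φ` up to squares of units. -/
lemma unimod_base {a γ : O} (h : Unimod a γ) (ha5 : nm a ≤ 5) (hγ5 : nm γ ≤ 5) : OrthPair a γ := by
  obtain ⟨u, u', a₀, hu, rfl, ha₀⟩ := small_norm h.1 ha5
  obtain ⟨v, v', g₀, hv, rfl, hg₀⟩ := small_norm h.2.1 hγ5
  have hs : s5 = 2 + φ := s5_eq
  have hp := phi_sq
  have p12 : OrthPair 1 2 := ⟨1, 0, 0, 0, 1, 1, 1, 1, one_ne_zero, one_ne_zero, by ring, by ring, by ring⟩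
  have p1s : OrthPair 1 s5 := ⟨1, 0, 0, 0, 1, φ, 1, 1, one_ne_zero, one_ne_zero, by ring,
    by rw [hs]; linear_combination hp, by ring⟩
  rcases ha₀ with rfl | rfl | rfl <;> rcases hg₀ with rfl | rfl | rfl
  · exact OrthPair.scale ⟨1, 0, 0, 0, 1, 0, 1, 1, one_ne_zero, one_ne_zero, by ring, by ring, by ring⟩
  · exact p12.scale
  · exact p1s.scale
  · exact p12.symm.scale
  · exact OrthPair.scale ⟨0, 1, 1, 0, 1, -1, 1, 1, one_ne_zero, one_ne_zero, by ring, by ring, by ring⟩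
  · exact absurd h (not_unimod_two_s5 hu)
  · exact p1s.symm.scale
  · exact absurd h.symm (not_unimod_two_s5 hv)
  · exact OrthPair.scale ⟨0, 1, φ, 0, φ, -1, 1, 1, one_ne_zero, one_ne_zero,
      by rw [hs]; linear_combination hp, by rw [hs]; linear_combination hp, by ring⟩

/-- Reduction of positive definite ternary forms of determinant one, by descent on
`nm a + nm γ`: the minor of larger norm is lowered by `real_reduction`, and `OrthPair.step` carries
the orthogonal pair back. -/
lemma Unimod.orthPair {a γ : O} (h : Unimod a γ) : OrthPair a γ := by
  suffices H : ∀ n : ℕ, ∀ a γ : O, nm a + nm γ ≤ n → Unimod a γ → OrthPair a γ from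
    H (nm a + nm γ).toNat a γ (Int.self_le_toNat _) h
  clear h
  intro n
  induction n with
  | zero =>
    intro a γ hn h
    have := h.1.nm_pos
    have := h.2.1.nm_pos
    push_cast at hn
    omega
  | succ n ih =>
    intro a γ hn h
    wlog hle : nm γ ≤ nm a generalizing a γ
    · exact (this γ a (by omega) h.symm (by omega)).symm
    by_cases ha5 : nm a ≤ 5
    · exact unimod_base h ha5 (by omega)
    obtain ⟨ha, hγ, b, c, d, e, k, h1, h2⟩ := h
    obtain ⟨t, ht⟩ := real_reduction (σ₁ a) (σ₂ a) (σ₁ γ) (σ₂ γ) (σ₁ b) (σ₂ b) ha.1 ha.2 hγ.1 hγ.2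
      (by rw [← nm_cast]; exact_mod_cast (by omega : 6 ≤ nm a))
      (by rw [← nm_cast, ← nm_cast]; exact_mod_cast hle)
    set a' := d - 2 * t * b + t ^ 2 * a with ha'
    have hk : a * a' = (b - t * a) ^ 2 + γ := by rw [ha', ← h1]; ring
    have ha'TP : TP a' := by
      apply ha.of_mul
      rw [hk]
      constructor
      · rw [map_add, map_pow]; have := hγ.1; positivity
      · rw [map_add, map_pow]; have := hγ.2; positivity
    have hlt : nm a' < nm a := by
      have e1 : (nm (a * a') : ℝ) < (nm a) ^ 2 := by
        rw [nm_cast, nm_cast, hk]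
        simpa [map_add, map_pow, map_sub, map_mul] using ht
      have e2 : nm (a * a') < nm a ^ 2 := by exact_mod_cast e1
      rw [nm_mul] at e2
      have := ha.nm_pos
      nlinarith
    refine OrthPair.step hk ha'TP.ne_zero (ih a' γ (by push_cast at hn; omega) ?_)
    refine ⟨ha'TP, hγ, b - t * a, e - t * c, a, c, k, by linear_combination hk, ?_⟩
    rw [ha']; linear_combination h2

open scoped NumberTheorySymbols

/-! ### Auxiliary primes -/

/-- Dirichlet's theorem combined with the Chinese remainder theorem for three moduli. -/
lemma exists_prime_three {m₁ m₂ m₃ a₁ a₂ a₃ : ℕ} (B : ℕ) (h0₁ : m₁ ≠ 0) (h0₂ : m₂ ≠ 0)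
    (h0₃ : m₃ ≠ 0) (h12 : m₁.Coprime m₂) (h13 : m₁.Coprime m₃) (h23 : m₂.Coprime m₃)
    (h1 : a₁.Coprime m₁) (h2 : a₂.Coprime m₂) (h3 : a₃.Coprime m₃) :
    ∃ p > B, p.Prime ∧ p ≡ a₁ [MOD m₁] ∧ p ≡ a₂ [MOD m₂] ∧ p ≡ a₃ [MOD m₃] := by
  obtain ⟨k, hk1, hk2⟩ := Nat.chineseRemainder h12 a₁ a₂
  obtain ⟨l, hl1, hl2⟩ := Nat.chineseRemainder (Nat.Coprime.mul_left h13 h23) k a₃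
  have hl11 : l ≡ a₁ [MOD m₁] := (hl1.of_mul_right _).trans hk1
  have hl12 : l ≡ a₂ [MOD m₂] := (hl1.of_mul_left _).trans hk2
  have c : ∀ {m a : ℕ}, a.Coprime m → l ≡ a [MOD m] → l.Coprime m := by
    intro m a h h'
    have := h'.gcd_eq
    unfold Nat.Coprime at *
    rw [Nat.gcd_comm, ← h, Nat.gcd_comm a]
    rw [Nat.gcd_comm, this, Nat.gcd_comm]
  obtain ⟨p, hp1, hp2, hp3⟩ := Nat.forall_exists_prime_gt_and_modEq B
    (q := m₁ * m₂ * m₃) (a := l) (by positivity)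
    (Nat.Coprime.mul_right (Nat.Coprime.mul_right (c h1 hl11) (c h2 hl12)) (c h3 hl2))
  refine ⟨p, hp1, hp2, ?_, ?_, ?_⟩
  · exact ((hp3.of_mul_right _).of_mul_right _).trans hl11
  · exact ((hp3.of_mul_right _).of_mul_left _).trans hl12
  · exact (hp3.of_mul_left _).trans hl2

/-- If `b ≡ -1` modulo `4r` then `(r / b) = 1`. -/
lemma jacobi_of_neg_one_mod {r b : ℕ} (hr : 0 < r) (h : 4 * r ∣ b + 1) : J(r | b) = 1 := by
  have hb : Odd b := by
    obtain ⟨c, hc⟩ := h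
    have : b + 1 = 4 * (r * c) := by rw [hc]; ring
    rw [Nat.odd_iff]; omega
  have hmod : b % (4 * r) = 4 * r - 1 := by
    obtain ⟨c, hc⟩ := h
    obtain ⟨d, rfl⟩ : ∃ d, c = d + 1 := ⟨c - 1, by
      rcases c with _ | c
      · simp at hc
      · simp⟩
    have : b = (4 * r - 1) + 4 * r * d := by
      have : b + 1 = 4 * r * d + 4 * r := by rw [hc]; ring
      omega
    rw [this, Nat.add_mul_mod_self_left]
    exact Nat.mod_eq_of_lt (by omega)
  rw [jacobiSym.mod_right' r hb, hmod]
  have hodd : Odd (4 * r - 1) := by rw [Nat.odd_iff]; omega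
  have h4 : J(4 | 4 * r - 1) = 1 := jacobiSym.at_four hodd
  have hm : J(4 * (r : ℤ) | 4 * r - 1) = 1 := by
    rw [← jacobiSym.one_left (4 * r - 1)]
    apply jacobiSym.mod_left'
    have : (4 * (r : ℤ)) = 1 + ((4 * r - 1 : ℕ) : ℤ) := by
      rw [Nat.cast_sub (by omega)]; push_cast; ring
    rw [this, Int.add_emod_right]
  rw [jacobiSym.mul_left, h4, one_mul] at hm
  exact hm

lemma jacobi_five {q : ℕ} (hq : Odd q) (h : q % 5 = 2) : J(5 | q) = -1 := by
  have := jacobiSym.quadratic_reciprocity_one_mod_four (a := 5) (b := q) (by norm_num) hq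
  push_cast at this
  rw [this, jacobiSym.mod_left, show ((q : ℤ) % ((5 : ℕ) : ℤ)) = 2 by omega]
  rw [jacobiSym.at_two (by decide)]
  decide

/-- A nonsquare `n` prime to `5` is a quadratic nonresidue modulo some odd prime `q ≡ 2` mod `5`
(such a `q` is inert in `ℤ[φ]`). -/
lemma exists_prime_jacobi_neg {n : ℕ} (hn : 0 < n) (hns : ¬ IsSquare n) (h5 : ¬ 5 ∣ n) :
    ∃ q, q.Prime ∧ q % 5 = 2 ∧ Odd q ∧ J(n | q) = -1 := by
  obtain ⟨s, a, hsa, hsf⟩ := Nat.sq_mul_squarefree n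
  have hs1 : s ≠ 1 := by
    rintro rfl; exact hns ⟨a, by rw [← hsa]; ring⟩
  have hs0 : s ≠ 0 := hsf.ne_zero
  have ha0 : a ≠ 0 := by rintro rfl; simp at hsa; omega
  obtain ⟨l, hl, n', hn'⟩ := Nat.exists_prime_and_dvd hs1
  have hcop : l.Coprime n' := by
    rw [hn'] at hsf; exact Nat.coprime_of_squarefree_mul hsf
  have hn'0 : n' ≠ 0 := by rintro rfl; simp at hn'; exact hs0 hn'
  have h5s : ¬ 5 ∣ s := fun h => h5 (hsa ▸ h.mul_left _)
  have h5l : Nat.Coprime l 5 := by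
    rw [Nat.coprime_comm, Nat.Prime.coprime_iff_not_dvd (by norm_num)]
    intro h; exact h5s (hn' ▸ h.mul_right _)
  have h5n : Nat.Coprime n' 5 := by
    rw [Nat.coprime_comm, Nat.Prime.coprime_iff_not_dvd (by norm_num)]
    intro h; exact h5s (hn' ▸ h.mul_left _)
  suffices H : ∃ q > a, q.Prime ∧ q % 5 = 2 ∧ Odd q ∧ J(l | q) = -1 ∧ J(n' | q) = 1 by
    obtain ⟨q, hqa, hq, hq5, hqo, hj1, hj2⟩ := H
    refine ⟨q, hq, hq5, hqo, ?_⟩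
    have hg : (a : ℤ).gcd q = 1 := by
      rw [Int.gcd_natCast_natCast, ← Nat.coprime_iff_gcd_eq_one, Nat.coprime_comm,
        hq.coprime_iff_not_dvd]
      exact fun h => absurd (Nat.le_of_dvd (Nat.pos_of_ne_zero ha0) h) (by omega)
    rw [← hsa, hn']
    push_cast
    rw [jacobiSym.mul_left, jacobiSym.mul_left, jacobiSym.sq_one' hg, hj1, hj2]
    norm_num
  -- `l` is a prime factor of the squarefree part `s` of `n`; the prime `q` is chosen so that `l` is
  -- a nonresidue and the cofactor of `l` in `s` is a residue
  rcases hl.eq_two_or_odd' with rfl | hodd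
  · have hn'odd : Odd n' := by rwa [← Nat.coprime_two_left]
    obtain ⟨q, hqa, hq, h1, h2, h3⟩ := exists_prime_three (m₁ := 8) (m₂ := n') (m₃ := 5) (a₁ := 5)
      (a₂ := 1) (a₃ := 2) a (by norm_num) hn'0 (by norm_num)
      (by rw [show 8 = 2 ^ 3 by norm_num]; exact Nat.Coprime.pow_left 3 hcop) (by decide) h5n
      (by decide) (by simp) (by decide)
    have hq8 : q % 8 = 5 := h1
    have hqo : Odd q := by rw [Nat.odd_iff]; omega
    refine ⟨q, hqa, hq, h3, hqo, ?_, ?_⟩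
    · rw [Nat.cast_ofNat, jacobiSym.at_two hqo, ← ZMod.natCast_mod, hq8]; decide
    · rw [jacobiSym.quadratic_reciprocity_one_mod_four' hn'odd (by omega),
        ← jacobiSym.one_left n']
      apply jacobiSym.mod_left'
      have : q % n' = 1 % n' := h2
      exact_mod_cast this
  · have := Fact.mk hl
    obtain ⟨c, hc⟩ : ∃ c : ZMod l, ¬ IsSquare c := by
      apply FiniteField.exists_nonsquare
      rw [ZMod.ringChar_zmod_n]
      rintro rfl; exact absurd hodd (by decide)
    have hcJ : J((c.val : ℤ) | l) = -1 := by
      rw [ZMod.nonsquare_iff_jacobiSym_eq_neg_one]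
      simpa using hc
    have hccop : c.val.Coprime l := by
      rw [Nat.coprime_comm, hl.coprime_iff_not_dvd]
      intro h
      have : c = 0 := by
        rw [← ZMod.natCast_zmod_val c]; exact (ZMod.natCast_eq_zero_iff _ _).mpr h
      exact hc (this ▸ IsSquare.zero)
    have h4l : Nat.Coprime 4 l := by
      rw [show 4 = 2 ^ 2 by norm_num]; exact Nat.Coprime.pow_left 2 (Nat.coprime_two_left.mpr hodd)
    obtain ⟨q, hqa, hq, h1, h2, h3⟩ := exists_prime_three (m₁ := 4 * n') (m₂ := l) (m₃ := 5)
      (a₁ := 1) (a₂ := c.val) (a₃ := 2) a (by omega) hl.ne_zero (by norm_num)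
      (Nat.Coprime.mul_left h4l hcop.symm) (Nat.Coprime.mul_left (by decide) h5n) h5l
      (by simp) hccop (by decide)
    have hq4 : q % 4 = 1 := h1.of_mul_right _
    have hqo : Odd q := by rw [Nat.odd_iff]; omega
    refine ⟨q, hqa, hq, h3, hqo, ?_, ?_⟩
    · rw [jacobiSym.quadratic_reciprocity_one_mod_four' hodd hq4, ← hcJ]
      apply jacobiSym.mod_left'
      have : q % l = c.val % l := h2
      exact_mod_cast this
    · rw [jacobiSym.mod_right' n' hqo]
      have : q % (4 * n') = 1 % (4 * n') := h1
      rw [this, Nat.mod_eq_of_lt (by omega), jacobiSym.one_right]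

/-! ### Square roots modulo rational primes -/

/-- The nontrivial conjugation of `ℤ[φ]`. -/
def cj (x : O) : O := ⟨x.re + x.im, -x.im⟩

lemma mul_cj (x : O) : x * cj x = (nm x : O) := by
  ext <;> simp [cj, nm, -Int.cast_sub, -Int.cast_add, -Int.cast_pow] <;> ring

lemma sq_eq_tr (x : O) : x ^ 2 = ((2 * x.re + x.im : ℤ) : O) * x - (nm x : O) := by
  ext <;> simp [nm, pow_two, -Int.cast_sub, -Int.cast_add, -Int.cast_pow] <;> ring

lemma jacobi_exists_sq {a : ℤ} {p : ℕ} (hp : p.Prime) (h : J(a | p) = 1) :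
    ∃ m : ℤ, (p : ℤ) ∣ a - m ^ 2 := by
  have := Fact.mk hp
  obtain ⟨c, hc⟩ := ZMod.isSquare_of_jacobiSym_eq_one h
  refine ⟨(c.val : ℤ), ?_⟩
  rw [← ZMod.intCast_zmod_eq_zero_iff_dvd]
  push_cast
  rw [ZMod.natCast_zmod_val, hc]; ring

/-- When `q` is inert in `ℤ[φ]`, an element whose norm is a square modulo `q` is itself a square
modulo `q`. -/
lemma exists_sq_mod_inert {q : ℕ} (hq : q.Prime) (hqo : Odd q) (h5 : J(5 | q) = -1) {x : O} {m : ℤ}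
    (hm : (q : ℤ) ∣ nm x - m ^ 2) : ∃ w : O, ((q : ℤ) : O) ∣ w ^ 2 - x := by
  by_cases hx : ((q : ℤ) : O) ∣ x
  · exact ⟨0, by simpa using hx⟩
  have := Fact.mk hq
  have hq' : Prime (q : ℤ) := Nat.prime_iff_prime_int.mp hq
  have hns : ¬ IsSquare (5 : ZMod q) := by
    have := ZMod.nonsquare_of_jacobiSym_eq_neg_one h5
    simpa using this
  have hq2 : ¬ (q : ℤ) ∣ 2 := by
    intro h
    have : q ∣ 2 := by exact_mod_cast h
    rw [(Nat.prime_dvd_prime_iff_eq hq Nat.prime_two).mp this] at hqo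
    exact absurd hqo (by decide)
  have hq5 : ¬ (q : ℤ) ∣ 5 := by
    intro h
    apply hns
    rw [show (5 : ZMod q) = ((5 : ℤ) : ZMod q) by push_cast; rfl,
      (ZMod.intCast_zmod_eq_zero_iff_dvd 5 q).mpr h]
    exact IsSquare.zero
  wlog hK : ¬ (q : ℤ) ∣ (2 * x.re + x.im) + 2 * m generalizing m
  · push Not at hK
    refine this (m := -m) (by simpa using hm) ?_
    intro hK'
    apply hx
    have h4 : (q : ℤ) ∣ 2 * (2 * m) := by
      have := dvd_sub hK hK'
      rwa [show (2 * x.re + x.im) + 2 * m - (2 * x.re + x.im + 2 * -m) = 2 * (2 * m) by ring] at this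
    have hmq : (q : ℤ) ∣ m :=
      ((hq'.dvd_or_dvd ((hq'.dvd_or_dvd h4).resolve_left hq2)).resolve_left hq2)
    have hT : (q : ℤ) ∣ 2 * x.re + x.im := (dvd_add_left (hmq.mul_left 2)).mp hK
    have hN : (q : ℤ) ∣ nm x := by
      have := dvd_add hm (dvd_pow hmq two_ne_zero)
      simpa using this
    have h6 : (q : ℤ) ∣ 5 * x.im ^ 2 := by
      have := dvd_sub (hT.mul_left (2 * x.re + x.im)) (hN.mul_left 4)
      rwa [show (2 * x.re + x.im) * (2 * x.re + x.im) - 4 * nm x = 5 * x.im ^ 2 by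
        simp only [nm]; ring] at this
    have him : (q : ℤ) ∣ x.im :=
      hq'.dvd_of_dvd_pow ((hq'.dvd_or_dvd h6).resolve_left hq5)
    have hre : (q : ℤ) ∣ x.re :=
      (hq'.dvd_or_dvd ((dvd_add_left him).mp hT)).resolve_left hq2
    exact int_dvd_iff.mpr ⟨hre, him⟩
  obtain ⟨K, hKdef⟩ : ∃ K, K = (2 * x.re + x.im) + 2 * m := ⟨_, rfl⟩
  rw [← hKdef] at hK
  have hK0 : (K : ZMod q) ≠ 0 := by rwa [Ne, ZMod.intCast_zmod_eq_zero_iff_dvd]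
  have hsq := sq_eq_tr x
  have hy : ∃ (y : ℤ) (d : O), (d = 1 ∨ d = r5) ∧ ∃ e : ℤ, d ^ 2 = (e : O) ∧
      (q : ℤ) ∣ 1 - e * y ^ 2 * K := by
    have aux : ∀ e : ℤ, IsSquare ((e : ZMod q) * K) → (e : ZMod q) ≠ 0 →
        ∃ y : ℤ, (q : ℤ) ∣ 1 - e * y ^ 2 * K := by
      rintro e ⟨z, hz⟩ he
      have hz0 : z ≠ 0 := by
        rintro rfl; simp [he, hK0] at hz
      refine ⟨((z⁻¹).val : ℤ), ?_⟩
      rw [← ZMod.intCast_zmod_eq_zero_iff_dvd]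
      push_cast
      rw [ZMod.natCast_zmod_val,
        show (e : ZMod q) * z⁻¹ ^ 2 * K = (e * K) * z⁻¹ ^ 2 by ring, hz]
      field_simp; ring
    by_cases hKs : IsSquare (K : ZMod q)
    · obtain ⟨y, hy⟩ := aux 1 (by simpa using hKs) (by simp)
      exact ⟨y, 1, Or.inl rfl, 1, by simp, hy⟩
    · have h55 : ((5 : ℤ) : ZMod q) ≠ 0 := by rwa [Ne, ZMod.intCast_zmod_eq_zero_iff_dvd]
      obtain ⟨y, hy⟩ := aux 5 (by
        have h1 : J(K | q) = -1 := ZMod.nonsquare_iff_jacobiSym_eq_neg_one.mpr hKs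
        have h2 : J(5 * K | q) = 1 := by rw [jacobiSym.mul_left, h5, h1]; norm_num
        have := ZMod.isSquare_of_jacobiSym_eq_one h2
        simpa using this) h55
      exact ⟨y, r5, Or.inr rfl, 5, by rw [r5_sq]; norm_num, hy⟩
  obtain ⟨y, d, -, e, hde, c, hc⟩ := hy
  obtain ⟨f, hf⟩ := hm
  refine ⟨(x + m) * y * d, -(c : O) * x - e * y ^ 2 * f, ?_⟩
  have hc' : (1 : O) - e * y ^ 2 * K = (q : O) * c := by exact_mod_cast congrArg (Int.cast : ℤ → O) hc
  have hf' : (nm x : O) - (m : O) ^ 2 = (q : O) * f := by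
    exact_mod_cast congrArg (Int.cast : ℤ → O) hf
  have hK' : (K : O) = ((2 * x.re + x.im : ℤ) : O) + 2 * m := by rw [hKdef]; push_cast; ring
  push_cast
  push_cast at hsq hK'
  rw [hK'] at hc'
  linear_combination ((x + m) ^ 2 * y ^ 2) * hde + (e * y ^ 2 : O) * hsq - x * hc' - (e * y ^ 2 : O) * hf'

lemma fifth_root_identity {F : Type*} [Field F] (z a b : F) (h : z ^ 4 + z ^ 3 + z ^ 2 + z + 1 = 0)
    (hb : b = -z + 3 * z ^ 2 - 3 * z ^ 3 + z ^ 4) (ha : a = 5 * (z - z ^ 4) - b * (1 + z + z ^ 4)) :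
    a ^ 2 + b ^ 2 = -50 ∧ 2 * a * b + b ^ 2 = -25 := by
  constructor <;> grind

/-- Modulo a prime `p ≡ 1 (mod 5)`, `-(2 + φ)` is a square: it is `(ζ - ζ⁻¹)²` for fifth roots of
unity `ζ`. -/
lemma exists_sq_mod_split {p : ℕ} (hp : p.Prime) (h : p % 5 = 1) :
    ∃ w : O, ((p : ℤ) : O) ∣ w ^ 2 + s5 := by
  have := Fact.mk hp
  have hcard : 5 ∣ Fintype.card (ZMod p)ˣ := by
    rw [ZMod.card_units_eq_totient, Nat.totient_prime hp]; omega
  have : Fact (Nat.Prime 5) := ⟨by norm_num⟩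
  obtain ⟨ζ, hζ⟩ := exists_prime_orderOf_dvd_card 5 hcard
  obtain ⟨z, hz⟩ : ∃ z : ZMod p, z = ζ := ⟨_, rfl⟩
  have hz5 : z ^ 5 = 1 := by
    rw [hz, ← Units.val_pow_eq_pow_val, ← hζ, pow_orderOf_eq_one]; rfl
  have hz1 : z ≠ 1 := by
    intro h1
    have : ζ = 1 := Units.ext (by rw [← hz, h1]; rfl)
    rw [this, orderOf_one] at hζ; norm_num at hζ
  have hcyc : z ^ 4 + z ^ 3 + z ^ 2 + z + 1 = 0 := by
    have : (z - 1) * (z ^ 4 + z ^ 3 + z ^ 2 + z + 1) = 0 := by linear_combination hz5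
    exact (mul_eq_zero.mp this).resolve_left (sub_ne_zero.mpr hz1)
  have h50 : (5 : ZMod p) ≠ 0 := by
    intro h0
    have h1 : ((5 : ℕ) : ZMod p) = 0 := by exact_mod_cast h0
    rw [ZMod.natCast_eq_zero_iff, Nat.prime_dvd_prime_iff_eq hp (by norm_num)] at h1
    omega
  obtain ⟨b, hb⟩ : ∃ b, b = -z + 3 * z ^ 2 - 3 * z ^ 3 + z ^ 4 := ⟨_, rfl⟩
  obtain ⟨a, ha⟩ : ∃ a, a = 5 * (z - z ^ 4) - b * (1 + z + z ^ 4) := ⟨_, rfl⟩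
  obtain ⟨e1, e2⟩ := fifth_root_identity z a b hcyc hb ha
  refine ⟨⟨(((a / 5 : ZMod p)).val : ℤ), (((b / 5 : ZMod p)).val : ℤ)⟩, int_dvd_iff.mpr ⟨?_, ?_⟩⟩
  · rw [← ZMod.intCast_zmod_eq_zero_iff_dvd]
    simp only [pow_two, QuadraticAlgebra.re_add, QuadraticAlgebra.re_mul, s5]
    push_cast
    rw [ZMod.natCast_zmod_val, ZMod.natCast_zmod_val]
    field_simp
    linear_combination e1
  · rw [← ZMod.intCast_zmod_eq_zero_iff_dvd]
    simp only [pow_two, QuadraticAlgebra.im_add, QuadraticAlgebra.im_mul, s5]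
    push_cast
    rw [ZMod.natCast_zmod_val, ZMod.natCast_zmod_val]
    field_simp
    linear_combination e2

/-! ### The three squares theorem over `ℚ(√5)` -/

/-- `D` is a sum of three squares in the fraction field of `ℤ[φ]`. -/
def ThreeSq (D : O) : Prop := ∃ X Y Z W : O, W ≠ 0 ∧ X ^ 2 + Y ^ 2 + Z ^ 2 = D * W ^ 2

/-- The two congruences `D ∣ 1 + t²q` and `q ∣ w² + D` give a symmetric matrix of determinant one
with leading minors `D` and `Dq`; its reduction exhibits `D` as a sum of three squares. -/
lemma threeSq_of_div {D q m n t w : O} (hD : TP D) (hq : TP q) (h1 : D * m = 1 + t ^ 2 * q)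
    (h2 : q * n = w ^ 2 + D) : ThreeSq D := by
  have hU : Unimod D (D * q) := by
    refine ⟨hD, hD.mul hq, 0, t, q, m * w, m * (m * n - t ^ 2), by ring, ?_⟩
    linear_combination (D * m ^ 2) * h2 + (1 + D * m) * h1
  obtain ⟨u₁, u₂, u₃, v₁, v₂, v₃, w, w', h1, h2, h3, h4, h5⟩ := hU.orthPair
  exact ⟨u₁, u₂, u₃, w, h1, h3⟩

lemma ThreeSq.mul_sq {D x : O} (h : ThreeSq D) : ThreeSq (x ^ 2 * D) := by
  obtain ⟨X, Y, Z, W, hW, h⟩ := h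
  exact ⟨x * X, x * Y, x * Z, W, hW, by linear_combination x ^ 2 * h⟩

lemma ThreeSq.of_mul_sq {D k y : O} (hk : k ≠ 0) (h : D * k = y ^ 2) (h3 : ThreeSq k) :
    ThreeSq D := by
  obtain ⟨X, Y, Z, W, hW, e⟩ := h3
  exact ⟨y * X, y * Y, y * Z, k * W, mul_ne_zero hk hW,
    by linear_combination y ^ 2 * e - k * W ^ 2 * h⟩

/-- The prime `2 + φ` is the only one above `5`. -/
lemma s5_dvd_of {x : O} (h : (5 : ℤ) ∣ nm x) : ∃ y, x = s5 * y := by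
  have h1 : (5 : ℤ) ∣ (x.re + 3 * x.im) ^ 2 := by
    have : (x.re + 3 * x.im) ^ 2 = nm x + 5 * (x.re * x.im + 2 * x.im ^ 2) := by
      simp only [nm]; ring
    rw [this]; exact dvd_add h (dvd_mul_right _ _)
  have h2 : (5 : ℤ) ∣ x.re + 3 * x.im := (by norm_num : Prime (5 : ℤ)).dvd_of_dvd_pow h1
  obtain ⟨c, hc⟩ := h2
  refine ⟨⟨3 * c - 2 * x.im, x.im - c⟩, ?_⟩
  ext <;> simp [s5] <;> omega

lemma nm_s5 : nm s5 = 5 := by simp [nm, s5]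

/-- For `D` prime to `5`, the auxiliary prime `q` is inert and `≡ -1` modulo `4 nm D`: then
`D ∣ 1 + q`, and `nm D`, hence `-D`, is a square modulo `q`. -/
lemma threeSq_unit_case {D : O} (hD : TP D) (h5 : ¬ (5 : ℤ) ∣ nm D) : ThreeSq D := by
  obtain ⟨n, hn⟩ := Int.eq_ofNat_of_zero_le hD.nm_pos.le
  have hn0 : 0 < n := by have := hD.nm_pos; omega
  have h5n : ¬ 5 ∣ n := by rw [hn] at h5; exact_mod_cast h5
  obtain ⟨q, -, hq, h1, h2, -⟩ := exists_prime_three (m₁ := 4 * n) (m₂ := 5) (m₃ := 1)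
    (a₁ := 4 * n - 1) (a₂ := 2) (a₃ := 0) 0 (by omega) (by norm_num) (by norm_num)
    (by
      rw [Nat.coprime_comm, Nat.Prime.coprime_iff_not_dvd (by norm_num)]
      omega) (by simp) (by simp)
    ((Nat.coprime_self_sub_left (by omega)).mpr (by simp)) (by decide) (by simp)
  have hdvd : 4 * n ∣ q + 1 := by
    have := (h1.add_right 1)
    rw [Nat.sub_add_cancel (by omega)] at this
    exact (Nat.modEq_zero_iff_dvd.mp (this.trans (by simp [Nat.ModEq])))
  have hqo : Odd q := by
    obtain ⟨c, hc⟩ := hdvd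
    have : q + 1 = 4 * (n * c) := by rw [hc]; ring
    rw [Nat.odd_iff]; omega
  obtain ⟨m, hm⟩ := jacobi_exists_sq hq (jacobi_of_neg_one_mod hn0 hdvd)
  have hnm : nm (-D) = n := by rw [show nm (-D) = nm D by simp [nm], hn]
  obtain ⟨w, v, hw⟩ := exists_sq_mod_inert (x := -D) (m := m) hq hqo (jacobi_five hqo h2)
    (by rw [hnm]; exact hm)
  obtain ⟨c, hc⟩ := hdvd
  have hc' : (q : O) + 1 = 4 * n * c := by exact_mod_cast congrArg (Nat.cast : ℕ → O) hc
  have hcj := mul_cj D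
  rw [hn] at hcj
  refine threeSq_of_div (q := ((q : ℤ) : O)) (m := cj D * (4 * c)) (t := 1) (w := w) (n := v) hD
    (tp_int (by exact_mod_cast hq.pos)) ?_ (by linear_combination -hw)
  push_cast at hcj ⊢
  linear_combination -hc' + (4 * c) * hcj

/-- Rational multiples of `2 + φ`: the auxiliary prime `p ≡ 1` mod `5` is split and `≡ -1` modulo
`4r`, so that `r` and `-(2 + φ)` are both squares modulo `p`. -/
lemma threeSq_s5_nat {r : ℕ} (hr : 0 < r) (h5 : ¬ 5 ∣ r) : ThreeSq (s5 * r) := by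
  have hcop : Nat.Coprime r 5 := by
    rw [Nat.coprime_comm, Nat.Prime.coprime_iff_not_dvd (by norm_num)]; exact h5
  obtain ⟨p, -, hp, h1, h2, -⟩ := exists_prime_three (m₁ := 4 * r) (m₂ := 5) (m₃ := 1)
    (a₁ := 4 * r - 1) (a₂ := 1) (a₃ := 0) 0 (by omega) (by norm_num) (by norm_num)
    (Nat.Coprime.mul_left (by decide) hcop) (by simp) (by simp)
    ((Nat.coprime_self_sub_left (by omega)).mpr (by simp)) (by decide) (by simp)
  have hdvd : 4 * r ∣ p + 1 := by
    have := (h1.add_right 1)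
    rw [Nat.sub_add_cancel (by omega)] at this
    exact (Nat.modEq_zero_iff_dvd.mp (this.trans (by simp [Nat.ModEq])))
  obtain ⟨m, f, hm⟩ := jacobi_exists_sq hp (jacobi_of_neg_one_mod hr hdvd)
  obtain ⟨w, v, hw⟩ := exists_sq_mod_split hp h2
  obtain ⟨t, ht1, ht2⟩ := Nat.chineseRemainder hcop 1 2
  have hA : r ∣ 1 + t ^ 2 * p := by
    have e1 : 1 + t ^ 2 * p ≡ 1 + 1 ^ 2 * p [MOD r] := (((ht1.pow 2).mul_right p).add_left 1)
    have e2 : r ∣ 1 + 1 ^ 2 * p := by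
      rw [one_pow, one_mul, add_comm]; exact (Dvd.intro_left 4 rfl).trans hdvd
    exact (Nat.modEq_zero_iff_dvd.mp (e1.trans (Nat.modEq_zero_iff_dvd.mpr e2)))
  have hB : 5 ∣ 1 + t ^ 2 * p := by
    have e1 : 1 + t ^ 2 * p ≡ 1 + 2 ^ 2 * 1 [MOD 5] := (((ht2.pow 2).mul h2).add_left 1)
    exact (Nat.modEq_zero_iff_dvd.mp (e1.trans (by decide)))
  obtain ⟨c, hc⟩ := Nat.Coprime.mul_dvd_of_dvd_of_dvd hcop hA hB
  have hc' : (1 : O) + t ^ 2 * p = r * 5 * c := by exact_mod_cast congrArg (Nat.cast : ℕ → O) hc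
  have hm' : (r : O) - m ^ 2 = p * f := by exact_mod_cast congrArg (Int.cast : ℤ → O) hm
  have hcj := mul_cj s5
  rw [nm_s5] at hcj
  refine threeSq_of_div (q := (p : O)) (m := cj s5 * c) (t := t) (w := m * w)
    (n := m ^ 2 * v + f * s5) (tp_s5.mul (tp_nat hr)) (tp_nat hp.pos) ?_ ?_
  · push_cast at hcj
    linear_combination (r * c) * hcj - hc'
  · push_cast at hw
    linear_combination (-(m : O) ^ 2) * hw - s5 * hm'

lemma threeSq_s5_int {k : ℕ} (hk : 0 < k) : ThreeSq (s5 * k) := by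
  induction k using Nat.strong_induction_on with
  | _ k ih =>
    by_cases h5 : 5 ∣ k
    · obtain ⟨l, rfl⟩ := h5
      have := (ih l (by omega) (by omega)).mul_sq (x := r5)
      rw [r5_sq] at this
      push_cast
      rwa [show s5 * (5 * (l : O)) = 5 * (s5 * l) by ring]
    · exact threeSq_s5_nat hk h5

/-- If `nm D₁ = m²` then `D₁ · (tr D₁ + 2m) = (D₁ + m)²`, so `D₁` may be replaced by a rational
integer. -/
lemma threeSq_s5_square {D₁ : O} (hD : TP D₁) {m : ℤ} (hm : nm D₁ = m ^ 2) (hm0 : 0 ≤ m) :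
    ThreeSq (s5 * D₁) := by
  have htr : 0 < 2 * D₁.re + D₁.im := by
    have := add_pos hD.1 hD.2
    rw [s1_def, s2_def] at this
    have h3 : (0 : ℝ) < 2 * D₁.re + D₁.im := by linarith
    exact_mod_cast h3
  obtain ⟨k, hk⟩ := Int.eq_ofNat_of_zero_le (a := 2 * D₁.re + D₁.im + 2 * m) (by omega)
  have hk' : (2 * D₁.re + D₁.im : ℤ) + 2 * (m : O) = (k : O) := by
    exact_mod_cast congrArg (Int.cast : ℤ → O) hk
  refine ThreeSq.of_mul_sq (k := s5 * k) (y := s5 * (D₁ + m)) ?_ ?_ (threeSq_s5_int (by omega))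
  · exact (tp_s5.mul (tp_nat (by omega))).ne_zero
  · have := sq_eq_tr D₁
    rw [hm] at this
    push_cast at this hk'
    rw [← hk']
    linear_combination (-s5 ^ 2) * this

/-- If `n = nm D₁` is not a square, the auxiliary modulus is a product `qp` of two inert primes with
`qp ≡ -1` modulo `20n`. Both `5` and `n` are nonresidues modulo `q` and modulo `p`, so the norm
`5n` of `-(2 + φ)D₁` is a residue, and `-(2 + φ)D₁` is a square modulo each of them. -/
lemma threeSq_s5_nonsquare {D₁ : O} (hD : TP D₁) (h5 : ¬ (5 : ℤ) ∣ nm D₁)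
    (hns : ¬ IsSquare (nm D₁).toNat) : ThreeSq (s5 * D₁) := by
  obtain ⟨n, hn⟩ := Int.eq_ofNat_of_zero_le hD.nm_pos.le
  have hn0 : 0 < n := by have := hD.nm_pos; omega
  have hn' : (nm D₁).toNat = n := by rw [hn]; rfl
  rw [hn'] at hns
  have h5n : ¬ 5 ∣ n := by rw [hn] at h5; exact_mod_cast h5
  have hcop5 : Nat.Coprime (4 * n) 5 := by
    rw [Nat.coprime_comm, Nat.Prime.coprime_iff_not_dvd (by norm_num)]; omega
  obtain ⟨q, hq, hq5, hqo, hqJ⟩ := exists_prime_jacobi_neg hn0 hns h5n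
  have hqn : Nat.Coprime q (4 * n) := by
    have h1 : Nat.Coprime q n := by
      by_contra h
      have : J((n : ℤ) | q) = 0 := by
        rw [jacobiSym.eq_zero_iff]
        refine ⟨hq.ne_zero, ?_⟩
        rw [Int.gcd_natCast_natCast, Nat.gcd_comm]; exact h
      rw [this] at hqJ; norm_num at hqJ
    have h2 : Nat.Coprime q 4 := by
      rw [show 4 = 2 ^ 2 by norm_num]
      exact Nat.Coprime.pow_right 2 (Nat.coprime_two_right.mpr hqo)
    exact Nat.Coprime.mul_right h2 h1
  obtain ⟨i, hi⟩ := Nat.exists_mul_mod_eq_one_of_coprime hqn (by omega)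
  have hi1 : q * i ≡ 1 [MOD 4 * n] := by
    rw [Nat.ModEq, hi.2, Nat.mod_eq_of_lt (by omega)]
  have hicop : Nat.Coprime (i * (4 * n - 1)) (4 * n) := by
    apply Nat.Coprime.mul_left
    · have := hi1.gcd_eq
      simp only [Nat.gcd_one_left] at this
      exact Nat.Coprime.coprime_mul_left this
    · exact (Nat.coprime_self_sub_left (by omega)).mpr (by simp)
  obtain ⟨p, hpq, hp, h1, h2, -⟩ := exists_prime_three (m₁ := 4 * n) (m₂ := 5) (m₃ := 1)
    (a₁ := i * (4 * n - 1)) (a₂ := 2) (a₃ := 0) q (by omega) (by norm_num) (by norm_num)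
    hcop5 (by simp) (by simp) hicop (by decide) (by simp)
  have hdvd : 4 * n ∣ q * p + 1 := by
    have e1 : q * p ≡ q * (i * (4 * n - 1)) [MOD 4 * n] := h1.mul_left q
    have e2 : q * (i * (4 * n - 1)) ≡ 1 * (4 * n - 1) [MOD 4 * n] := by
      rw [← mul_assoc]; exact hi1.mul_right _
    have := (e1.trans e2).add_right 1
    rw [one_mul, Nat.sub_add_cancel (by omega)] at this
    exact (Nat.modEq_zero_iff_dvd.mp (this.trans (by simp [Nat.ModEq])))
  have hdvd5 : 5 ∣ q * p + 1 := by
    have e : q * p ≡ 2 * 2 [MOD 5] := Nat.ModEq.mul (show q % 5 = 2 % 5 by omega) h2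
    exact (Nat.modEq_zero_iff_dvd.mp ((e.add_right 1).trans (by decide)))
  have hpo : Odd p := by
    obtain ⟨c, hc⟩ := hdvd
    have h3 : q * p + 1 = 4 * (n * c) := by rw [hc]; ring
    have h4 : Odd (q * p) := by rw [Nat.odd_iff]; omega
    exact (Nat.odd_mul.mp h4).2
  have hpJ : J((n : ℤ) | p) = -1 := by
    have h3 := jacobi_of_neg_one_mod hn0 hdvd
    rw [jacobiSym.mul_right' _ hq.ne_zero hp.ne_zero, hqJ] at h3
    linarith
  have hnm : nm (-(s5 * D₁)) = 5 * n := by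
    have e : nm (-(s5 * D₁)) = nm (s5 * D₁) := by
      simp only [nm, QuadraticAlgebra.re_neg, QuadraticAlgebra.im_neg]; ring
    rw [e, nm_mul, nm_s5, hn]
  have root : ∀ l : ℕ, l.Prime → Odd l → l % 5 = 2 → J((n : ℤ) | l) = -1 →
      ∃ w : O, ((l : ℤ) : O) ∣ w ^ 2 - -(s5 * D₁) := by
    intro l hl hlo hl5 hlJ
    have hj5 := jacobi_five hlo hl5
    obtain ⟨m, hm⟩ := jacobi_exists_sq (a := 5 * n) hl
      (by rw [jacobiSym.mul_left, hj5, hlJ]; norm_num)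
    exact exists_sq_mod_inert hl hlo hj5 (m := m) (by rw [hnm]; exact hm)
  obtain ⟨w₁, v₁, hw1⟩ := root q hq hqo hq5 hqJ
  obtain ⟨w₂, v₂, hw2⟩ := root p hp hpo h2 hpJ
  have hqp : IsCoprime (q : ℤ) (p : ℤ) :=
    Nat.isCoprime_iff_coprime.mpr ((Nat.coprime_primes hq hp).mpr (by omega))
  obtain ⟨x, y, hxy⟩ := hqp
  have hxy' : (x : O) * q + y * p = 1 := by exact_mod_cast congrArg (Int.cast : ℤ → O) hxy
  -- Chinese remainder theorem for the two square roots
  obtain ⟨w, hwdef⟩ : ∃ w, w = w₁ * (y * p) + w₂ * (x * q) := ⟨_, rfl⟩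
  have hd1 : ((q : ℤ) : O) ∣ w ^ 2 + s5 * D₁ := by
    have : w - w₁ = q * (x * (w₂ - w₁)) := by rw [hwdef]; linear_combination w₁ * hxy'
    refine ⟨v₁ + (x * (w₂ - w₁)) * (w + w₁), ?_⟩
    push_cast at hw1 ⊢
    linear_combination hw1 + (w + w₁) * this
  have hd2 : ((p : ℤ) : O) ∣ w ^ 2 + s5 * D₁ := by
    have : w - w₂ = p * (y * (w₁ - w₂)) := by rw [hwdef]; linear_combination w₂ * hxy'
    refine ⟨v₂ + (y * (w₁ - w₂)) * (w + w₂), ?_⟩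
    push_cast at hw2 ⊢
    linear_combination hw2 + (w + w₂) * this
  have hd : ((q : ℤ) : O) * ((p : ℤ) : O) ∣ w ^ 2 + s5 * D₁ :=
    IsCoprime.mul_dvd ⟨x, y, by push_cast; exact hxy'⟩ hd1 hd2
  obtain ⟨v, hv⟩ := hd
  obtain ⟨c, hc⟩ := Nat.Coprime.mul_dvd_of_dvd_of_dvd hcop5 hdvd hdvd5
  have hc' : (q : O) * p + 1 = 4 * n * 5 * c := by exact_mod_cast congrArg (Nat.cast : ℕ → O) hc
  have hcj := mul_cj (s5 * D₁)
  rw [nm_mul, nm_s5, hn] at hcj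
  refine threeSq_of_div (q := (q : O) * p) (m := cj (s5 * D₁) * (4 * c)) (t := 1) (w := w) (n := v)
    (tp_s5.mul hD) ((tp_nat hq.pos).mul (tp_nat hp.pos)) ?_ ?_
  · push_cast at hcj
    linear_combination (4 * c) * hcj - hc'
  · push_cast at hv
    linear_combination -hv

/-- Every totally positive element of `ℤ[φ]` is a sum of three squares in the fraction field. -/
theorem threeSq {D : O} (hD : TP D) : ThreeSq D := by
  suffices H : ∀ n : ℕ, ∀ D : O, nm D ≤ n → TP D → ThreeSq D from
    H (nm D).toNat D (Int.self_le_toNat _) hD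
  clear hD
  intro n
  induction n with
  | zero => intro D h hD; have := hD.nm_pos; push_cast at h; omega
  | succ n ih =>
    intro D h hD
    by_cases h5 : (5 : ℤ) ∣ nm D
    swap
    · exact threeSq_unit_case hD h5
    obtain ⟨D₁, rfl⟩ := s5_dvd_of h5
    have hD₁ := tp_s5.of_mul hD
    by_cases h51 : (5 : ℤ) ∣ nm D₁
    · obtain ⟨D₂, rfl⟩ := s5_dvd_of h51
      have hD₂ := tp_s5.of_mul hD₁
      have h3 := ih D₂ (by
        rw [nm_mul, nm_mul, nm_s5] at h
        have := hD₂.nm_pos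
        push_cast at h; omega) hD₂
      rw [show s5 * (s5 * D₂) = s5 ^ 2 * D₂ by ring]
      exact h3.mul_sq
    · by_cases hsq : IsSquare (nm D₁).toNat
      · obtain ⟨m, hm⟩ := hsq
        refine threeSq_s5_square hD₁ (m := m) ?_ (by positivity)
        have := Int.toNat_of_nonneg hD₁.nm_pos.le
        rw [← this, hm]; push_cast; ring
      · exact threeSq_s5_nonsquare hD₁ h51 hsq


/-! ### The icosian ring -/

/-- The icosian ring, the maximal order of the Hamilton quaternions over `ℚ(√5)`: the element
`⟨x₀, x₁, x₂, x₃⟩` is `x₀ + x₁ i + x₂ g + x₃ i g` with `g = (φ + i + (φ - 1) j) / 2`. -/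
@[ext] structure Ico where
  /-- coefficient of `1` -/
  x0 : O
  /-- coefficient of `i` -/
  x1 : O
  /-- coefficient of `g` -/
  x2 : O
  /-- coefficient of `i g` -/
  x3 : O

namespace Ico

instance : Zero Ico := ⟨⟨0, 0, 0, 0⟩⟩
instance : One Ico := ⟨⟨1, 0, 0, 0⟩⟩
instance : Add Ico := ⟨fun x y => ⟨x.x0 + y.x0, x.x1 + y.x1, x.x2 + y.x2, x.x3 + y.x3⟩⟩
instance : Neg Ico := ⟨fun x => ⟨-x.x0, -x.x1, -x.x2, -x.x3⟩⟩
instance : Sub Ico := ⟨fun x y => ⟨x.x0 - y.x0, x.x1 - y.x1, x.x2 - y.x2, x.x3 - y.x3⟩⟩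
/-- Multiplication, determined by `i² = -1`, `g² = φ g - 1` and `g i = -1 + φ i - i g`. -/
instance : Mul Ico := ⟨fun x y =>
  ⟨x.x0 * y.x0 - x.x1 * y.x1 - x.x2 * y.x1 - φ * x.x3 * y.x1 - x.x2 * y.x2 - x.x3 * y.x3,
   x.x0 * y.x1 + x.x1 * y.x0 + φ * x.x2 * y.x1 - x.x3 * y.x1 - x.x3 * y.x2 + x.x2 * y.x3,
   x.x0 * y.x2 - x.x1 * y.x3 + x.x2 * y.x0 + x.x3 * y.x1 + φ * x.x2 * y.x2 - x.x2 * y.x3,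
   x.x0 * y.x3 + x.x1 * y.x2 + x.x3 * y.x0 - x.x2 * y.x1 + φ * x.x3 * y.x2 - x.x3 * y.x3⟩⟩

@[simp] lemma zero_x0 : (0 : Ico).x0 = 0 := rfl
@[simp] lemma zero_x1 : (0 : Ico).x1 = 0 := rfl
@[simp] lemma zero_x2 : (0 : Ico).x2 = 0 := rfl
@[simp] lemma zero_x3 : (0 : Ico).x3 = 0 := rfl
@[simp] lemma one_x0 : (1 : Ico).x0 = 1 := rfl
@[simp] lemma one_x1 : (1 : Ico).x1 = 0 := rfl
@[simp] lemma one_x2 : (1 : Ico).x2 = 0 := rfl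
@[simp] lemma one_x3 : (1 : Ico).x3 = 0 := rfl
@[simp] lemma add_x0 (x y : Ico) : (x + y).x0 = x.x0 + y.x0 := rfl
@[simp] lemma add_x1 (x y : Ico) : (x + y).x1 = x.x1 + y.x1 := rfl
@[simp] lemma add_x2 (x y : Ico) : (x + y).x2 = x.x2 + y.x2 := rfl
@[simp] lemma add_x3 (x y : Ico) : (x + y).x3 = x.x3 + y.x3 := rfl
@[simp] lemma neg_x0 (x : Ico) : (-x).x0 = -x.x0 := rfl
@[simp] lemma neg_x1 (x : Ico) : (-x).x1 = -x.x1 := rfl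
@[simp] lemma neg_x2 (x : Ico) : (-x).x2 = -x.x2 := rfl
@[simp] lemma neg_x3 (x : Ico) : (-x).x3 = -x.x3 := rfl
@[simp] lemma sub_x0 (x y : Ico) : (x - y).x0 = x.x0 - y.x0 := rfl
@[simp] lemma sub_x1 (x y : Ico) : (x - y).x1 = x.x1 - y.x1 := rfl
@[simp] lemma sub_x2 (x y : Ico) : (x - y).x2 = x.x2 - y.x2 := rfl
@[simp] lemma sub_x3 (x y : Ico) : (x - y).x3 = x.x3 - y.x3 := rfl
lemma mul_x0 (x y : Ico) : (x * y).x0 =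
  x.x0 * y.x0 - x.x1 * y.x1 - x.x2 * y.x1 - φ * x.x3 * y.x1 - x.x2 * y.x2 - x.x3 * y.x3 := rfl
lemma mul_x1 (x y : Ico) : (x * y).x1 =
  x.x0 * y.x1 + x.x1 * y.x0 + φ * x.x2 * y.x1 - x.x3 * y.x1 - x.x3 * y.x2 + x.x2 * y.x3 := rfl
lemma mul_x2 (x y : Ico) : (x * y).x2 =
  x.x0 * y.x2 - x.x1 * y.x3 + x.x2 * y.x0 + x.x3 * y.x1 + φ * x.x2 * y.x2 - x.x2 * y.x3 := rfl
lemma mul_x3 (x y : Ico) : (x * y).x3 =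
  x.x0 * y.x3 + x.x1 * y.x2 + x.x3 * y.x0 - x.x2 * y.x1 + φ * x.x3 * y.x2 - x.x3 * y.x3 := rfl

protected lemma mul_assoc' (x y z : Ico) : x * y * z = x * (y * z) := by
  have h := phi_sq
  ext1 <;> simp only [mul_x0, mul_x1, mul_x2, mul_x3] <;> generalize φ = f at h ⊢ <;> grind

instance : Ring Ico where
  add_assoc x y z := by ext1 <;> simp [add_assoc]
  zero_add x := by ext1 <;> simp
  add_zero x := by ext1 <;> simp
  add_comm x y := by ext1 <;> simp [add_comm]
  left_distrib x y z := by ext1 <;> simp [mul_x0, mul_x1, mul_x2, mul_x3] <;> ring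
  right_distrib x y z := by ext1 <;> simp [mul_x0, mul_x1, mul_x2, mul_x3] <;> ring
  zero_mul x := by ext1 <;> simp [mul_x0, mul_x1, mul_x2, mul_x3]
  mul_zero x := by ext1 <;> simp [mul_x0, mul_x1, mul_x2, mul_x3]
  mul_assoc := Ico.mul_assoc'
  one_mul x := by ext1 <;> simp [mul_x0, mul_x1, mul_x2, mul_x3]
  mul_one x := by ext1 <;> simp [mul_x0, mul_x1, mul_x2, mul_x3]
  neg_add_cancel x := by ext1 <;> simp
  sub_eq_add_neg x y := by ext1 <;> simp [sub_eq_add_neg]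
  nsmul := nsmulRec
  zsmul := zsmulRec

/-- The scalars `ℤ[φ]` inside the icosians. -/
def C (a : O) : Ico := ⟨a, 0, 0, 0⟩

@[simp] lemma C_x0 (a : O) : (C a).x0 = a := rfl
@[simp] lemma C_x1 (a : O) : (C a).x1 = 0 := rfl
@[simp] lemma C_x2 (a : O) : (C a).x2 = 0 := rfl
@[simp] lemma C_x3 (a : O) : (C a).x3 = 0 := rfl

lemma C_mul (a b : O) : C (a * b) = C a * C b := by
  ext1 <;> simp [mul_x0, mul_x1, mul_x2, mul_x3]
lemma C_add (a b : O) : C (a + b) = C a + C b := by ext1 <;> simp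
lemma C_one : C 1 = 1 := rfl
lemma C_zero : C 0 = 0 := rfl
lemma C_neg (a : O) : C (-a) = -C a := by ext1 <;> simp
lemma C_comm (a : O) (x : Ico) : C a * x = x * C a := by
  ext1 <;> simp [mul_x0, mul_x1, mul_x2, mul_x3] <;> ring

lemma C_mul_def (a : O) (x : Ico) : C a * x = ⟨a * x.x0, a * x.x1, a * x.x2, a * x.x3⟩ := by
  ext1 <;> simp [mul_x0, mul_x1, mul_x2, mul_x3]

lemma C_inj {a b : O} (h : C a = C b) : a = b := congrArg Ico.x0 h

lemma C_cancel {a : O} (ha : a ≠ 0) {x y : Ico} (h : C a * x = C a * y) : x = y := by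
  rw [C_mul_def, C_mul_def] at h
  simp only [Ico.mk.injEq, mul_eq_mul_left_iff, ha, or_false] at h
  ext1 <;> simp [h]

/-- Quaternion conjugation. -/
def cn (x : Ico) : Ico := ⟨x.x0 + φ * x.x2 - x.x3, -x.x1, -x.x2, -x.x3⟩

/-- The reduced norm. -/
def N (x : Ico) : O :=
  x.x0 ^ 2 + x.x1 ^ 2 + x.x2 ^ 2 + x.x3 ^ 2 + φ * (x.x0 * x.x2 + x.x1 * x.x3) + x.x1 * x.x2
    - x.x0 * x.x3

lemma cn_cn (x : Ico) : cn (cn x) = x := by ext1 <;> simp [cn]; ring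
lemma cn_add (x y : Ico) : cn (x + y) = cn x + cn y := by ext1 <;> simp [cn] <;> ring
lemma cn_sub (x y : Ico) : cn (x - y) = cn x - cn y := by ext1 <;> simp [cn] <;> ring
lemma cn_neg (x : Ico) : cn (-x) = -cn x := by ext1 <;> simp [cn] <;> ring
lemma cn_C (a : O) : cn (C a) = C a := by ext1 <;> simp [cn]
lemma cn_mul (x y : Ico) : cn (x * y) = cn y * cn x := by
  have h := phi_sq
  ext1 <;> simp only [cn, mul_x0, mul_x1, mul_x2, mul_x3] <;> generalize φ = f at h ⊢ <;>
    grind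
lemma mul_cn (x : Ico) : x * cn x = C (N x) := by
  ext1 <;> simp [cn, N, mul_x0, mul_x1, mul_x2, mul_x3] <;> ring
lemma N_cn (x : Ico) : N (cn x) = N x := by
  simp only [N, cn]; ring
lemma cn_mul_self (x : Ico) : cn x * x = C (N x) := by
  have := mul_cn (cn x)
  rwa [cn_cn, N_cn] at this
lemma N_C (a : O) : N (C a) = a ^ 2 := by simp [N]
lemma N_mul (x y : Ico) : N (x * y) = N x * N y := by
  apply C_inj
  rw [← mul_cn, cn_mul, mul_assoc, ← mul_assoc y, mul_cn, C_comm, ← mul_assoc, mul_cn, C_mul]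

/-- Twice the coordinates in the standard basis `1, i, j, k`. -/
def d0 (x : Ico) : O := 2 * x.x0 + φ * x.x2 - x.x3
/-- Twice the coefficient of `i`. -/
def d1 (x : Ico) : O := 2 * x.x1 + x.x2 + φ * x.x3
/-- Twice the coefficient of `j`. -/
def d2 (x : Ico) : O := (φ - 1) * x.x2
/-- Twice the coefficient of `k`. -/
def d3 (x : Ico) : O := (φ - 1) * x.x3

lemma four_N (x : Ico) : 4 * N x = d0 x ^ 2 + d1 x ^ 2 + d2 x ^ 2 + d3 x ^ 2 := by
  have h := phi_sq
  simp only [N, d0, d1, d2, d3]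
  linear_combination (-2 * x.x2 ^ 2 - 2 * x.x3 ^ 2) * h

lemma N_tn (x : Ico) : TN (N x) := by
  have h := four_N x
  have h1 := congrArg σ₁ h
  have h2 := congrArg σ₂ h
  simp only [map_add, map_mul, map_pow, map_ofNat] at h1 h2
  constructor
  · have : 0 ≤ 4 * σ₁ (N x) := by rw [h1]; positivity
    linarith
  · have : 0 ≤ 4 * σ₂ (N x) := by rw [h2]; positivity
    linarith

lemma N_eq_zero {x : Ico} (h : N x = 0) : x = 0 := by
  have h1 := congrArg σ₁ (four_N x)
  rw [h] at h1
  simp only [map_add, map_mul, map_pow, mul_zero, map_zero] at h1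
  have hz : ∀ y : O, σ₁ y ^ 2 = 0 → y = 0 := fun y hy => s1_eq_zero.mp (by simpa using hy)
  have e0 := hz (d0 x) (by nlinarith [sq_nonneg (σ₁ (d0 x)), sq_nonneg (σ₁ (d1 x)), sq_nonneg (σ₁ (d2 x)), sq_nonneg (σ₁ (d3 x))])
  have e1 := hz (d1 x) (by nlinarith [sq_nonneg (σ₁ (d0 x)), sq_nonneg (σ₁ (d1 x)), sq_nonneg (σ₁ (d2 x)), sq_nonneg (σ₁ (d3 x))])
  have e2 := hz (d2 x) (by nlinarith [sq_nonneg (σ₁ (d0 x)), sq_nonneg (σ₁ (d1 x)), sq_nonneg (σ₁ (d2 x)), sq_nonneg (σ₁ (d3 x))])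
  have e3 := hz (d3 x) (by nlinarith [sq_nonneg (σ₁ (d0 x)), sq_nonneg (σ₁ (d1 x)), sq_nonneg (σ₁ (d2 x)), sq_nonneg (σ₁ (d3 x))])
  have hp := phi_mul_inv
  have f2 : x.x2 = 0 := by unfold d2 at e2; linear_combination φ * e2 - x.x2 * hp
  have f3 : x.x3 = 0 := by unfold d3 at e3; linear_combination φ * e3 - x.x3 * hp
  have t2 : (2 : O) ≠ 0 := two_ne_zero
  unfold d0 at e0
  unfold d1 at e1
  rw [f2, f3] at e0 e1
  have f0 : x.x0 = 0 := (mul_eq_zero.mp (show 2 * x.x0 = 0 by linear_combination e0)).resolve_left t2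
  have f1 : x.x1 = 0 := (mul_eq_zero.mp (show 2 * x.x1 = 0 by linear_combination e1)).resolve_left t2
  ext1 <;> simp [f0, f1, f2, f3]

end Ico

/-! ### The icosians are norm-Euclidean -/

lemma round_err (y : ℝ) : ∃ r : ℤ, |y - r| ≤ 1 / 2 := ⟨round y, abs_sub_round y⟩

/-- The covering radius of the lattice `D₄` is at most one. -/
lemma D4_cover (y₀ y₁ y₂ y₃ : ℝ) : ∃ a b c d : ℤ, 2 ∣ a + b + c + d ∧
    (y₀ - a) ^ 2 + (y₁ - b) ^ 2 + (y₂ - c) ^ 2 + (y₃ - d) ^ 2 ≤ 1 := by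
  obtain ⟨a, ha⟩ := round_err y₀
  obtain ⟨b, hb⟩ := round_err y₁
  obtain ⟨c, hc⟩ := round_err y₂
  obtain ⟨d, hd⟩ := round_err y₃
  have hsq : ∀ {u v : ℝ}, |u| ≤ |v| → u ^ 2 ≤ v ^ 2 := fun h => sq_le_sq.mpr h
  have half : ∀ {u : ℝ}, |u| ≤ 1 / 2 → u ^ 2 ≤ 1 / 4 := by
    intro u h
    have := hsq (u := u) (v := 1 / 2) (by rwa [abs_of_pos (by norm_num : (0 : ℝ) < 1 / 2)])
    linarith
  -- moving the coordinate of largest error to the other side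
  have fix : ∀ {y : ℝ} {r : ℤ}, |y - r| ≤ 1 / 2 → ∃ s : ℤ, (s = r + 1 ∨ s = r - 1) ∧
      (y - s) ^ 2 + 3 * (y - r) ^ 2 ≤ 1 := by
    intro y r h
    rw [abs_le] at h
    by_cases h0 : 0 ≤ y - r
    · refine ⟨r + 1, Or.inl rfl, ?_⟩
      push_cast; nlinarith
    · refine ⟨r - 1, Or.inr rfl, ?_⟩
      push_cast; nlinarith
  by_cases hpar : 2 ∣ a + b + c + d
  · exact ⟨a, b, c, d, hpar, by linarith [half ha, half hb, half hc, half hd]⟩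
  rcases le_total |y₀ - a| |y₁ - b| with h01 | h01 <;>
  rcases le_total |y₂ - c| |y₃ - d| with h23 | h23
  · rcases le_total |y₁ - b| |y₃ - d| with h | h
    · obtain ⟨s, hs, e⟩ := fix hd
      exact ⟨a, b, c, s, by omega, by linarith [hsq h01, hsq h23, hsq h]⟩
    · obtain ⟨s, hs, e⟩ := fix hb
      exact ⟨a, s, c, d, by omega, by linarith [hsq h01, hsq h23, hsq h]⟩
  · rcases le_total |y₁ - b| |y₂ - c| with h | h
    · obtain ⟨s, hs, e⟩ := fix hc
      exact ⟨a, b, s, d, by omega, by linarith [hsq h01, hsq h23, hsq h]⟩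
    · obtain ⟨s, hs, e⟩ := fix hb
      exact ⟨a, s, c, d, by omega, by linarith [hsq h01, hsq h23, hsq h]⟩
  · rcases le_total |y₀ - a| |y₃ - d| with h | h
    · obtain ⟨s, hs, e⟩ := fix hd
      exact ⟨a, b, c, s, by omega, by linarith [hsq h01, hsq h23, hsq h]⟩
    · obtain ⟨s, hs, e⟩ := fix ha
      exact ⟨s, b, c, d, by omega, by linarith [hsq h01, hsq h23, hsq h]⟩
  · rcases le_total |y₀ - a| |y₂ - c| with h | h
    · obtain ⟨s, hs, e⟩ := fix hc
      exact ⟨a, b, s, d, by omega, by linarith [hsq h01, hsq h23, hsq h]⟩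
    · obtain ⟨s, hs, e⟩ := fix ha
      exact ⟨s, b, c, d, by omega, by linarith [hsq h01, hsq h23, hsq h]⟩

/-- The covering radius of the Hurwitz lattice, in doubled coordinates. -/
lemma hurwitz_cover (y₀ y₁ y₂ y₃ : ℝ) : ∃ a b c d : ℤ, 2 ∣ a - b ∧ 2 ∣ a - c ∧ 2 ∣ a - d ∧
    (y₀ - a / 2) ^ 2 + (y₁ - b / 2) ^ 2 + (y₂ - c / 2) ^ 2 + (y₃ - d / 2) ^ 2 ≤ 1 / 2 := by
  have aux : ∀ y : ℝ, ∃ r s : ℤ, 2 ∣ r ∧ 2 ∣ s - 1 ∧ (y - r / 2) ^ 2 + (y - s / 2) ^ 2 ≤ 1 / 4 := by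
    intro y
    obtain ⟨r, h⟩ := round_err y
    rw [abs_le] at h
    by_cases h0 : 0 ≤ y - r
    · refine ⟨2 * r, 2 * r + 1, by omega, by omega, ?_⟩
      push_cast; nlinarith
    · refine ⟨2 * r, 2 * r - 1, by omega, by omega, ?_⟩
      push_cast; nlinarith
  obtain ⟨a, a', ha, ha', ea⟩ := aux y₀
  obtain ⟨b, b', hb, hb', eb⟩ := aux y₁
  obtain ⟨c, c', hc, hc', ec⟩ := aux y₂
  obtain ⟨d, d', hd, hd', ed⟩ := aux y₃
  by_cases h : (y₀ - a / 2) ^ 2 + (y₁ - b / 2) ^ 2 + (y₂ - c / 2) ^ 2 + (y₃ - d / 2) ^ 2 ≤ 1 / 2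
  · exact ⟨a, b, c, d, by omega, by omega, by omega, h⟩
  · exact ⟨a', b', c', d', by omega, by omega, by omega, by linarith⟩

namespace Ico

lemma exists_im (a b c d : ℤ) (h : 2 ∣ a + b + c + d) :
    ∃ t : Ico, (d0 t).im = a ∧ (d1 t).im = b ∧ (d2 t).im = c ∧ (d3 t).im = d := by
  obtain ⟨e, he⟩ : (2 : ℤ) ∣ b - d - a + c := by omega
  refine ⟨⟨0, ⟨0, e⟩, ⟨c, a - c⟩, ⟨d, 0⟩⟩, ?_⟩
  simp only [d0, d1, d2, d3]
  simp
  linarith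

lemma exists_re (a b c d : ℤ) (h1 : 2 ∣ a - b) (h2 : 2 ∣ a - c) (h3 : 2 ∣ a - d) :
    ∃ t : Ico, d0 t = a ∧ d1 t = b ∧ d2 t = c ∧ d3 t = d := by
  obtain ⟨e, he⟩ := h2
  obtain ⟨f, hf⟩ : (2 : ℤ) ∣ b - d := by omega
  obtain ⟨g, hg⟩ : (2 : ℤ) ∣ d - c := by omega
  obtain ⟨k, hk⟩ : (2 : ℤ) ∣ c + d := by omega
  refine ⟨⟨⟨e, g⟩, ⟨f, -k⟩, ⟨0, c⟩, ⟨0, d⟩⟩, ?_, ?_, ?_, ?_⟩ <;> simp only [d0, d1, d2, d3] <;>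
    ext <;> simp <;> linarith

/-- Four points of `ℝ²`, read as a real icosian in both embeddings, are close to an icosian. -/
lemma ico_cover (X Y : Fin 4 → ℝ) : ∃ t : Ico,
    ((X 0 - σ₁ (d0 t) / 2) ^ 2 + (X 1 - σ₁ (d1 t) / 2) ^ 2 + (X 2 - σ₁ (d2 t) / 2) ^ 2 +
      (X 3 - σ₁ (d3 t) / 2) ^ 2) +
    ((Y 0 - σ₂ (d0 t) / 2) ^ 2 + (Y 1 - σ₂ (d1 t) / 2) ^ 2 + (Y 2 - σ₂ (d2 t) / 2) ^ 2 +
      (Y 3 - σ₂ (d3 t) / 2) ^ 2) ≤ 13 / 8 := by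
  have hg := gr_sq
  have hd : 2 * gr - 1 ≠ 0 := by have := gr_lo; linarith
  obtain ⟨Q, hQ⟩ : ∃ Q : Fin 4 → ℝ, ∀ i, Q i * (2 * gr - 1) = X i - Y i :=
    ⟨fun i => (X i - Y i) / (2 * gr - 1), fun i => by field_simp⟩
  obtain ⟨P, hP⟩ : ∃ P : Fin 4 → ℝ, ∀ i, P i = X i - Q i * gr := ⟨_, fun _ => rfl⟩
  have hX : ∀ i, X i = P i + Q i * gr := fun i => by rw [hP]; ring
  have hY : ∀ i, Y i = P i + Q i * (1 - gr) := fun i => by linear_combination hQ i + hX i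
  obtain ⟨a, b, c, d, hpar, hq⟩ := D4_cover (2 * Q 0) (2 * Q 1) (2 * Q 2) (2 * Q 3)
  obtain ⟨t, ht0, ht1, ht2, ht3⟩ := exists_im a b c d hpar
  obtain ⟨a', b', c', d', p1, p2, p3, hp⟩ := hurwitz_cover
    (P 0 + (Q 0 - a / 2) / 2 - (d0 t).re / 2) (P 1 + (Q 1 - b / 2) / 2 - (d1 t).re / 2)
    (P 2 + (Q 2 - c / 2) / 2 - (d2 t).re / 2) (P 3 + (Q 3 - d / 2) / 2 - (d3 t).re / 2)
  obtain ⟨s, hs0, hs1, hs2, hs3⟩ := exists_re a' b' c' d' p1 p2 p3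
  refine ⟨t + s, ?_⟩
  have e0 : d0 (t + s) = d0 t + a' := by rw [← hs0]; simp only [d0, add_x0, add_x2, add_x3]; ring
  have e1 : d1 (t + s) = d1 t + b' := by rw [← hs1]; simp only [d1, add_x1, add_x2, add_x3]; ring
  have e2 : d2 (t + s) = d2 t + c' := by rw [← hs2]; simp only [d2, add_x2]; ring
  have e3 : d3 (t + s) = d3 t + d' := by rw [← hs3]; simp only [d3, add_x3]; ring
  rw [e0, e1, e2, e3]
  simp only [s1_def, s2_def, QuadraticAlgebra.re_add, QuadraticAlgebra.im_add,
    QuadraticAlgebra.re_intCast, QuadraticAlgebra.im_intCast, ht0, ht1, ht2, ht3, hX, hY]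
  push_cast
  have key : ∀ p q r m : ℝ, (p + q * gr - (r + (m + 0) * gr) / 2) ^ 2 +
      (p + q * (1 - gr) - (r + (m + 0) * (1 - gr)) / 2) ^ 2 =
      2 * (p + (q - m / 2) / 2 - r / 2) ^ 2 + 5 / 8 * (2 * q - m) ^ 2 := by
    intro p q r m
    linear_combination (2 * (q - m / 2) ^ 2) * hg
  have k0 := key (P 0) (Q 0) ((d0 t).re + a') a
  have k1 := key (P 1) (Q 1) ((d1 t).re + b') b
  have k2 := key (P 2) (Q 2) ((d2 t).re + c') c
  have k3 := key (P 3) (Q 3) ((d3 t).re + d') d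
  have r0 : P 0 + (Q 0 - a / 2) / 2 - ((d0 t).re + a') / 2 =
    P 0 + (Q 0 - a / 2) / 2 - (d0 t).re / 2 - a' / 2 := by ring
  have r1 : P 1 + (Q 1 - b / 2) / 2 - ((d1 t).re + b') / 2 =
    P 1 + (Q 1 - b / 2) / 2 - (d1 t).re / 2 - b' / 2 := by ring
  have r2 : P 2 + (Q 2 - c / 2) / 2 - ((d2 t).re + c') / 2 =
    P 2 + (Q 2 - c / 2) / 2 - (d2 t).re / 2 - c' / 2 := by ring
  have r3 : P 3 + (Q 3 - d / 2) / 2 - ((d3 t).re + d') / 2 =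
    P 3 + (Q 3 - d / 2) / 2 - (d3 t).re / 2 - d' / 2 := by ring
  rw [r0] at k0
  rw [r1] at k1
  rw [r2] at k2
  rw [r3] at k3
  linarith

/-- Division with remainder by a totally positive scalar. -/
lemma euclid (z : Ico) {m : O} (hm : TP m) (hdvd : m ∣ N z) :
    ∃ (t : Ico) (n : O), TN n ∧ N (z - C m * t) = m * n ∧ nm n < nm m := by
  have hm1 := hm.1
  have hm2 := hm.2
  obtain ⟨t, ht⟩ := ico_cover
    ![σ₁ (d0 z) / (2 * σ₁ m), σ₁ (d1 z) / (2 * σ₁ m), σ₁ (d2 z) / (2 * σ₁ m), σ₁ (d3 z) / (2 * σ₁ m)]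
    ![σ₂ (d0 z) / (2 * σ₂ m), σ₂ (d1 z) / (2 * σ₂ m), σ₂ (d2 z) / (2 * σ₂ m), σ₂ (d3 z) / (2 * σ₂ m)]
  obtain ⟨l, hl⟩ := hdvd
  obtain ⟨n, hn⟩ : ∃ n, N (z - C m * t) = m * n := by
    refine ⟨l - (z * cn t + t * cn z).x0 + m * N t, ?_⟩
    rw [C_mul_def]
    simp only [N, cn, mul_x0, add_x0, sub_x0, sub_x1, sub_x2, sub_x3] at hl ⊢
    linear_combination hl
  refine ⟨t, n, hm.of_mul_tn (hn ▸ N_tn _), hn, ?_⟩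
  have hd : d0 (z - C m * t) = d0 z - m * d0 t ∧ d1 (z - C m * t) = d1 z - m * d1 t ∧
      d2 (z - C m * t) = d2 z - m * d2 t ∧ d3 (z - C m * t) = d3 z - m * d3 t := by
    rw [C_mul_def]
    simp only [d0, d1, d2, d3, sub_x0, sub_x1, sub_x2, sub_x3]
    refine ⟨?_, ?_, ?_, ?_⟩ <;> ring
  have h4 := four_N (z - C m * t)
  rw [hd.1, hd.2.1, hd.2.2.1, hd.2.2.2, hn] at h4
  have h41 := congrArg σ₁ h4
  have h42 := congrArg σ₂ h4
  simp only [map_add, map_sub, map_mul, map_pow, map_ofNat] at h41 h42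
  simp only [Matrix.cons_val] at ht
  have f : ∀ x y m : ℝ, 0 < m → (x / (2 * m) - y / 2) = (x - m * y) / (2 * m) := by
    intro x y m h; field_simp
  simp only [f _ _ _ hm1, f _ _ _ hm2, div_pow, ← add_div, ← h41, ← h42] at ht
  have g : ∀ m n : ℝ, 0 < m → 4 * (m * n) / (2 * m) ^ 2 = n / m := by
    intro m n h; field_simp; ring
  rw [g _ _ hm1, g _ _ hm2] at ht
  have hnTN : TN n := hm.of_mul_tn (hn ▸ N_tn _)
  have u1 : 0 ≤ σ₁ n / σ₁ m := div_nonneg hnTN.1 hm1.le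
  have u2 : 0 ≤ σ₂ n / σ₂ m := div_nonneg hnTN.2 hm2.le
  have hprod : (σ₁ n / σ₁ m) * (σ₂ n / σ₂ m) < 1 := by
    nlinarith [sq_nonneg (σ₁ n / σ₁ m - σ₂ n / σ₂ m)]
  rw [div_mul_div_comm, ← nm_cast, ← nm_cast, div_lt_one (by exact_mod_cast hm.nm_pos)] at hprod
  exact_mod_cast hprod

end Ico
namespace Ico

/-! ### Lipschitz quaternions and the unit group -/

/-- The Lipschitz order `O + O i + O j + O k` inside the icosians. -/
def InL (x : Ico) : Prop := (2 : O) ∣ x.x2 ∧ (2 : O) ∣ x.x3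

lemma InL.mul {x y : Ico} (hx : InL x) (hy : InL y) : InL (x * y) := by
  obtain ⟨⟨a, ha⟩, b, hb⟩ := hx
  obtain ⟨⟨c, hc⟩, d, hd⟩ := hy
  constructor
  · rw [mul_x2, ha, hb, hc, hd]
    exact ⟨x.x0 * c - x.x1 * d + a * y.x0 + b * y.x1 + φ * (2 * a) * c - (2 * a) * d, by ring⟩
  · rw [mul_x3, ha, hb, hc, hd]
    exact ⟨x.x0 * d + x.x1 * c + b * y.x0 - a * y.x1 + φ * (2 * b) * c - (2 * b) * d, by ring⟩

lemma InL.add {x y : Ico} (hx : InL x) (hy : InL y) : InL (x + y) :=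
  ⟨dvd_add hx.1 hy.1, dvd_add hx.2 hy.2⟩

lemma InL.cn {x : Ico} (hx : InL x) : InL (cn x) := ⟨hx.1.neg_right, hx.2.neg_right⟩

lemma inL_C (a : O) : InL (C a) := ⟨dvd_zero _, dvd_zero _⟩

lemma inL_two (x : Ico) : InL (C 2 * x) := by
  rw [C_mul_def]; exact ⟨Dvd.intro _ rfl, Dvd.intro _ rfl⟩

lemma InL.coords {x : Ico} (hx : InL x) : ∃ e : Fin 4 → O,
    2 * e 0 = d0 x ∧ 2 * e 1 = d1 x ∧ 2 * e 2 = d2 x ∧ 2 * e 3 = d3 x := by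
  obtain ⟨⟨s, hs⟩, t, ht⟩ := hx
  refine ⟨![x.x0 + φ * s - t, x.x1 + s + φ * t, (φ - 1) * s, (φ - 1) * t], ?_, ?_, ?_, ?_⟩ <;>
    simp [d0, d1, d2, d3, hs, ht] <;> ring

/-- The residue in `{0, 1}` of a bit. -/
def bit (b : Bool) : ℤ := cond b 1 0

lemma exists_bit (n : ℤ) : ∃ b k, n = bit b + 2 * k := by
  rcases Int.even_or_odd' n with ⟨k, h | h⟩
  · exact ⟨false, k, by simp [bit, h]⟩
  · exact ⟨true, k, by simp [bit, h]; ring⟩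

/-- The standard representative of a residue class modulo `2`. -/
def rep (a b c d e f g h : Bool) : Ico :=
  ⟨⟨bit a, bit b⟩, ⟨bit c, bit d⟩, ⟨bit e, bit f⟩, ⟨bit g, bit h⟩⟩

lemma exists_rep (x : Ico) : ∃ a b c d e f g h y, x = rep a b c d e f g h + C 2 * y := by
  obtain ⟨a, a', ha⟩ := exists_bit x.x0.re
  obtain ⟨b, b', hb⟩ := exists_bit x.x0.im
  obtain ⟨c, c', hc⟩ := exists_bit x.x1.re
  obtain ⟨d, d', hd⟩ := exists_bit x.x1.im
  obtain ⟨e, e', he⟩ := exists_bit x.x2.re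
  obtain ⟨f, f', hf⟩ := exists_bit x.x2.im
  obtain ⟨g, g', hg⟩ := exists_bit x.x3.re
  obtain ⟨h, h', hh⟩ := exists_bit x.x3.im
  refine ⟨a, b, c, d, e, f, g, h, ⟨⟨a', b'⟩, ⟨c', d'⟩, ⟨e', f'⟩, ⟨g', h'⟩⟩, ?_⟩
  rw [C_mul_def]
  ext <;> simp [rep, *]

/-- Icosians of norm `1`, enough of them for the two finite checks below. -/
def units : List Ico :=
  [⟨⟨0, 0⟩, ⟨1, 0⟩, ⟨0, 0⟩, ⟨0, 0⟩⟩, ⟨⟨0, 0⟩, ⟨0, 0⟩, ⟨0, 0⟩, ⟨-1, 0⟩⟩,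
   ⟨⟨0, -1⟩, ⟨0, 0⟩, ⟨1, 0⟩, ⟨0, 0⟩⟩, ⟨⟨1, 0⟩, ⟨0, 0⟩, ⟨0, 0⟩, ⟨1, 0⟩⟩,
   ⟨⟨1, 0⟩, ⟨0, 0⟩, ⟨0, -1⟩, ⟨0, 0⟩⟩, ⟨⟨0, 0⟩, ⟨0, 0⟩, ⟨1, 0⟩, ⟨0, 0⟩⟩,
   ⟨⟨0, 0⟩, ⟨1, 0⟩, ⟨0, 0⟩, ⟨0, -1⟩⟩, ⟨⟨0, 0⟩, ⟨0, 1⟩, ⟨0, 0⟩, ⟨-1, 0⟩⟩,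
   ⟨⟨0, 0⟩, ⟨0, 1⟩, ⟨0, 0⟩, ⟨0, -1⟩⟩, ⟨⟨0, -1⟩, ⟨0, 0⟩, ⟨0, 1⟩, ⟨0, 0⟩⟩,
   ⟨⟨0, 0⟩, ⟨0, 1⟩, ⟨0, -1⟩, ⟨-1, 0⟩⟩, ⟨⟨0, 0⟩, ⟨0, 1⟩, ⟨0, -1⟩, ⟨0, -1⟩⟩,
   ⟨⟨0, 1⟩, ⟨0, 0⟩, ⟨-1, 0⟩, ⟨0, 1⟩⟩, ⟨⟨0, 0⟩, ⟨-1, 0⟩, ⟨1, 0⟩, ⟨0, 1⟩⟩,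
   ⟨⟨1, 0⟩, ⟨0, 0⟩, ⟨0, -1⟩, ⟨1, 0⟩⟩, ⟨⟨-1, -1⟩, ⟨0, 0⟩, ⟨0, 1⟩, ⟨0, -1⟩⟩]

/-- Decidable divisibility by `2` in `ℤ[φ]`. -/
def evenB (x : O) : Bool := x.re % 2 == 0 && x.im % 2 == 0

lemma evenB_iff (x : O) : evenB x = true ↔ 2 ∣ x := by
  rw [two_dvd_iff]; simp only [evenB, Bool.and_eq_true, beq_iff_eq]; omega

lemma units_N : ∀ u ∈ units, (N u).re = 1 ∧ (N u).im = 0 := by decide +kernel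

lemma N_units {u : Ico} (hu : u ∈ units) : N u = 1 := by
  obtain ⟨h1, h2⟩ := units_N u hu
  ext <;> simp [h1, h2]

/-- Every residue class modulo `2` of odd norm is moved into the Lipschitz order by a unit; a finite
check over the `256` classes. -/
lemma check_odd : ∀ a b c d e f g h : Bool, evenB (N (rep a b c d e f g h)) = false →
    ∃ u ∈ units, evenB (rep a b c d e f g h * u).x2 = true ∧
      evenB (rep a b c d e f g h * u).x3 = true := by decide +kernel

/-- The residue classes modulo `2` of pure icosians are conjugated into the Lipschitz order by units;
a finite check over the `256` classes. -/
lemma check_pure : ∀ a b c d e f g h : Bool,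
    evenB (φ * (rep a b c d e f g h).x2 - (rep a b c d e f g h).x3) = true →
    ∃ u ∈ units, evenB (u * rep a b c d e f g h * cn u).x2 = true ∧
      evenB (u * rep a b c d e f g h * cn u).x3 = true := by decide +kernel

/-- An icosian of odd norm is a Lipschitz quaternion up to a unit. -/
lemma exists_unit_inL {x : Ico} (hx : ¬ 2 ∣ N x) : ∃ u, N u = 1 ∧ InL (x * u) := by
  obtain ⟨a, b, c, d, e, f, g, h, y, rfl⟩ := exists_rep x
  obtain ⟨u, hu, h2, h3⟩ := check_odd a b c d e f g h (by
    rw [← Bool.not_eq_true, evenB_iff]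
    generalize rep a b c d e f g h = r at *
    contrapose! hx
    have : N (r + C 2 * y) = N r + 2 * (2 * N y + d0 (r * cn y)) := by
      rw [C_mul_def]
      simp only [N, d0, cn, mul_x0, mul_x2, mul_x3, add_x0, add_x1, add_x2, add_x3]
      have := phi_sq
      grind
    rw [this]
    exact dvd_add hx (Dvd.intro _ rfl))
  refine ⟨u, N_units hu, ?_⟩
  rw [add_mul, mul_assoc]
  rw [evenB_iff] at h2 h3
  exact InL.add ⟨h2, h3⟩ (inL_two _)

/-- A pure icosian is conjugate to a Lipschitz quaternion by a unit. -/
lemma exists_unit_conj {x : Ico} (hx : d0 x = 0) : ∃ u, N u = 1 ∧ InL (u * x * cn u) := by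
  obtain ⟨a, b, c, d, e, f, g, h, y, rfl⟩ := exists_rep x
  obtain ⟨u, hu, h2, h3⟩ := check_pure a b c d e f g h (by
    rw [evenB_iff]
    generalize rep a b c d e f g h = r at *
    rw [C_mul_def] at hx
    simp only [d0, add_x0, add_x2, add_x3] at hx
    exact ⟨-(r.x0 + 2 * y.x0 + φ * y.x2 - y.x3), by linear_combination hx⟩)
  refine ⟨u, N_units hu, ?_⟩
  rw [mul_add, add_mul, ← mul_assoc, ← C_comm, mul_assoc (C 2), mul_assoc (C 2)]
  rw [evenB_iff] at h2 h3
  exact InL.add ⟨h2, h3⟩ (inL_two _)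

/-! ### Factorization of icosians -/

lemma d0_mul_comm (x y : Ico) : d0 (x * y) = d0 (y * x) := by
  simp only [d0, mul_x0, mul_x2, mul_x3]
  have := phi_sq
  grind

lemma d0_C_mul (a : O) (x : Ico) : d0 (C a * x) = a * d0 x := by
  rw [C_mul_def]; simp only [d0]; ring

/-- Every totally positive `D` is the norm of a pure icosian. The rational solution `v / W` given
by the three squares theorem is conjugated to an integral one by a generator of the left ideal
spanned by `W` and `v`, which is principal by the Euclidean algorithm. -/
lemma exists_pure {D : O} (hD : TP D) : ∃ k, d0 k = 0 ∧ N k = D := by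
  obtain ⟨X, Y, Z, W, hW, h⟩ := threeSq hD
  have hf := phi_sq
  obtain ⟨v, hv⟩ : ∃ v : Ico, v = ⟨-φ ^ 2 * Y + φ * Z, X - φ * Y - φ ^ 2 * Z, 2 * φ * Y, 2 * φ * Z⟩ :=
    ⟨_, rfl⟩
  have hv0 : d0 v = 0 := by rw [hv]; simp only [d0]; ring
  have hvN : N v = D * W ^ 2 := by
    rw [← h, hv]; simp only [N]; grind
  have hvv : v * v = C W * (C W * C (-D)) := by
    have h1 : cn v = -v := by
      ext1 <;> simp only [cn, neg_x0, neg_x1, neg_x2, neg_x3]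
      simp only [d0] at hv0
      linear_combination hv0
    have h2 := mul_cn v
    rw [h1, hvN, mul_neg] at h2
    rw [← C_mul, ← C_mul, ← neg_neg (v * v), h2, ← C_neg]
    congr 1; ring
  -- a nonzero element of least norm in the left ideal spanned by `W` and `v`
  obtain ⟨J, hJ⟩ : ∃ J : Ico → Prop, ∀ x, J x ↔ ∃ a b, x = a * C W + b * v := ⟨_, fun _ => Iff.rfl⟩
  have hex : ∃ n : ℕ, ∃ g, J g ∧ g ≠ 0 ∧ nm (N g) = n := by
    refine ⟨(nm (N (C W))).toNat, C W, (hJ _).2 ⟨1, 0, by simp⟩, ?_, ?_⟩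
    · intro h0; exact hW (C_inj h0)
    · rw [Int.toNat_of_nonneg (N_tn _).nm_nonneg]
  classical
  obtain ⟨g, hg, hg0, hgn⟩ := Nat.find_spec hex
  have hmin : ∀ x, J x → nm (N x) < nm (N g) → x = 0 := by
    intro x hx hlt
    by_contra h0
    refine Nat.find_min hex (m := (nm (N x)).toNat) ?_ ⟨x, hx, h0, ?_⟩
    · have := (N_tn x).nm_nonneg; omega
    · rw [Int.toNat_of_nonneg (N_tn _).nm_nonneg]
  have hgTP : TP (N g) := (N_tn g).tp fun h0 => hg0 (N_eq_zero h0)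
  have hgen : ∀ x, J x → ∃ t, x = t * g := by
    intro x hx
    obtain ⟨t, n, -, hn, hlt⟩ := euclid (x * cn g) hgTP (by rw [N_mul, N_cn]; exact Dvd.intro_left _ rfl)
    have e : x * cn g - C (N g) * t = (x - t * g) * cn g := by
      rw [sub_mul, mul_assoc t, mul_cn, C_comm]
    rw [e, N_mul, N_cn, mul_comm] at hn
    have hn := mul_left_cancel₀ hgTP.ne_zero hn
    refine ⟨t, sub_eq_zero.1 (hmin _ ?_ (hn ▸ hlt))⟩
    obtain ⟨a, b, rfl⟩ := (hJ _).1 hx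
    obtain ⟨a', b', h'⟩ := (hJ _).1 hg
    refine (hJ _).2 ⟨a - t * a', b - t * b', ?_⟩
    rw [h']; noncomm_ring
  obtain ⟨a, b, hab⟩ := (hJ _).1 hg
  obtain ⟨k, hk⟩ := hgen (b * C W * C (-D) + a * v) ((hJ _).2 ⟨b * C (-D), a, by
    rw [mul_assoc b, mul_assoc b, ← C_mul, ← C_mul, mul_comm W]⟩)
  have key : g * v = C W * (k * g) := by
    rw [← hk, hab, add_mul, mul_assoc b v v, hvv, mul_add, ← C_comm W a, add_comm,
      C_comm W (b * C W * C (-D))]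
    simp only [mul_assoc]
    rw [C_comm W (C (-D))]
  refine ⟨k, ?_, ?_⟩
  · have h1 := congrArg (fun x => d0 (x * cn g)) key
    simp only [mul_assoc, mul_cn] at h1
    rw [d0_C_mul, ← C_comm, d0_C_mul, d0_mul_comm, mul_assoc, cn_mul_self, ← C_comm, d0_C_mul, hv0,
      mul_zero] at h1
    simpa [hW, hgTP.ne_zero] using h1.symm
  · have h1 := congrArg N key
    rw [N_mul, N_mul, N_mul, N_C, hvN] at h1
    have h2 : (W ^ 2 * N g) * N k = (W ^ 2 * N g) * D := by linear_combination -h1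
    exact mul_left_cancel₀ (mul_ne_zero (pow_ne_zero _ hW) hgTP.ne_zero) h2

/-- An icosian whose norm is divisible by a totally positive `m` has a left factor of norm `m`. -/
lemma exists_factor {m : O} (hm : TP m) (z : Ico) (hz : m ∣ N z) : ∃ g h, z = g * h ∧ N g = m := by
  suffices H : ∀ k : ℕ, ∀ m : O, nm m ≤ k → TP m → ∀ z : Ico, m ∣ N z →
      ∃ g h, z = g * h ∧ N g = m from
    H (nm m).toNat m (by omega) hm z hz
  intro k
  induction k with
  | zero => intro m h hm; have := hm.nm_pos; omega
  | succ k ih =>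
    intro m hk hm z hz
    obtain ⟨t, n, hn, hN, hlt⟩ := euclid z hm hz
    by_cases h0 : n = 0
    -- here `m` divides `z`, and `m` is itself the norm of an icosian
    · rw [h0, mul_zero] at hN
      have hzt := sub_eq_zero.1 (N_eq_zero hN)
      obtain ⟨g, -, hg⟩ := exists_pure hm
      exact ⟨g, cn g * t, by rw [← mul_assoc, mul_cn, hg, hzt], hg⟩
    · obtain ⟨g, h, hgh, hg⟩ := ih n (by omega) (hn.tp h0) (cn (z - C m * t))
        (by rw [N_cn, hN]; exact Dvd.intro_left _ rfl)
      have hh : N h = m := by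
        have := congrArg N hgh
        rw [N_cn, hN, N_mul, hg, mul_comm] at this
        exact (mul_left_cancel₀ h0 this).symm
      refine ⟨cn h, cn g + h * t, ?_, by rw [N_cn, hh]⟩
      have := congrArg cn hgh
      rw [cn_cn, cn_mul] at this
      rw [mul_add, ← this, ← mul_assoc, cn_mul_self, hh]
      abel

end Ico

lemma two_dvd_mul {a b : O} (h : 2 ∣ a * b) (ha : ¬ 2 ∣ a) : 2 ∣ b := by
  have h2 := two_dvd_iff.1 h
  rw [two_dvd_iff] at ha ⊢
  simp only [QuadraticAlgebra.re_mul, QuadraticAlgebra.im_mul, ← even_iff_two_dvd, Int.even_add,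
    Int.even_mul, one_mul] at *
  tauto

open Ico in
/-- A totally nonnegative binary form over `ℤ[φ]` with odd leading coefficient is a sum of four
squares of linear forms. -/
lemma four_linear {a b c : O} (ha : TN a) (hd : TN (a * c - b ^ 2)) (hodd : ¬ 2 ∣ a) :
    ∃ x y : Fin 4 → O, ∑ i, x i ^ 2 = a ∧ ∑ i, x i * y i = b ∧ ∑ i, y i ^ 2 = c := by
  have haTP : TP a := ha.tp fun h => hodd (h ▸ dvd_zero _)
  obtain ⟨v, hv0, hvN⟩ : ∃ v, d0 v = 0 ∧ N v = a * c - b ^ 2 := by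
    by_cases h0 : a * c - b ^ 2 = 0
    · exact ⟨0, by simp [d0], by simp [N, h0]⟩
    · exact exists_pure (hd.tp h0)
  obtain ⟨w, hw, hwL⟩ := exists_unit_conj hv0
  obtain ⟨v', hv'⟩ : ∃ v', v' = w * v * cn w := ⟨_, rfl⟩
  rw [← hv'] at hwL
  have hv0' : d0 v' = 0 := by
    rw [hv', d0_mul_comm, ← mul_assoc, cn_mul_self, hw, C_one, one_mul, hv0]
  have hvN' : N v' = a * c - b ^ 2 := by rw [hv', N_mul, N_mul, N_cn, hw, hvN]; ring
  -- `z` has scalar part `b` and norm `a c`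
  obtain ⟨z, hz⟩ : ∃ z, z = C b + v' := ⟨_, rfl⟩
  have hzL : InL z := hz ▸ (inL_C b).add hwL
  have hz0 : d0 z = 2 * b := by
    rw [hz]
    simp only [d0, add_x0, add_x2, add_x3, C_x0, C_x2, C_x3] at hv0' ⊢
    linear_combination hv0'
  have hzN : N z = a * c := by
    have : N (C b + v') = b ^ 2 + N v' + b * d0 v' := by
      simp only [N, d0, add_x0, add_x1, add_x2, add_x3, C_x0, C_x1, C_x2, C_x3]; ring
    rw [hz, this, hvN', hv0']; ring
  obtain ⟨g, h, hgh, hg⟩ := exists_factor haTP z (hzN ▸ Dvd.intro _ rfl)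
  obtain ⟨u, hu, huL⟩ := exists_unit_inL (x := g) (hg.symm ▸ hodd)
  obtain ⟨g', hg'⟩ : ∃ g', g' = g * u := ⟨_, rfl⟩
  obtain ⟨h', hh'⟩ : ∃ h', h' = cn u * h := ⟨_, rfl⟩
  rw [← hg'] at huL
  have hgN : N g' = a := by rw [hg', N_mul, hg, hu, mul_one]
  have hz' : z = g' * h' := by
    rw [hg', hh', mul_assoc, ← mul_assoc u, mul_cn, hu, C_one, one_mul, hgh]
  have hhN : N h' = c := by
    have := congrArg N hz'
    rw [hzN, N_mul, hgN] at this
    exact (mul_left_cancel₀ haTP.ne_zero this).symm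
  have hhL : InL h' := by
    have h1 : C a * h' = cn g' * z := by rw [hz', ← mul_assoc, cn_mul_self, hgN]
    have h2 := huL.cn.mul hzL
    rw [← h1, C_mul_def] at h2
    exact ⟨two_dvd_mul h2.1 hodd, two_dvd_mul h2.2 hodd⟩
  -- `x` and `y` are the coordinates of the conjugate of the left factor and of the right factor:
  -- their inner product is the scalar part `b` of the product `z`
  obtain ⟨x, x0, x1, x2, x3⟩ := huL.cn.coords
  obtain ⟨y, y0, y1, y2, y3⟩ := hhL.coords
  have ex := four_N (cn g')
  have ey := four_N h'
  have exy := four_N (cn g' + h')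
  have hs : N (cn g' + h') = N g' + N h' + d0 (g' * h') := by
    have := phi_sq
    simp only [N, d0, cn, mul_x0, mul_x2, mul_x3, add_x0, add_x1, add_x2, add_x3]
    grind
  have a0 : d0 (cn g' + h') = 2 * x 0 + 2 * y 0 := by rw [x0, y0]; simp only [d0, add_x0, add_x2, add_x3]; ring
  have a1 : d1 (cn g' + h') = 2 * x 1 + 2 * y 1 := by rw [x1, y1]; simp only [d1, add_x1, add_x2, add_x3]; ring
  have a2 : d2 (cn g' + h') = 2 * x 2 + 2 * y 2 := by rw [x2, y2]; simp only [d2, add_x2]; ring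
  have a3 : d3 (cn g' + h') = 2 * x 3 + 2 * y 3 := by rw [x3, y3]; simp only [d3, add_x3]; ring
  rw [hs, ← hz', hz0, a0, a1, a2, a3, hgN, hhN] at exy
  rw [N_cn, hgN, ← x0, ← x1, ← x2, ← x3] at ex
  rw [hhN, ← y0, ← y1, ← y2, ← y3] at ey
  have h4 : (4 : O) ≠ 0 := by exact_mod_cast (tp_nat (n := 4) (by norm_num)).ne_zero
  have h8 : (8 : O) ≠ 0 := by exact_mod_cast (tp_nat (n := 8) (by norm_num)).ne_zero
  refine ⟨x, y, ?_, ?_, ?_⟩ <;> simp only [Fin.sum_univ_four]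
  · apply mul_left_cancel₀ h4; linear_combination -ex
  · apply mul_left_cancel₀ h8; linear_combination -exy + ex + ey
  · apply mul_left_cancel₀ h4; linear_combination -ey


/-! ### Sums of squares of binary linear forms: five suffice -/

/-- The form `(a, b, c)` is a sum of `k` squares of linear forms over `ℤ[φ]`. -/
def Rep (k : ℕ) (a b c : O) : Prop :=
  ∃ x y : Fin k → O, ∑ i, x i ^ 2 = a ∧ ∑ i, x i * y i = b ∧ ∑ i, y i ^ 2 = c

lemma Rep.swap {k : ℕ} {a b c : O} (h : Rep k a b c) : Rep k c b a := by
  obtain ⟨x, y, hx, hxy, hy⟩ := h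
  exact ⟨y, x, hy, by simpa only [mul_comm] using hxy, hx⟩

lemma cauchy_tn {k : ℕ} (x y : Fin k → O) :
    TN ((∑ i, x i ^ 2) * (∑ i, y i ^ 2) - (∑ i, x i * y i) ^ 2) := by
  constructor
  · simpa using Finset.sum_mul_sq_le_sq_mul_sq Finset.univ (fun i => σ₁ (x i)) (fun i => σ₁ (y i))
  · simpa using Finset.sum_mul_sq_le_sq_mul_sq Finset.univ (fun i => σ₂ (x i)) (fun i => σ₂ (y i))

lemma sum_sq_tn {k : ℕ} (x : Fin k → O) : TN (∑ i, x i ^ 2) := by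
  constructor <;> simp only [map_sum, map_pow] <;> positivity

lemma two_dvd_sum_sq {k : ℕ} (x : Fin k → O) (h : 2 ∣ ∑ i, x i ^ 2) : 2 ∣ ∑ i, x i := by
  have h1 : (2 : O) ∣ (∑ i, x i) ^ 2 - ∑ i, x i ^ 2 := by
    clear h
    induction k with
    | zero => simp
    | succ k ih =>
      rw [Fin.sum_univ_succ, Fin.sum_univ_succ]
      obtain ⟨t, ht⟩ := ih fun i => x i.succ
      exact ⟨x 0 * (∑ i : Fin k, x i.succ) + t, by linear_combination ht⟩
  have h2 := dvd_add h1 h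
  rw [sub_add_cancel, pow_two] at h2
  by_contra h3
  exact h3 (two_dvd_mul h2 h3)

/-- Six squares reduce to five as soon as some `x j` is odd: one of the six linear forms can be
split off so that the remaining form has odd leading coefficient. -/
lemma rep_five_of_odd (x y : Fin 6 → O) (h : ∃ j, ¬ 2 ∣ x j) :
    Rep 5 (∑ i, x i ^ 2) (∑ i, x i * y i) (∑ i, y i ^ 2) := by
  obtain ⟨j, hj⟩ : ∃ j : Fin 6, ¬ 2 ∣ ∑ i : Fin 5, x (j.succAbove i) := by
    by_contra! hall
    obtain ⟨j, hj⟩ := h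
    have hs : ∀ j, ∑ i, x i = x j + ∑ i : Fin 5, x (j.succAbove i) := fun j =>
      Fin.sum_univ_succAbove x j
    choose t ht using hall
    have hxj : ∀ j, x j = (∑ i, x i) - 2 * t j := fun j => by rw [hs j, ht j]; ring
    have : ∑ j, x j = 6 * (∑ i, x i) - 2 * ∑ j, t j := by
      conv_lhs => rw [Finset.sum_congr rfl fun j _ => hxj j]
      rw [Finset.sum_sub_distrib, ← Finset.mul_sum]
      simp
    apply hj
    rw [hxj j]
    exact ⟨3 * (∑ i, x i) - ∑ j, t j - t j, by linear_combination this⟩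
  have hodd : ¬ 2 ∣ ∑ i : Fin 5, x (j.succAbove i) ^ 2 := fun h =>
    hj (two_dvd_sum_sq (fun i => x (j.succAbove i)) h)
  obtain ⟨x', y', h1, h2, h3⟩ := four_linear (sum_sq_tn fun i => x (j.succAbove i))
    (cauchy_tn (fun i => x (j.succAbove i)) fun i => y (j.succAbove i)) hodd
  refine ⟨Fin.cons (x j) x', Fin.cons (y j) y', ?_, ?_, ?_⟩
  · rw [Fin.sum_univ_succ, Fin.sum_univ_succAbove _ j, ← h1]; simp
  · rw [Fin.sum_univ_succ, Fin.sum_univ_succAbove _ j, ← h2]; simp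
  · rw [Fin.sum_univ_succ, Fin.sum_univ_succAbove _ j, ← h3]; simp

/-- The sum of the squares of all integer coordinates; it drops when a common factor `2` is
removed. -/
def size (x : Fin 6 → O) : ℤ := ∑ i, ((x i).re ^ 2 + (x i).im ^ 2)

lemma size_nonneg (x : Fin 6 → O) : 0 ≤ size x := by unfold size; positivity

lemma size_eq_zero {x : Fin 6 → O} (h : size x = 0) : x = 0 := by
  unfold size at h
  rw [Finset.sum_eq_zero_iff_of_nonneg fun i _ => by positivity] at h
  funext i
  have := h i (Finset.mem_univ i)
  ext <;> simp <;> nlinarith [sq_nonneg (x i).re, sq_nonneg (x i).im]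

lemma size_two (x : Fin 6 → O) : size (fun i => 2 * x i) = 4 * size x := by
  unfold size
  rw [Finset.mul_sum]
  refine Finset.sum_congr rfl fun i _ => ?_
  simp; ring

/-- Six squares reduce to five: a common factor `2` of all coefficients can be removed, and
otherwise `rep_five_of_odd` applies to the form or to the form with its variables exchanged. -/
lemma rep_five_of_six (x y : Fin 6 → O) :
    Rep 5 (∑ i, x i ^ 2) (∑ i, x i * y i) (∑ i, y i ^ 2) := by
  suffices H : ∀ k : ℕ, ∀ x y : Fin 6 → O, size x + size y ≤ k →
      Rep 5 (∑ i, x i ^ 2) (∑ i, x i * y i) (∑ i, y i ^ 2) from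
    H (size x + size y).toNat x y (by omega)
  intro k
  induction k with
  | zero =>
    intro x y h
    have := size_nonneg x
    have := size_nonneg y
    rw [size_eq_zero (x := x) (by omega), size_eq_zero (x := y) (by omega)]
    exact ⟨0, 0, by simp, by simp, by simp⟩
  | succ k ih =>
    intro x y h
    by_cases hx : ∃ j, ¬ 2 ∣ x j
    · exact rep_five_of_odd x y hx
    by_cases hy : ∃ j, ¬ 2 ∣ y j
    · simpa only [mul_comm] using (rep_five_of_odd y x hy).swap
    push Not at hx hy
    choose x' hx' using hx
    choose y' hy' using hy
    obtain rfl : x = fun i => 2 * x' i := funext hx'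
    obtain rfl : y = fun i => 2 * y' i := funext hy'
    rw [size_two, size_two] at h
    have := size_nonneg x'
    have := size_nonneg y'
    obtain ⟨u, v, h1, h2, h3⟩ := ih x' y' (by omega)
    refine ⟨fun i => 2 * u i, fun i => 2 * v i, ?_, ?_, ?_⟩
    · simp only [mul_pow, ← Finset.mul_sum, h1]
    · have e : ∀ a b : O, 2 * a * (2 * b) = 4 * (a * b) := fun a b => by ring
      simp only [e, ← Finset.mul_sum, h2]
    · simp only [mul_pow, ← Finset.mul_sum, h3]

/-- Any sum of squares of linear forms over `ℤ[φ]` is a sum of five of them. -/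
lemma rep_five (n : ℕ) (x y : Fin n → O) :
    Rep 5 (∑ i, x i ^ 2) (∑ i, x i * y i) (∑ i, y i ^ 2) := by
  induction n with
  | zero => exact ⟨0, 0, by simp, by simp, by simp⟩
  | succ n ih =>
    obtain ⟨u, v, h1, h2, h3⟩ := ih (fun i => x i.succ) (fun i => y i.succ)
    have := rep_five_of_six (Fin.cons (x 0) u) (Fin.cons (y 0) v)
    rw [Fin.sum_univ_succ (n := 5), Fin.sum_univ_succ (n := 5), Fin.sum_univ_succ (n := 5)] at this
    simp only [Fin.cons_zero, Fin.cons_succ, h1, h2, h3] at this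
    simpa only [Fin.sum_univ_succ (n := n)] using this


/-! ### Forms that are not sums of four squares of linear forms -/

/-- The contradiction in coordinates: `e₁, e₂ = ±1` are the nonzero entries of `y`, and
`pᵢ + qᵢ φ` are the entries of `x`. -/
lemma parity_core {e₁ e₂ p₁ p₂ p₃ p₄ q₁ q₂ q₃ q₄ k l : ℤ} (he₁ : e₁ ^ 2 = 1) (he₂ : e₂ ^ 2 = 1)
    (h1 : e₁ * p₁ + e₂ * p₂ = 2 * k + 1) (h2 : e₁ * q₁ + e₂ * q₂ = 0)
    (h3 : p₁ ^ 2 + q₁ ^ 2 + (p₂ ^ 2 + q₂ ^ 2) + (p₃ ^ 2 + q₃ ^ 2) + (p₄ ^ 2 + q₄ ^ 2) = 2 * l)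
    (h4 : (2 * p₁ * q₁ + q₁ ^ 2) + (2 * p₂ * q₂ + q₂ ^ 2) + (2 * p₃ * q₃ + q₃ ^ 2) +
      (2 * p₄ * q₄ + q₄ ^ 2) = 2) : False := by
  obtain ⟨P, hP⟩ : ∃ P, e₁ * p₁ = P := ⟨_, rfl⟩
  obtain ⟨P', hP'⟩ : ∃ P, e₂ * p₂ = P := ⟨_, rfl⟩
  obtain ⟨Q, hQ⟩ : ∃ P, e₁ * q₁ = P := ⟨_, rfl⟩
  obtain ⟨Q', hQ'⟩ : ∃ P, e₂ * q₂ = P := ⟨_, rfl⟩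
  obtain rfl : p₁ = e₁ * P := by linear_combination e₁ * hP - p₁ * he₁
  obtain rfl : p₂ = e₂ * P' := by linear_combination e₂ * hP' - p₂ * he₂
  obtain rfl : q₁ = e₁ * Q := by linear_combination e₁ * hQ - q₁ * he₁
  obtain rfl : q₂ = e₂ * Q' := by linear_combination e₂ * hQ' - q₂ * he₂
  obtain rfl : P' = 2 * k + 1 - P := by linear_combination h1 - hP - hP'
  obtain rfl : Q' = -Q := by linear_combination h2 - hQ - hQ'
  have h3' : P ^ 2 + Q ^ 2 + ((2 * k + 1 - P) ^ 2 + Q ^ 2) + (p₃ ^ 2 + q₃ ^ 2) +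
      (p₄ ^ 2 + q₄ ^ 2) = 2 * l := by
    linear_combination h3 - (P ^ 2 + Q ^ 2) * he₁ - ((2 * k + 1 - P) ^ 2 + Q ^ 2) * he₂
  have h4' : (2 * P * Q + Q ^ 2) + (-2 * (2 * k + 1 - P) * Q + Q ^ 2) + (2 * p₃ * q₃ + q₃ ^ 2) +
      (2 * p₄ * q₄ + q₄ ^ 2) = 2 := by
    linear_combination h4 - (2 * P * Q + Q ^ 2) * he₁ - (-2 * (2 * k + 1 - P) * Q + Q ^ 2) * he₂
  clear h3 h4 h1 h2 hP hP' hQ hQ' he₁ he₂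
  have hpar : (q₃ - q₄) % 2 = 0 := by
    have : Even (q₃ ^ 2 + q₄ ^ 2) := ⟨1 - P * Q - Q ^ 2 + (2 * k + 1 - P) * Q - p₃ * q₃ - p₄ * q₄,
      by linear_combination h4'⟩
    have : Even (q₃ - q₄) := by
      simp only [Int.even_add, Int.even_sub, Int.even_pow] at *; tauto
    exact Int.even_iff.1 this
  have hQ : Even (Q ^ 2 - Q) := by simp [Int.even_sub, Int.even_pow]
  obtain ⟨w, hw⟩ := hQ
  rcases Int.even_or_odd' q₃ with ⟨s, rfl | rfl⟩
  · obtain ⟨t, rfl⟩ : ∃ t, q₄ = 2 * t := ⟨q₄ / 2, by omega⟩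
    have : 2 * (2 * (P * Q + w - k * Q + p₃ * s + s ^ 2 + p₄ * t + t ^ 2)) = 2 := by
      linear_combination h4' - 2 * hw
    omega
  · obtain ⟨t, rfl⟩ : ∃ t, q₄ = 2 * t + 1 := ⟨q₄ / 2, by omega⟩
    obtain ⟨r, hr⟩ : ∃ r, r = -(P * Q + w - k * Q + p₃ * s + s ^ 2 + s + p₄ * t + t ^ 2 + t) :=
      ⟨_, rfl⟩
    have e1 : 2 * (p₃ + p₄ - 2 * r) = 0 := by
      rw [hr]; linear_combination h4' - 2 * hw
    obtain rfl : p₄ = 2 * r - p₃ := by omega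
    have : 2 * (P ^ 2 + 2 * k ^ 2 + 2 * k - (2 * k + 1) * P + Q ^ 2 + p₃ ^ 2 - 2 * r * p₃ +
        2 * r ^ 2 + 2 * s ^ 2 + 2 * s + 2 * t ^ 2 + 2 * t + 1) + 1 = 2 * l := by
      linear_combination h3'
    omega

lemma four_sq_zero {a b c d : ℤ} (h : a ^ 2 + b ^ 2 + c ^ 2 + d ^ 2 = 0) :
    a = 0 ∧ b = 0 ∧ c = 0 ∧ d = 0 := by
  have ha := sq_nonneg a
  have hb := sq_nonneg b
  have hc := sq_nonneg c
  have hd := sq_nonneg d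
  refine ⟨?_, ?_, ?_, ?_⟩ <;> apply pow_eq_zero_iff two_ne_zero |>.1 <;> omega

/-- In a sum of four squares with `∑ yᵢ² = 2`, exactly two of the `yᵢ` are nonzero, and these are
`±1`; the remaining two conditions then contradict each other. -/
lemma parity (k : ℤ) (x y : Fin 4 → O) (hx : ∑ i, x i ^ 2 = ((2 * k ^ 2 + 2 * k + 4 : ℤ) : O) + 2 * φ)
    (hxy : ∑ i, x i * y i = ((2 * k + 1 : ℤ) : O)) (hy : ∑ i, y i ^ 2 = 2) : False := by
  simp only [Fin.sum_univ_four] at hx hxy hy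
  have y1 := congrArg QuadraticAlgebra.re hy
  have y2 := congrArg QuadraticAlgebra.im hy
  have x1 := congrArg QuadraticAlgebra.re hx
  have x2 := congrArg QuadraticAlgebra.im hx
  have z1 := congrArg QuadraticAlgebra.re hxy
  have z2 := congrArg QuadraticAlgebra.im hxy
  simp [pow_two, -Int.cast_add, -Int.cast_mul] at x1 x2 y1 y2 z1 z2
  generalize (x 0).re = p₀, (x 1).re = p₁, (x 2).re = p₂, (x 3).re = p₃ at *
  generalize (x 0).im = q₀, (x 1).im = q₁, (x 2).im = q₂, (x 3).im = q₃ at *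
  generalize (y 0).re = u₀, (y 1).re = u₁, (y 2).re = u₂, (y 3).re = u₃ at *
  generalize (y 0).im = v₀, (y 1).im = v₁, (y 2).im = v₂, (y 3).im = v₃ at *
  have hv : v₀ ^ 2 + v₁ ^ 2 + v₂ ^ 2 + v₃ ^ 2 = 0 := by
    by_contra hne
    obtain ⟨w, hw⟩ : ∃ w, v₀ ^ 2 + v₁ ^ 2 + v₂ ^ 2 + v₃ ^ 2 = 2 * w :=
      ⟨-(u₀ * v₀ + u₁ * v₁ + u₂ * v₂ + u₃ * v₃), by linear_combination y2⟩
    have hu : u₀ ^ 2 + u₁ ^ 2 + u₂ ^ 2 + u₃ ^ 2 = 2 - 2 * w := by linear_combination y1 - hw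
    have p1 : 0 ≤ v₀ ^ 2 + v₁ ^ 2 + v₂ ^ 2 + v₃ ^ 2 := by positivity
    have p2 : 0 ≤ u₀ ^ 2 + u₁ ^ 2 + u₂ ^ 2 + u₃ ^ 2 := by positivity
    obtain rfl : w = 1 := by omega
    obtain ⟨hu0, hu1, hu2, hu3⟩ := four_sq_zero (hu.trans (by norm_num))
    subst hu0 hu1 hu2 hu3
    have : v₀ ^ 2 + v₁ ^ 2 + v₂ ^ 2 + v₃ ^ 2 = 0 := by linear_combination y2
    omega
  obtain ⟨hv0, hv1, hv2, hv3⟩ := four_sq_zero hv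
  subst hv0 hv1 hv2 hv3
  have hz : ∀ u : ℤ, u ^ 2 ≤ 2 → u = 0 ∨ u ^ 2 = 1 := fun u h => by
    have h1 : u < 2 := by nlinarith
    have h2 : -2 < u := by nlinarith
    interval_cases u <;> simp
  have hu : u₀ ^ 2 + u₁ ^ 2 + u₂ ^ 2 + u₃ ^ 2 = 2 := by linear_combination y1
  have s0 := sq_nonneg u₀
  have s1 := sq_nonneg u₁
  have s2 := sq_nonneg u₂
  have s3 := sq_nonneg u₃
  rcases hz u₀ (by omega) with rfl | h0 <;> rcases hz u₁ (by omega) with rfl | h1 <;>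
    rcases hz u₂ (by omega) with rfl | h2 <;> rcases hz u₃ (by omega) with rfl | h3 <;> try omega
  · exact parity_core (e₁ := u₂) (e₂ := u₃) (p₁ := p₂) (p₂ := p₃) (p₃ := p₀) (p₄ := p₁) (q₁ := q₂)
      (q₂ := q₃) (q₃ := q₀) (q₄ := q₁) (k := k) (l := k ^ 2 + k + 2) h2 h3
      (by linear_combination z1) (by linear_combination z2) (by linear_combination x1)
      (by linear_combination x2)
  · exact parity_core (e₁ := u₁) (e₂ := u₃) (p₁ := p₁) (p₂ := p₃) (p₃ := p₀) (p₄ := p₂) (q₁ := q₁)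
      (q₂ := q₃) (q₃ := q₀) (q₄ := q₂) (k := k) (l := k ^ 2 + k + 2) h1 h3
      (by linear_combination z1) (by linear_combination z2) (by linear_combination x1)
      (by linear_combination x2)
  · exact parity_core (e₁ := u₁) (e₂ := u₂) (p₁ := p₁) (p₂ := p₂) (p₃ := p₀) (p₄ := p₃) (q₁ := q₁)
      (q₂ := q₂) (q₃ := q₀) (q₄ := q₃) (k := k) (l := k ^ 2 + k + 2) h1 h2
      (by linear_combination z1) (by linear_combination z2) (by linear_combination x1)
      (by linear_combination x2)
  · exact parity_core (e₁ := u₀) (e₂ := u₃) (p₁ := p₀) (p₂ := p₃) (p₃ := p₁) (p₄ := p₂) (q₁ := q₀)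
      (q₂ := q₃) (q₃ := q₁) (q₄ := q₂) (k := k) (l := k ^ 2 + k + 2) h0 h3
      (by linear_combination z1) (by linear_combination z2) (by linear_combination x1)
      (by linear_combination x2)
  · exact parity_core (e₁ := u₀) (e₂ := u₂) (p₁ := p₀) (p₂ := p₂) (p₃ := p₁) (p₄ := p₃) (q₁ := q₀)
      (q₂ := q₂) (q₃ := q₁) (q₄ := q₃) (k := k) (l := k ^ 2 + k + 2) h0 h2
      (by linear_combination z1) (by linear_combination z2) (by linear_combination x1)
      (by linear_combination x2)
  · exact parity_core (e₁ := u₀) (e₂ := u₁) (p₁ := p₀) (p₂ := p₁) (p₃ := p₂) (p₄ := p₃) (q₁ := q₀)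
      (q₂ := q₁) (q₃ := q₂) (q₄ := q₃) (k := k) (l := k ^ 2 + k + 2) h0 h1
      (by linear_combination z1) (by linear_combination z2) (by linear_combination x1)
      (by linear_combination x2)

/-- The case `m ≡ 1 mod 4`, with `M = (m - 1) / 4`. Total nonnegativity of
`∑ xᵢ²` and `∑ yᵢ²` leaves `∑ yᵢ² = 0`, contrary to the Cauchy–Schwarz inequality, and `∑ yᵢ² = 2`,
which `parity` excludes. -/
lemma lower_one {M : ℤ} (hM : 3 ≤ M) (x y : Fin 4 → O)
    (h1 : ∑ i, x i ^ 2 + M * ∑ i, y i ^ 2 = 2 * M + 4 + 2 * φ)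
    (h2 : 2 * ∑ i, x i * y i + ∑ i, y i ^ 2 = 4) : False := by
  have hx := sum_sq_tn x
  have hy := sum_sq_tn y
  have hc := cauchy_tn x y
  have hpar := fun k => parity k x y
  generalize ∑ i, x i ^ 2 = a at *
  generalize ∑ i, y i ^ 2 = c at *
  obtain ⟨e, he⟩ : ∃ e, ∑ i, x i * y i = 2 - e := ⟨2 - ∑ i, x i * y i, by ring⟩
  rw [he] at h2 hc hpar
  obtain rfl : c = 2 * e := by linear_combination h2
  obtain rfl : a = 2 * M + 4 + 2 * φ - M * (2 * e) := by linear_combination h1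
  have hM' : (3 : ℝ) ≤ M := by exact_mod_cast hM
  obtain ⟨x1, x2⟩ := hx
  obtain ⟨y1, y2⟩ := hy
  simp only [map_sub, map_add, map_mul, map_ofNat, map_intCast, s1_phi, s2_phi] at x1 x2 y1 y2
  have g1 := gr_lo
  have g2 := gr_hi
  have u1 : σ₁ e ≤ 2.2061 := by
    by_contra! h
    nlinarith
  have u2 : σ₂ e ≤ 1.5 := by
    by_contra! h
    nlinarith
  rw [s1_def] at u1 y1
  rw [s2_def] at u2 y2
  have him : e.im = 0 := by
    have i1 : (e.im : ℝ) < 1 := by nlinarith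
    have i2 : (-1 : ℝ) < e.im := by nlinarith
    have i1 : e.im < 1 := by exact_mod_cast i1
    have i2 : -1 < e.im := by exact_mod_cast i2
    omega
  simp only [him, Int.cast_zero, zero_mul, add_zero] at u1 u2 y1 y2
  have hre : e.re = 0 ∨ e.re = 1 := by
    have i1 : (e.re : ℝ) < 2 := by linarith
    have i2 : (-1 : ℝ) < e.re := by linarith
    have i1 : e.re < 2 := by exact_mod_cast i1
    have i2 : -1 < e.re := by exact_mod_cast i2
    omega
  rcases hre with hre | hre
  · obtain rfl : e = 0 := by ext <;> simp [him, hre]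
    have := hc.1
    simp only [map_sub, map_zero, mul_zero, map_pow, map_ofNat, sub_zero] at this
    norm_num at this
  · obtain rfl : e = 1 := by ext <;> simp [him, hre]
    refine hpar 0 ?_ ?_ ?_
    · push_cast; ring
    · push_cast; ring
    · ring

/-- The case `m ≢ 1 mod 4`. The form is `l₁² + l₂² + 1 + 2 φ²` evaluated at `√m`, with
`b = 2 k + 1` the sum of the constant terms of `l₁` and `l₂`. With `c = ∑ yᵢ²`, the Cauchy–Schwarz
inequality in the two real embeddings confines `c` to `2 - φ < σ₁ c < 2 + φ` and `1 < σ₂ c < 3`, which leaves only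
`c = 2`; this is excluded by `parity`. -/
lemma lower_two {m k : ℤ} (hm : 11 ≤ m) (hb1 : 2 * m + 5 ≤ (2 * k + 1) ^ 2)
    (hb2 : (2 * k + 1) ^ 2 ≤ 6 * m - 14) (hb3 : 1000 * (2 * k + 1) ^ 2 ≤ 7236 * m - 30200)
    (x y : Fin 4 → O)
    (h1 : ∑ i, x i ^ 2 + m * ∑ i, y i ^ 2 = ((2 * m + (2 * k ^ 2 + 2 * k + 4) : ℤ) : O) + 2 * φ)
    (h2 : ∑ i, x i * y i = ((2 * k + 1 : ℤ) : O)) : False := by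
  have hy := sum_sq_tn y
  have hc := cauchy_tn x y
  have hpar := parity k x y
  rw [h2] at hc hpar
  generalize ∑ i, x i ^ 2 = a at *
  generalize ∑ i, y i ^ 2 = c at *
  obtain rfl : a = ((2 * m + (2 * k ^ 2 + 2 * k + 4) : ℤ) : O) + 2 * φ - m * c := by
    linear_combination h1
  obtain ⟨y1, y2⟩ := hy
  obtain ⟨c1, c2⟩ := hc
  simp only [map_sub, map_add, map_mul, map_pow, map_ofNat, map_intCast, s1_phi, s2_phi] at c1 c2
  have g1 := gr_lo
  have g2 := gr_hi
  have gs := gr_sq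
  obtain ⟨B, hB⟩ : ∃ B : ℝ, B = (2 * k + 1) ^ 2 := ⟨_, rfl⟩
  obtain ⟨μ, hμ⟩ : ∃ μ : ℝ, μ = m := ⟨_, rfl⟩
  have b0 : 11 ≤ μ := by rw [hμ]; exact_mod_cast hm
  have b1 : 2 * μ + 5 ≤ B := by rw [hB, hμ]; exact_mod_cast hb1
  have b2 : B ≤ 6 * μ - 14 := by rw [hB, hμ]; exact_mod_cast hb2
  have b3 : 1000 * B ≤ 7236 * μ - 30200 := by rw [hB, hμ]; exact_mod_cast hb3
  have c1' : B ≤ (2 * μ + (B + 7) / 2 + 2 * gr - μ * σ₁ c) * σ₁ c := by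
    rw [hB, hμ]; push_cast at c1; linarith
  have c2' : B ≤ (2 * μ + (B + 7) / 2 + 2 * (1 - gr) - μ * σ₂ c) * σ₂ c := by
    rw [hB, hμ]; push_cast at c2; linarith
  have up : ∀ E t s : ℝ, E ≤ 2 * μ * t → (E - μ * t) * t < B → B ≤ (E - μ * s) * s → s < t := by
    intro E t s h1 h2 h3
    by_contra! h
    nlinarith [mul_nonneg (sub_nonneg.2 h) (sub_nonneg.2 h1),
      mul_nonneg (show 0 ≤ μ by linarith) (sq_nonneg (s - t))]
  have down : ∀ E t s : ℝ, 2 * μ * t ≤ E → (E - μ * t) * t < B → B ≤ (E - μ * s) * s → t < s := by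
    intro E t s h1 h2 h3
    by_contra! h
    nlinarith [mul_nonneg (sub_nonneg.2 h) (sub_nonneg.2 h1),
      mul_nonneg (show 0 ≤ μ by linarith) (sq_nonneg (s - t))]
  have m1 : 0 ≤ (gr - 1.618) * μ := mul_nonneg (by linarith) (by linarith)
  have m2 : 0 ≤ (1.6181 - gr) * μ := mul_nonneg (by linarith) (by linarith)
  have m3 : 0 ≤ (gr - 1.618) * B := mul_nonneg (by linarith) (by linarith)
  have m4 : 0 ≤ (1.6181 - gr) * B := mul_nonneg (by linarith) (by linarith)
  have gm : μ * gr ^ 2 = μ * gr + μ := by rw [gs]; ring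
  have u1 : σ₁ c < gr + 2 := by
    refine up _ _ _ ?_ ?_ c1' <;> linarith
  have u2 : 2 - gr < σ₁ c := by
    refine down _ _ _ ?_ ?_ c1' <;> linarith
  have u3 : σ₂ c < 3 := by
    refine up _ _ _ ?_ ?_ c2' <;> linarith
  have u4 : 1 < σ₂ c := by
    refine down _ _ _ ?_ ?_ c2' <;> linarith
  rw [s1_def] at u1 u2
  rw [s2_def] at u3 u4
  have i1 : (c.im : ℝ) < 2 := by nlinarith
  have i2 : (-2 : ℝ) < c.im := by nlinarith
  have i1 : c.im < 2 := by exact_mod_cast i1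
  have i2 : -2 < c.im := by exact_mod_cast i2
  obtain h | h | h : c.im = -1 ∨ c.im = 0 ∨ c.im = 1 := by omega
  · rw [h] at u1 u2 u3 u4
    push_cast at *
    have j1 : (2 : ℝ) < c.re := by linarith
    have j2 : (c.re : ℝ) < 3 := by linarith
    have j1 : 2 < c.re := by exact_mod_cast j1
    have j2 : c.re < 3 := by exact_mod_cast j2
    omega
  · rw [h] at u1 u2 u3 u4
    push_cast at *
    have j1 : (1 : ℝ) < c.re := by linarith
    have j2 : (c.re : ℝ) < 3 := by linarith
    have j1 : 1 < c.re := by exact_mod_cast j1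
    have j2 : c.re < 3 := by exact_mod_cast j2
    obtain rfl : c = 2 := by ext <;> simp <;> omega
    refine hpar ?_ rfl rfl
    push_cast; ring
  · rw [h] at u1 u2 u3 u4
    push_cast at *
    have j1 : (1 : ℝ) < c.re := by linarith
    have j2 : (c.re : ℝ) < 2 := by linarith
    have j1 : 1 < c.re := by exact_mod_cast j1
    have j2 : c.re < 2 := by exact_mod_cast j2
    omega

/-- An odd `b` with `b²` between about `2m` and `6m`. -/
lemma exists_odd_between {m : ℤ} (hm : 11 ≤ m) :
    ∃ k : ℤ, 2 * m + 5 ≤ (2 * k + 1) ^ 2 ∧ (2 * k + 1) ^ 2 ≤ 6 * m - 14 := by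
  classical
  have hex : ∃ k : ℕ, 2 * m + 5 ≤ (2 * k + 1) ^ 2 := ⟨m.toNat, by
    rw [Int.toNat_of_nonneg (by omega)]; nlinarith⟩
  obtain ⟨k, hk, hmin⟩ : ∃ k : ℕ, 2 * m + 5 ≤ (2 * k + 1) ^ 2 ∧
      ∀ j < k, ¬ 2 * m + 5 ≤ (2 * (j : ℤ) + 1) ^ 2 :=
    ⟨Nat.find hex, Nat.find_spec hex, fun j hj => Nat.find_min hex hj⟩
  refine ⟨k, hk, ?_⟩
  have hk0 : k ≠ 0 := by rintro rfl; norm_num at hk; omega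
  obtain ⟨j, rfl⟩ := Nat.exists_eq_succ_of_ne_zero hk0
  have := hmin j (by omega)
  push_cast at *
  by_contra! h
  nlinarith


/-! ### The field `ℚ(√5, √m)` -/

lemma span_four {a b : ℝ} {A B : ℚ} (ha : a ^ 2 = A) (hb : b ^ 2 = B) {x : ℝ}
    (hx : x ∈ IntermediateField.adjoin ℚ {a, b}) :
    ∃ r₀ r₁ r₂ r₃ : ℚ, x = r₀ + r₁ * a + r₂ * b + r₃ * (a * b) := by
  have halg : ∀ y ∈ ({a, b} : Set ℝ), IsAlgebraic ℚ y := by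
    have key : ∀ (c : ℝ) (C : ℚ), c ^ 2 = C → IsAlgebraic ℚ c := by
      intro c C h
      apply IsIntegral.isAlgebraic
      apply IsIntegral.of_pow (n := 2) (by norm_num)
      rw [h]
      exact isIntegral_algebraMap (R := ℚ) (A := ℝ) (x := C)
    rintro y (rfl | rfl)
    · exact key _ _ ha
    · exact key _ _ hb
  rw [← IntermediateField.mem_toSubalgebra,
    IntermediateField.adjoin_toSubalgebra_of_isAlgebraic halg] at hx
  induction hx using Algebra.adjoin_induction with
  | mem y hy =>
    rcases hy with rfl | rfl
    · exact ⟨0, 1, 0, 0, by simp⟩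
    · exact ⟨0, 0, 1, 0, by simp⟩
  | algebraMap r => exact ⟨r, 0, 0, 0, by simp⟩
  | add y z _ _ hy hz =>
    obtain ⟨r₀, r₁, r₂, r₃, rfl⟩ := hy
    obtain ⟨s₀, s₁, s₂, s₃, rfl⟩ := hz
    exact ⟨r₀ + s₀, r₁ + s₁, r₂ + s₂, r₃ + s₃, by push_cast; ring⟩
  | mul y z _ _ hy hz =>
    obtain ⟨r₀, r₁, r₂, r₃, rfl⟩ := hy
    obtain ⟨s₀, s₁, s₂, s₃, rfl⟩ := hz
    refine ⟨r₀ * s₀ + A * (r₁ * s₁) + B * (r₂ * s₂) + A * B * (r₃ * s₃),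
      r₀ * s₁ + r₁ * s₀ + B * (r₂ * s₃ + r₃ * s₂),
      r₀ * s₂ + r₂ * s₀ + A * (r₁ * s₃ + r₃ * s₁),
      r₀ * s₃ + r₃ * s₀ + r₁ * s₂ + r₂ * s₁, ?_⟩
    push_cast
    rw [← ha, ← hb]
    ring

lemma four_indep {a b : ℝ} {A B : ℚ} (ha : a ^ 2 = A) (hb : b ^ 2 = B)
    (hA : ¬ IsSquare A) (hB : ¬ IsSquare B) (hAB : ¬ IsSquare (A * B))
    {c₀ c₁ c₂ c₃ : ℚ} (h : (c₀ : ℝ) + c₁ * a + c₂ * b + c₃ * (a * b) = 0) :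
    c₀ = 0 ∧ c₁ = 0 ∧ c₂ = 0 ∧ c₃ = 0 := by
  -- an element `u + v a` with vanishing norm is zero
  have nonsq : ∀ (C u v : ℚ), ¬ IsSquare C → u ^ 2 = C * v ^ 2 → u = 0 ∧ v = 0 := by
    intro C u v hC huv
    by_cases hv : v = 0
    · subst hv; simpa using huv
    · exact absurd ⟨u / v, by field_simp; linarith⟩ hC
  have two : ∀ (c : ℝ) (C u v : ℚ), c ^ 2 = C → ¬ IsSquare C → (u : ℝ) + v * c = 0 →
      u = 0 ∧ v = 0 := by
    intro c C u v hc hC huv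
    refine nonsq C u v hC ?_
    have : (u : ℝ) ^ 2 = C * v ^ 2 := by
      rw [← hc]; linear_combination ((u : ℝ) - v * c) * huv
    exact_mod_cast this
  -- the norm of the relation down to `ℚ(a)`
  have hn : ((c₀ ^ 2 + A * c₁ ^ 2 - B * c₂ ^ 2 - B * A * c₃ ^ 2 : ℚ) : ℝ) +
      ((2 * c₀ * c₁ - 2 * B * c₂ * c₃ : ℚ) : ℝ) * a = 0 := by
    push_cast
    rw [← ha, ← hb]
    linear_combination ((c₀ : ℝ) + c₁ * a - (c₂ * b + c₃ * (a * b))) * h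
  obtain ⟨h1, h2⟩ := two a A _ _ ha hA hn
  have hn' : ((c₀ ^ 2 - A * c₁ ^ 2 + B * c₂ ^ 2 - B * A * c₃ ^ 2 : ℚ) : ℝ) +
      ((2 * c₀ * c₂ - 2 * A * c₁ * c₃ : ℚ) : ℝ) * b = 0 := by
    push_cast
    rw [← ha, ← hb]
    linear_combination ((c₀ : ℝ) + c₂ * b - (c₁ * a + c₃ * (a * b))) * h
  obtain ⟨h3, h4⟩ := two b B _ _ hb hB hn'
  have e1 : c₀ ^ 2 = A * B * c₃ ^ 2 := by linarith
  obtain ⟨rfl, rfl⟩ := nonsq _ _ _ hAB e1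
  have e2 : (A * c₁) ^ 2 = A * B * c₂ ^ 2 := by linear_combination A * h1
  obtain ⟨e3, rfl⟩ := nonsq _ _ _ hAB e2
  have hA0 : A ≠ 0 := by rintro rfl; exact hA ⟨0, by simp⟩
  exact ⟨rfl, by simpa [hA0] using e3, rfl, rfl⟩

/-- The algebra `ℚ(φ)[T]/(T² - m)`, a model of `ℚ(√5, √m)` on which the conjugations are visible. -/
abbrev Model (m : ℕ) := QuadraticAlgebra (QuadraticAlgebra ℚ 1 1) (m : QuadraticAlgebra ℚ 1 1) 0

/-- Evaluation of the model at real values `g` of `φ` and `t` of `T`; the four choices of roots give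
the four real embeddings. -/
def ev {m : ℕ} (g t : ℝ) (hg : g ^ 2 = g + 1) (ht : t ^ 2 = m) : Model m →+* ℝ where
  toFun x := (x.re.re + x.re.im * g) + (x.im.re + x.im.im * g) * t
  map_one' := by
    have e1 : (1 : Model m).re = 1 := rfl
    have e2 : (1 : Model m).im = 0 := rfl
    have e3 : (1 : QuadraticAlgebra ℚ 1 1).re = 1 := rfl
    have e4 : (1 : QuadraticAlgebra ℚ 1 1).im = 0 := rfl
    simp [e1, e2, e3, e4]
  map_zero' := by simp
  map_add' x y := by simp; ring
  map_mul' x y := by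
    have e1 : ((m : QuadraticAlgebra ℚ 1 1)).re = m := rfl
    have e2 : ((m : QuadraticAlgebra ℚ 1 1)).im = 0 := rfl
    simp [e1, e2]
    grind

lemma not_isSquare_of_squarefree {n : ℕ} (h : Squarefree n) (h1 : 1 < n) :
    ¬ IsSquare (n : ℚ) := by
  rw [Rat.isSquare_natCast_iff]
  rintro ⟨r, rfl⟩
  have := h r dvd_rfl
  rw [Nat.isUnit_iff] at this
  subst this; simp at h1

lemma gr_eq : gr = (1 + √5) / 2 := rfl

lemma sqrt_nat_sq (n : ℕ) : (√(n : ℝ)) ^ 2 = ((n : ℚ) : ℝ) := by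
  rw [Real.sq_sqrt (Nat.cast_nonneg n)]; norm_cast

lemma indep_five {m : ℕ} (hm : Squarefree m) (h1 : 1 < m) (h5 : ¬ 5 ∣ m) {c₀ c₁ c₂ c₃ : ℚ}
    (h : (c₀ : ℝ) + c₁ * √5 + c₂ * √m + c₃ * (√5 * √m) = 0) :
    c₀ = 0 ∧ c₁ = 0 ∧ c₂ = 0 ∧ c₃ = 0 := by
  have p5 : Nat.Prime 5 := by norm_num
  refine four_indep (A := (5 : ℕ)) (B := m) (by simp) (sqrt_nat_sq m)
    (not_isSquare_of_squarefree p5.prime.squarefree (by norm_num))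
    (not_isSquare_of_squarefree hm h1) ?_ h
  rw [← Nat.cast_mul]
  refine not_isSquare_of_squarefree ?_ (by omega)
  rw [Nat.squarefree_mul ((Nat.Prime.coprime_iff_not_dvd p5).2 h5)]
  exact ⟨p5.prime.squarefree, hm⟩

lemma indep_gr {m : ℕ} (hm : Squarefree m) (h1 : 1 < m) (h5 : ¬ 5 ∣ m) {c₀ c₁ c₂ c₃ : ℚ}
    (h : ((c₀ : ℝ) + c₁ * gr) + (c₂ + c₃ * gr) * √m = 0) :
    c₀ = 0 ∧ c₁ = 0 ∧ c₂ = 0 ∧ c₃ = 0 := by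
  have := indep_five hm h1 h5 (c₀ := c₀ + c₁ / 2) (c₁ := c₁ / 2) (c₂ := c₂ + c₃ / 2)
    (c₃ := c₃ / 2) (by rw [gr_eq] at h; push_cast; linear_combination h)
  obtain ⟨e0, e1, e2, e3⟩ := this
  refine ⟨by linarith, by linarith, by linarith, by linarith⟩

/-- Integrality passes to conjugates. -/
lemma conj_integral {m : ℕ} (hm : Squarefree m) (h1 : 1 < m) (h5 : ¬ 5 ∣ m) {r₀ r₁ s₀ s₁ : ℚ}
    (hx : IsIntegral ℤ (((r₀ : ℝ) + r₁ * gr) + (s₀ + s₁ * gr) * √m))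
    {g t : ℝ} (hg : g ^ 2 = g + 1) (ht : t ^ 2 = m) :
    IsIntegral ℤ (((r₀ : ℝ) + r₁ * g) + (s₀ + s₁ * g) * t) := by
  have hm2 : (√(m : ℝ)) ^ 2 = m := Real.sq_sqrt (Nat.cast_nonneg m)
  let y : Model m := ⟨⟨r₀, r₁⟩, ⟨s₀, s₁⟩⟩
  have hinj : Function.Injective (ev gr (√m) gr_sq hm2) := by
    rw [injective_iff_map_eq_zero]
    intro z hz
    obtain ⟨e0, e1, e2, e3⟩ := indep_gr hm h1 h5 (c₀ := z.re.re) (c₁ := z.re.im)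
      (c₂ := z.im.re) (c₃ := z.im.im) hz
    ext
    · exact e0
    · exact e1
    · exact e2
    · exact e3
  have hy : IsIntegral ℤ y :=
    (isIntegral_algHom_iff (ev gr (√m) gr_sq hm2).toIntAlgHom hinj).1 hx
  exact hy.map (ev g t hg ht).toIntAlgHom

lemma rat_integral {r : ℚ} (h : IsIntegral ℤ (r : ℝ)) : ∃ n : ℤ, r = n := by
  have h2 : IsIntegral ℤ r :=
    (isIntegral_algebraMap_iff (R := ℤ) (A := ℚ) (B := ℝ) (algebraMap ℚ ℝ).injective).1 h
  obtain ⟨n, hn⟩ := IsIntegrallyClosed.isIntegral_iff.1 h2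
  exact ⟨n, by simpa using hn.symm⟩

/-- Integral elements of `ℚ(√5)` lie in `ℤ[φ]`. -/
lemma golden_integral {r s : ℚ} (h : IsIntegral ℤ ((r : ℝ) + s * gr))
    (h' : IsIntegral ℤ ((r : ℝ) + s * (1 - gr))) : ∃ u : O, r = u.re ∧ s = u.im := by
  obtain ⟨t, ht⟩ := rat_integral (r := 2 * r + s) (by
    have e : ((2 * r + s : ℚ) : ℝ) = (r + s * gr) + (r + s * (1 - gr)) := by push_cast; ring
    rw [e]; exact h.add h')
  obtain ⟨n, hn⟩ := rat_integral (r := r ^ 2 + r * s - s ^ 2) (by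
    have e : ((r ^ 2 + r * s - s ^ 2 : ℚ) : ℝ) = (r + s * gr) * (r + s * (1 - gr)) := by
      push_cast; linear_combination ((s : ℝ) ^ 2) * gr_sq
    rw [e]; exact h.mul h')
  have key : 5 * s ^ 2 = ((t ^ 2 - 4 * n : ℤ) : ℚ) := by
    push_cast
    rw [← ht, ← hn]; ring
  obtain ⟨w, hw⟩ : ∃ w : ℤ, 5 * s = w := by
    have : IsIntegral ℤ (((5 * s : ℚ)) : ℝ) := by
      apply IsIntegral.of_pow (n := 2) (by norm_num)
      have : (((5 * s : ℚ) : ℝ)) ^ 2 = ((5 * (t ^ 2 - 4 * n) : ℤ) : ℝ) := by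
        have : (5 * s) ^ 2 = ((5 * (t ^ 2 - 4 * n) : ℤ) : ℚ) := by
          push_cast at key ⊢; linear_combination 5 * key
        exact_mod_cast this
      rw [this]
      exact isIntegral_algebraMap (R := ℤ) (A := ℝ)
    exact rat_integral this
  have hw2 : w ^ 2 = 5 * (t ^ 2 - 4 * n) := by
    have : (w : ℚ) ^ 2 = 5 * (t ^ 2 - 4 * n) := by
      rw [← hw]; push_cast at key; linear_combination 5 * key
    exact_mod_cast this
  obtain ⟨s', rfl⟩ : (5 : ℤ) ∣ w :=
    (Int.prime_ofNat_iff.2 (by norm_num : Nat.Prime 5)).dvd_of_dvd_pow ⟨_, hw2⟩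
  have hs : s = s' := by push_cast at hw; linarith
  have hpar : (2 : ℤ) ∣ t - s' := by
    have h4 : t ^ 2 - 5 * s' ^ 2 = 4 * n := by nlinarith
    have : Even (t ^ 2 - 5 * s' ^ 2) := ⟨2 * n, by linarith⟩
    rw [← even_iff_two_dvd]
    have h5 : ¬ Even (5 : ℤ) := by decide
    simp only [Int.even_sub, Int.even_mul, Int.even_pow, h5] at this ⊢
    simpa using this
  obtain ⟨r', hr'⟩ := hpar
  refine ⟨⟨r', s'⟩, ?_, hs⟩
  have : (t : ℚ) - s' = 2 * r' := by exact_mod_cast hr'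
  simp only
  linarith


/-! ### The integers of `ℚ(√5, √m)` -/

/-- A squarefree integer prime to `5` (the discriminant) is a radical element of `ℤ[φ]`. -/
lemma dvd_of_dvd_sq {m : ℕ} (hm : Squarefree m) (h5 : ¬ 5 ∣ m) {g : O}
    (h : (m : O) ∣ g ^ 2) : (m : O) ∣ g := by
  have hmZ : Squarefree (m : ℤ) := Int.squarefree_natCast.2 hm
  have hcop : IsCoprime (m : ℤ) 5 := by
    have p5 : Nat.Prime 5 := by norm_num
    have := ((Nat.Prime.coprime_iff_not_dvd p5).2 h5).symm
    exact_mod_cast Nat.isCoprime_iff_coprime.2 this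
  have e : (m : O) = ((m : ℤ) : O) := by simp
  rw [e, int_dvd_iff] at h ⊢
  obtain ⟨h1, h2⟩ := h
  have e1 : (g ^ 2).re = g.re ^ 2 + g.im ^ 2 := by simp [pow_two]
  have e2 : (g ^ 2).im = g.im * (2 * g.re + g.im) := by simp [pow_two]; ring
  rw [e1] at h1; rw [e2] at h2
  have h3 : (m : ℤ) ∣ 5 * g.im ^ 3 := by
    have : 5 * g.im ^ 3 = 4 * g.im * (g.re ^ 2 + g.im ^ 2)
      + (g.im - 2 * g.re) * (g.im * (2 * g.re + g.im)) := by ring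
    rw [this]
    exact dvd_add (h1.mul_left _) (h2.mul_left _)
  have h4 : (m : ℤ) ∣ g.im := (hmZ.dvd_pow_iff_dvd (by norm_num : (3 : ℕ) ≠ 0)).1
    (hcop.dvd_of_dvd_mul_left h3)
  refine ⟨(hmZ.dvd_pow_iff_dvd two_ne_zero).1 ?_, h4⟩
  exact (dvd_add_left (h4.trans (dvd_pow_self _ two_ne_zero))).1 h1

lemma two_dvd_of_sq {a : O} (h : 2 ∣ a ^ 2) : 2 ∣ a := by
  by_contra h2
  rw [pow_two] at h
  exact h2 (two_dvd_mul h h2)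

lemma integral_congr {a b : ℝ} (h : IsIntegral ℤ a) (e : a = b) : IsIntegral ℤ b := e ▸ h

lemma conj_gr_sq : (1 - gr) ^ 2 = (1 - gr) + 1 := by linear_combination gr_sq

/-- Every integer of `ℚ(√5, √m)` is `(R + S√m) / 2` with `R, S ∈ ℤ[φ]` and `R² ≡ mS²` mod `4`. -/
lemma integral_form {m : ℕ} (hm : Squarefree m) (h1 : 1 < m) (h5 : ¬ 5 ∣ m) {x : ℝ}
    (hxK : x ∈ IntermediateField.adjoin ℚ {√5, √(m : ℝ)}) (hx : IsIntegral ℤ x) :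
    ∃ R S : O, 2 * x = σ₁ R + σ₁ S * √m ∧ (4 : O) ∣ R ^ 2 - m * S ^ 2 := by
  obtain ⟨q₀, q₁, q₂, q₃, hq⟩ := span_four (a := √5) (b := √(m : ℝ)) (A := (5 : ℕ)) (B := m)
    (by simp) (sqrt_nat_sq m) hxK
  obtain ⟨r₀, r₁, s₀, s₁, hr⟩ : ∃ r₀ r₁ s₀ s₁ : ℚ,
      2 * x = (r₀ + r₁ * gr) + (s₀ + s₁ * gr) * √m := by
    refine ⟨2 * (q₀ - q₁), 4 * q₁, 2 * (q₂ - q₃), 4 * q₃, ?_⟩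
    rw [hq, gr_eq]; push_cast; ring
  have hmm : (√(m : ℝ)) ^ 2 = m := Real.sq_sqrt (Nat.cast_nonneg m)
  -- for either embedding `g` of `φ`: trace and norm to `ℚ(√5)`
  have trace_norm : ∀ g : ℝ, g ^ 2 = g + 1 → IsIntegral ℤ ((r₀ : ℝ) + r₁ * g) ∧
      IsIntegral ℤ ((((r₀ : ℝ) + r₁ * g) ^ 2 - m * (s₀ + s₁ * g) ^ 2) / 4) := by
    intro g hg
    have e : x = ((r₀ / 2 : ℚ) + (r₁ / 2 : ℚ) * gr) + ((s₀ / 2 : ℚ) + (s₁ / 2 : ℚ) * gr) * √m := by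
      push_cast; linarith
    rw [e] at hx
    have i1 := conj_integral hm h1 h5 hx hg hmm
    have i2 := conj_integral hm h1 h5 hx hg (t := -√m) (by rw [neg_sq]; exact hmm)
    refine ⟨integral_congr (i1.add i2) ?_, integral_congr (i1.mul i2) ?_⟩
    · push_cast; ring
    · push_cast
      linear_combination (-(((s₀ : ℝ) + s₁ * g) ^ 2) / 4) * hmm
  have int4 : IsIntegral ℤ (4 : ℝ) := by
    simpa using isIntegral_algebraMap (R := ℤ) (A := ℝ) (x := 4)
  have intm : IsIntegral ℤ (m : ℝ) := by
    simpa using isIntegral_algebraMap (R := ℤ) (A := ℝ) (x := m)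
  have mS_sq : ∀ g : ℝ, g ^ 2 = g + 1 → IsIntegral ℤ ((m : ℝ) * (s₀ + s₁ * g) ^ 2) := by
    intro g hg
    obtain ⟨i1, i2⟩ := trace_norm g hg
    exact integral_congr ((i1.pow 2).sub (int4.mul i2)) (by ring)
  have mS : ∀ g : ℝ, g ^ 2 = g + 1 → IsIntegral ℤ ((m : ℝ) * (s₀ + s₁ * g)) := by
    intro g hg
    exact IsIntegral.of_pow (n := 2) (by norm_num)
      (integral_congr (intm.mul (mS_sq g hg)) (by ring))
  obtain ⟨R, hR0, hR1⟩ := golden_integral (trace_norm gr gr_sq).1 (trace_norm _ conj_gr_sq).1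
  obtain ⟨G, hG0, hG1⟩ := golden_integral (r := m * s₀) (s := m * s₁)
    (integral_congr (mS gr gr_sq) (by push_cast; ring))
    (integral_congr (mS _ conj_gr_sq) (by push_cast; ring))
  obtain ⟨H, hH0, hH1⟩ := golden_integral (r := m * (s₀ ^ 2 + s₁ ^ 2))
    (s := m * (2 * s₀ * s₁ + s₁ ^ 2))
    (integral_congr (mS_sq gr gr_sq) (by
      push_cast; linear_combination ((m : ℝ) * s₁ ^ 2) * gr_sq))
    (integral_congr (mS_sq _ conj_gr_sq) (by
      push_cast; linear_combination ((m : ℝ) * s₁ ^ 2) * conj_gr_sq))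
  have hGH : G ^ 2 = m * H := by
    rw [pow_two]
    ext
    · simp
      have : (G.re * G.re + G.im * G.im : ℚ) = m * H.re := by
        rw [← hG0, ← hG1, ← hH0]; ring
      exact_mod_cast this
    · simp
      have : (G.re * G.im + G.im * G.re + G.im * G.im : ℚ) = m * H.im := by
        rw [← hG0, ← hG1, ← hH1]; ring
      exact_mod_cast this
  obtain ⟨S, rfl⟩ := dvd_of_dvd_sq hm h5 ⟨H, hGH⟩
  have hm0 : (m : ℚ) ≠ 0 := by positivity
  have hS0 : s₀ = S.re := by
    simp at hG0; rcases hG0 with h | h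
    · exact h
    · omega
  have hS1 : s₁ = S.im := by
    simp at hG1; rcases hG1 with h | h
    · exact h
    · omega
  obtain ⟨N, hN0, hN1⟩ := golden_integral
    (r := (r₀ ^ 2 + r₁ ^ 2 - m * (s₀ ^ 2 + s₁ ^ 2)) / 4)
    (s := (2 * r₀ * r₁ + r₁ ^ 2 - m * (2 * s₀ * s₁ + s₁ ^ 2)) / 4)
    (integral_congr (trace_norm gr gr_sq).2 (by
      push_cast; linear_combination (((r₁ : ℝ) ^ 2 - (m : ℝ) * s₁ ^ 2) / 4) * gr_sq))
    (integral_congr (trace_norm _ conj_gr_sq).2 (by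
      push_cast; linear_combination (((r₁ : ℝ) ^ 2 - (m : ℝ) * s₁ ^ 2) / 4) * conj_gr_sq))
  refine ⟨R, S, ?_, N, ?_⟩
  · rw [hr, s1_def, s1_def, hR0, hR1, hS0, hS1]; push_cast; ring
  · rw [hR0, hR1, hS0, hS1] at hN0 hN1
    rw [pow_two, pow_two]
    ext
    · simp
      have : ((R.re * R.re + R.im * R.im) - m * (S.re * S.re + S.im * S.im) : ℚ) = 4 * N.re := by
        rw [← hN0]; ring
      exact_mod_cast this
    · simp
      have : ((R.re * R.im + R.im * R.re + R.im * R.im)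
          - m * (S.re * S.im + S.im * S.re + S.im * S.im) : ℚ) = 4 * N.im := by
        rw [← hN1]; ring
      exact_mod_cast this

/-- Integers of `ℚ(√5, √m)`, `m ≢ 1` mod `4`. -/
lemma integral_form_two_three {m : ℕ} (hm : Squarefree m) (h1 : 1 < m) (h5 : ¬ 5 ∣ m)
    (h4 : m % 4 = 2 ∨ m % 4 = 3) {x : ℝ}
    (hxK : x ∈ IntermediateField.adjoin ℚ {√5, √(m : ℝ)}) (hx : IsIntegral ℤ x) :
    ∃ u v : O, x = σ₁ u + σ₁ v * √m := by
  obtain ⟨R, S, hRS, N, hN⟩ := integral_form hm h1 h5 hxK hx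
  have key : (2 : O) ∣ R ∧ (2 : O) ∣ S := by
    obtain ⟨n, hn⟩ : ∃ n, n = m / 4 := ⟨_, rfl⟩
    rcases h4 with h | h
    · have e : (m : O) = 4 * n + 2 := by
        have : m = 4 * n + 2 := by omega
        rw [this]; push_cast; ring
      rw [e] at hN
      have hR : (2 : O) ∣ R := two_dvd_of_sq ⟨2 * N + (2 * n + 1) * S ^ 2, by linear_combination hN⟩
      obtain ⟨R', rfl⟩ := hR
      refine ⟨dvd_mul_right _ _, two_dvd_of_sq ⟨R' ^ 2 - N - n * S ^ 2, ?_⟩⟩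
      have h2 : (2 : O) ≠ 0 := two_ne_zero
      apply mul_left_cancel₀ h2
      linear_combination -hN
    · have e : (m : O) = 4 * n + 3 := by
        have : m = 4 * n + 3 := by omega
        rw [this]; push_cast; ring
      rw [e] at hN
      have hR : (2 : O) ∣ R + S := two_dvd_of_sq
        ⟨2 * N + (2 * n + 2) * S ^ 2 + R * S, by linear_combination hN⟩
      obtain ⟨T, hT⟩ := hR
      have hRT : R = 2 * T - S := by linear_combination hT
      have hS : (2 : O) ∣ S := by
        apply two_dvd_of_sq
        refine ⟨T ^ 2 - T * S - n * S ^ 2 - N, ?_⟩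
        have h2 : (2 : O) ≠ 0 := two_ne_zero
        apply mul_left_cancel₀ h2
        rw [hRT] at hN
        linear_combination -hN
      exact ⟨by rw [hRT]; exact dvd_sub (dvd_mul_right _ _) hS, hS⟩
  obtain ⟨⟨u, rfl⟩, ⟨v, rfl⟩⟩ := key
  refine ⟨u, v, ?_⟩
  simp only [map_mul, map_ofNat] at hRS
  linarith

/-- Integers of `ℚ(√5, √m)`, `m ≡ 1` mod `4`. -/
lemma integral_form_one {m : ℕ} (hm : Squarefree m) (h1 : 1 < m) (h5 : ¬ 5 ∣ m)
    (h4 : m % 4 = 1) {x : ℝ}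
    (hxK : x ∈ IntermediateField.adjoin ℚ {√5, √(m : ℝ)}) (hx : IsIntegral ℤ x) :
    ∃ u v : O, x = σ₁ u + σ₁ v * ((1 + √m) / 2) := by
  obtain ⟨R, S, hRS, N, hN⟩ := integral_form hm h1 h5 hxK hx
  obtain ⟨n, hn⟩ : ∃ n, n = m / 4 := ⟨_, rfl⟩
  have e : (m : O) = 4 * n + 1 := by
    have : m = 4 * n + 1 := by omega
    rw [this]; push_cast; ring
  rw [e] at hN
  have key : (2 : O) ∣ R - S := two_dvd_of_sq
    ⟨2 * N + (2 * n + 1) * S ^ 2 - R * S, by linear_combination hN⟩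
  obtain ⟨u, hu⟩ := key
  refine ⟨u, S, ?_⟩
  have := congrArg σ₁ hu
  simp only [map_sub, map_mul, map_ofNat] at this
  linarith


/-- A field `ℚ(√p, √q)` containing `√5` is `ℚ(√5, √m)` with `m` squarefree and prime to `5`. -/
lemma exists_radicand {K : IntermediateField ℚ ℝ} {p q : ℕ} (hp : Squarefree p)
    (hq : Squarefree q) (hp1 : 1 < p) (hq1 : 1 < q) (hpq : p ≠ q)
    (hK : K = IntermediateField.adjoin ℚ {√(p : ℝ), √(q : ℝ)}) (h5 : √5 ∈ K) :
    ∃ m : ℕ, Squarefree m ∧ 1 < m ∧ ¬ 5 ∣ m ∧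
      K = IntermediateField.adjoin ℚ {√5, √(m : ℝ)} := by
  have hpK : √(p : ℝ) ∈ K := by
    rw [hK]; exact IntermediateField.subset_adjoin _ _ (by simp)
  have hqK : √(q : ℝ) ∈ K := by
    rw [hK]; exact IntermediateField.subset_adjoin _ _ (by simp)
  obtain ⟨n, hn, hn1, hn5, hnK⟩ : ∃ n : ℕ, Squarefree n ∧ 1 < n ∧ n ≠ 5 ∧ √(n : ℝ) ∈ K := by
    by_cases h : p = 5
    · exact ⟨q, hq, hq1, by omega, hqK⟩
    · exact ⟨p, hp, hp1, h, hpK⟩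
  obtain ⟨m, hm, hm1, hm5, hmK⟩ : ∃ m : ℕ, Squarefree m ∧ 1 < m ∧ ¬ 5 ∣ m ∧ √(m : ℝ) ∈ K := by
    by_cases h : 5 ∣ n
    · obtain ⟨k, rfl⟩ := h
      refine ⟨k, hn.of_mul_right, ?_, ?_, ?_⟩
      · rcases Nat.lt_or_ge 1 k with h | h
        · exact h
        · interval_cases k <;> simp_all
      · rintro ⟨j, rfl⟩
        have := hn 5 ⟨j, by ring⟩
        rw [Nat.isUnit_iff] at this; omega
      · have e : √(k : ℝ) = √((5 * k : ℕ) : ℝ) / √5 := by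
          push_cast
          rw [Real.sqrt_mul (by norm_num)]
          field_simp
        rw [e]; exact div_mem hnK h5
    · exact ⟨n, hn, hn1, h, hnK⟩
  refine ⟨m, hm, hm1, hm5, ?_⟩
  -- `ℚ(√5, √m) ⊆ K` has four independent elements, while `K` is spanned by four
  have hle : IntermediateField.adjoin ℚ {√5, √(m : ℝ)} ≤ K := by
    rw [IntermediateField.adjoin_le_iff]
    rintro x (rfl | rfl)
    · exact h5
    · exact hmK
  have hspan : K.toSubalgebra.toSubmodule ≤
      Submodule.span ℚ (Set.range ![(1 : ℝ), √p, √q, √p * √q]) := by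
    intro x hx
    have hx' : x ∈ IntermediateField.adjoin ℚ {√(p : ℝ), √(q : ℝ)} := by rw [← hK]; exact hx
    obtain ⟨r₀, r₁, r₂, r₃, rfl⟩ := span_four (sqrt_nat_sq p) (sqrt_nat_sq q) hx'
    rw [Submodule.mem_span_range_iff_exists_fun]
    exact ⟨![r₀, r₁, r₂, r₃], by simp [Fin.sum_univ_four, Algebra.smul_def]⟩
  have : FiniteDimensional ℚ (Submodule.span ℚ (Set.range ![(1 : ℝ), √p, √q, √p * √q])) :=
    FiniteDimensional.span_of_finite ℚ (Set.finite_range _)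
  have hfin : FiniteDimensional ℚ K.toSubalgebra.toSubmodule :=
    Submodule.finiteDimensional_of_le hspan
  have : FiniteDimensional ℚ K := hfin
  have hrank : Module.finrank ℚ K ≤ 4 :=
    (Submodule.finrank_mono hspan).trans
      ((finrank_range_le_card (R := ℚ) ![(1 : ℝ), √p, √q, √p * √q]).trans (by simp))
  obtain ⟨K', hK'⟩ : ∃ K', K' = IntermediateField.adjoin ℚ {√5, √(m : ℝ)} := ⟨_, rfl⟩
  rw [← hK'] at hle ⊢
  have m5 : √5 ∈ K' := by rw [hK']; exact IntermediateField.subset_adjoin _ _ (by simp)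
  have mm : √(m : ℝ) ∈ K' := by rw [hK']; exact IntermediateField.subset_adjoin _ _ (by simp)
  have : FiniteDimensional ℚ K' :=
    Submodule.finiteDimensional_of_le
      (show K'.toSubalgebra.toSubmodule ≤ K.toSubalgebra.toSubmodule from hle)
  have hrank' : 4 ≤ Module.finrank ℚ K' := by
    have hli : LinearIndependent ℚ
        ![(1 : K'), ⟨√5, m5⟩, ⟨√m, mm⟩, ⟨√5 * √m, mul_mem m5 mm⟩] := by
      rw [Fintype.linearIndependent_iff]
      intro c hc
      have hc' := congrArg (fun z : K' => (z : ℝ)) hc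
      simp [Fin.sum_univ_four, Algebra.smul_def] at hc'
      obtain ⟨e0, e1, e2, e3⟩ := indep_five hm hm1 hm5 hc'
      intro i; fin_cases i
      · exact e0
      · exact e1
      · exact e2
      · exact e3
    simpa using hli.fintype_card_le_finrank
  exact (IntermediateField.eq_of_le_of_finrank_le hle (hrank.trans hrank')).symm

lemma s1_integral (u : O) : IsIntegral ℤ (σ₁ u) := by
  have hg : IsIntegral ℤ gr := by
    refine ⟨Polynomial.X ^ 2 - Polynomial.X - 1, ?_, ?_⟩
    · monicity!
    · simp; linear_combination gr_sq
  rw [s1_def]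
  exact (isIntegral_algebraMap (R := ℤ) (A := ℝ) (x := u.re)).add
    ((isIntegral_algebraMap (R := ℤ) (A := ℝ) (x := u.im)).mul hg)

lemma s1_mem {K : IntermediateField ℚ ℝ} (h5 : √5 ∈ K) (u : O) : σ₁ u ∈ K := by
  rw [s1_def, gr_eq]
  exact add_mem (intCast_mem K _) (mul_mem (intCast_mem K _)
    (div_mem (add_mem (one_mem K) h5) (ofNat_mem K 2)))

/-- The data of a generator `ω` of the integers `S` over `ℤ[φ]`, with `ω² = Tω + M`. -/
structure IsGen (S : Set ℝ) (ω : ℝ) (T M : ℤ) : Prop where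
  mem_iff : ∀ x, x ∈ S ↔ ∃ u v : O, x = σ₁ u + σ₁ v * ω
  sq : ω ^ 2 = T * ω + M
  inj : ∀ u v : O, σ₁ u + σ₁ v * ω = 0 → u = 0 ∧ v = 0

lemma indep_O {m : ℕ} (hm : Squarefree m) (h1 : 1 < m) (h5 : ¬ 5 ∣ m) {u v : O}
    (h : σ₁ u + σ₁ v * √m = 0) : u = 0 ∧ v = 0 := by
  have := indep_gr hm h1 h5 (c₀ := u.re) (c₁ := u.im) (c₂ := v.re) (c₃ := v.im) (by
    rw [s1_def, s1_def] at h; exact_mod_cast h)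
  obtain ⟨e0, e1, e2, e3⟩ := this
  constructor <;> ext <;> simp <;> assumption_mod_cast

lemma isGen_two_three {m : ℕ} (hm : Squarefree m) (h1 : 1 < m) (h5 : ¬ 5 ∣ m)
    (h4 : m % 4 = 2 ∨ m % 4 = 3) :
    IsGen (ringOfInt (IntermediateField.adjoin ℚ {√5, √(m : ℝ)})) (√m) 0 m := by
  have hmm : (√(m : ℝ)) ^ 2 = m := Real.sq_sqrt (Nat.cast_nonneg m)
  refine ⟨fun x => ⟨fun hx => integral_form_two_three hm h1 h5 h4 hx.1 hx.2, ?_⟩,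
    by simp, fun u v h => indep_O hm h1 h5 h⟩
  rintro ⟨u, v, rfl⟩
  have k5 : √5 ∈ IntermediateField.adjoin ℚ {√5, √(m : ℝ)} :=
    IntermediateField.subset_adjoin _ _ (by simp)
  have km : √(m : ℝ) ∈ IntermediateField.adjoin ℚ {√5, √(m : ℝ)} :=
    IntermediateField.subset_adjoin _ _ (by simp)
  refine ⟨add_mem (s1_mem k5 u) (mul_mem (s1_mem k5 v) km),
    (s1_integral u).add ((s1_integral v).mul ?_)⟩
  apply IsIntegral.of_pow (n := 2) (by norm_num)
  rw [hmm]
  simpa using isIntegral_algebraMap (R := ℤ) (A := ℝ) (x := m)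

lemma isGen_one {m : ℕ} (hm : Squarefree m) (h1 : 1 < m) (h5 : ¬ 5 ∣ m) {M : ℤ}
    (h4 : (m : ℤ) = 4 * M + 1) :
    IsGen (ringOfInt (IntermediateField.adjoin ℚ {√5, √(m : ℝ)})) ((1 + √m) / 2) 1 M := by
  have hmm : (√(m : ℝ)) ^ 2 = m := Real.sq_sqrt (Nat.cast_nonneg m)
  have h4r : (m : ℝ) = 4 * M + 1 := by exact_mod_cast h4
  have hsq : ((1 + √(m : ℝ)) / 2) ^ 2 = (1 : ℤ) * ((1 + √m) / 2) + M := by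
    push_cast; linarith
  refine ⟨fun x => ⟨fun hx => integral_form_one hm h1 h5 (by omega) hx.1 hx.2, ?_⟩,
    hsq, fun u v h => ?_⟩
  · rintro ⟨u, v, rfl⟩
    have k5 : √5 ∈ IntermediateField.adjoin ℚ {√5, √(m : ℝ)} :=
      IntermediateField.subset_adjoin _ _ (by simp)
    have km : √(m : ℝ) ∈ IntermediateField.adjoin ℚ {√5, √(m : ℝ)} :=
      IntermediateField.subset_adjoin _ _ (by simp)
    refine ⟨add_mem (s1_mem k5 u) (mul_mem (s1_mem k5 v)
      (div_mem (add_mem (one_mem _) km) (ofNat_mem _ 2))),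
      (s1_integral u).add ((s1_integral v).mul ?_)⟩
    refine ⟨Polynomial.X ^ 2 - Polynomial.X - Polynomial.C M, by monicity!, ?_⟩
    simp only [Polynomial.eval₂_sub, Polynomial.eval₂_pow, Polynomial.eval₂_X,
      Polynomial.eval₂_C]
    rw [hsq, eq_intCast]; push_cast; ring
  · have := indep_O hm h1 h5 (u := 2 * u + v) (v := v) (by
      simp only [map_add, map_mul, map_ofNat]; linarith)
    obtain ⟨e1, rfl⟩ := this
    simpa using e1


/-! ### The two bounds -/

lemma sum_sq_expand (ω : ℝ) {n : ℕ} (u v : Fin n → O) :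
    ∑ i, (σ₁ (u i) + σ₁ (v i) * ω) ^ 2 =
      σ₁ (∑ i, u i ^ 2) + 2 * σ₁ (∑ i, u i * v i) * ω + σ₁ (∑ i, v i ^ 2) * ω ^ 2 := by
  simp only [map_sum, map_pow, map_mul, Finset.mul_sum, Finset.sum_mul, ← Finset.sum_add_distrib]
  exact Finset.sum_congr rfl fun i _ => by ring

lemma IsGen.upper {S : Set ℝ} {ω : ℝ} {T M : ℤ} (hS : IsGen S ω T M) {α : ℝ}
    (h : IsSumOfSquaresIn S α) : SumOfNSquaresIn S 5 α := by
  obtain ⟨n, x, hx, rfl⟩ := h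
  choose u v huv using fun i => (hS.mem_iff (x i)).1 (hx i)
  obtain ⟨u', v', h1, h2, h3⟩ := rep_five n u v
  refine ⟨fun i => σ₁ (u' i) + σ₁ (v' i) * ω, fun i => (hS.mem_iff _).2 ⟨_, _, rfl⟩, ?_⟩
  simp only [huv]
  rw [sum_sq_expand, sum_sq_expand, h1, h2, h3]

/-- Comparing coordinates in a representation of `A + Bω` as a sum of squares. -/
lemma IsGen.compare {S : Set ℝ} {ω : ℝ} {T M : ℤ} (hS : IsGen S ω T M) {A B : O} {n : ℕ}
    (h : SumOfNSquaresIn S n (σ₁ A + σ₁ B * ω)) : ∃ u v : Fin n → O,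
      ∑ i, u i ^ 2 + M * ∑ i, v i ^ 2 = A ∧ 2 * ∑ i, u i * v i + T * ∑ i, v i ^ 2 = B := by
  obtain ⟨x, hx, he⟩ := h
  choose u v huv using fun i => (hS.mem_iff (x i)).1 (hx i)
  simp only [huv] at he
  rw [sum_sq_expand, hS.sq] at he
  obtain ⟨e1, e2⟩ := hS.inj (∑ i, u i ^ 2 + M * ∑ i, v i ^ 2 - A)
    (2 * ∑ i, u i * v i + T * ∑ i, v i ^ 2 - B) (by
      simp only [map_sub, map_add, map_mul, map_intCast, map_ofNat]
      linear_combination -he)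
  exact ⟨u, v, sub_eq_zero.1 e1, sub_eq_zero.1 e2⟩

/-- A sum of squares of elements of `S` belongs to `S`. -/
lemma IsGen.sum_mem {S : Set ℝ} {ω : ℝ} {T M : ℤ} (hS : IsGen S ω T M) {α : ℝ}
    (h : IsSumOfSquaresIn S α) : α ∈ S := by
  obtain ⟨n, x, hx, rfl⟩ := h
  choose u v huv using fun i => (hS.mem_iff (x i)).1 (hx i)
  rw [hS.mem_iff]
  refine ⟨∑ i, u i ^ 2 + M * ∑ i, v i ^ 2, 2 * ∑ i, u i * v i + T * ∑ i, v i ^ 2, ?_⟩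
  simp only [huv]
  rw [sum_sq_expand, hS.sq]
  simp only [map_add, map_mul, map_intCast, map_ofNat]
  ring

/-- The witness is `ω² + (ω + 1)² + 1 + φ² + φ²`. -/
lemma IsGen.lower_one {S : Set ℝ} {ω : ℝ} {M : ℤ} (hS : IsGen S ω 1 M) (hM : 3 ≤ M) :
    ∃ α ∈ S, IsSumOfSquaresIn S α ∧ ¬ SumOfNSquaresIn S 4 α := by
  have hsum : IsSumOfSquaresIn S
      (σ₁ (2 * (M : O) + 4 + 2 * φ) + σ₁ 4 * ω) := by
    refine ⟨5, fun i => σ₁ (![0, 1, 1, φ, φ] i) + σ₁ (![1, 1, 0, 0, 0] i) * ω,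
      fun i => (hS.mem_iff _).2 ⟨_, _, rfl⟩, ?_⟩
    have h1 := hS.sq
    have h2 := gr_sq
    have e2 : σ₁ 2 = 2 := map_ofNat σ₁ 2
    have e4 : σ₁ 4 = 4 := map_ofNat σ₁ 4
    simp [Fin.sum_univ_five, e2, e4]
    push_cast at h1
    linear_combination -2 * h1 - 2 * h2
  refine ⟨_, hS.sum_mem hsum, hsum, fun h4 => ?_⟩
  obtain ⟨u, v, e1, e2⟩ := hS.compare h4
  exact GoldenPyth.lower_one hM u v e1 (by simpa using e2)

/-- The witness is `(k + 1 + ω)² + (k + ω)² + 1 + φ² + φ²`. -/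
lemma IsGen.lower_two {S : Set ℝ} {ω : ℝ} {m k : ℤ} (hS : IsGen S ω 0 m) (hm : 11 ≤ m)
    (hb1 : 2 * m + 5 ≤ (2 * k + 1) ^ 2) (hb2 : (2 * k + 1) ^ 2 ≤ 6 * m - 14)
    (hb3 : 1000 * (2 * k + 1) ^ 2 ≤ 7236 * m - 30200) :
    ∃ α ∈ S, IsSumOfSquaresIn S α ∧ ¬ SumOfNSquaresIn S 4 α := by
  have hsum : IsSumOfSquaresIn S
      (σ₁ (((2 * m + (2 * k ^ 2 + 2 * k + 4) : ℤ) : O) + 2 * φ) +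
        σ₁ (2 * ((2 * k + 1 : ℤ) : O)) * ω) := by
    refine ⟨5, fun i => σ₁ (![(k : O) + 1, (k : O), 1, φ, φ] i) + σ₁ (![1, 1, 0, 0, 0] i) * ω,
      fun i => (hS.mem_iff _).2 ⟨_, _, rfl⟩, ?_⟩
    have h1 := hS.sq
    have h2 := gr_sq
    have e2 : σ₁ 2 = 2 := map_ofNat σ₁ 2
    have e4 : σ₁ 4 = 4 := map_ofNat σ₁ 4
    simp [Fin.sum_univ_five, e2, e4]
    push_cast at h1
    linear_combination -2 * h1 - 2 * h2
  refine ⟨_, hS.sum_mem hsum, hsum, fun h4 => ?_⟩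
  obtain ⟨u, v, e1, e2⟩ := hS.compare h4
  refine GoldenPyth.lower_two hm hb1 hb2 hb3 u v e1 ?_
  have h2 : (2 : O) ≠ 0 := two_ne_zero
  apply mul_left_cancel₀ h2
  simpa using e2

lemma pythagoras {m : ℕ} (hm : Squarefree m) (h11 : 11 ≤ m) (h5 : ¬ 5 ∣ m)
    {S : Set ℝ} (hSdef : S = ringOfInt (IntermediateField.adjoin ℚ {√5, √(m : ℝ)})) :
    (∀ α ∈ S, IsSumOfSquaresIn S α → SumOfNSquaresIn S 5 α) ∧
      ∃ α ∈ S, IsSumOfSquaresIn S α ∧ ¬ SumOfNSquaresIn S 4 α := by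
  have h4 : m % 4 ≠ 0 := by
    intro h
    have := hm 2 (by omega)
    rw [Nat.isUnit_iff] at this; omega
  by_cases h1 : m % 4 = 1
  · have hS := isGen_one hm (by omega) h5 (M := (m / 4 : ℕ)) (by omega)
    rw [← hSdef] at hS
    exact ⟨fun α _ h => hS.upper h, hS.lower_one (by omega)⟩
  · have hS := isGen_two_three hm (by omega) h5 (by omega)
    rw [← hSdef] at hS
    refine ⟨fun α _ h => hS.upper h, ?_⟩
    obtain ⟨k, hb1, hb2⟩ := exists_odd_between (m := m) (by omega)
    refine hS.lower_two (by omega) hb1 hb2 ?_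
    -- for `m ≥ 14` the last bound is weaker than the second; for `m = 11` the square is `49`
    rcases Nat.lt_or_ge m 14 with h | h
    · have h12 : m = 11 := by
        interval_cases m <;> simp_all
      subst h12
      have hk1 : k < 4 := by push_cast at *; nlinarith
      have hk2 : -5 < k := by push_cast at *; nlinarith
      interval_cases k <;> simp_all
    · have : (14 : ℤ) ≤ m := by exact_mod_cast h
      linarith

end GoldenPyth

/-- Let `K` be a totally real biquadratic field containing `√5`, other
than `ℚ(√2,√5)`, `ℚ(√3,√5)`, `ℚ(√5,√6)`, `ℚ(√5,√7)`. Then the Pythagoras number of the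
ring of integers of `K` equals exactly `5`: every sum of squares in `O_K` is a sum of
`5` squares, and some sum of squares in `O_K` is not a sum of `4` squares. -/
theorem pythagoras_sqrt5_eq_five
    (K : IntermediateField ℚ ℝ) (hK : IsBiquadratic K) (h5 : Real.sqrt 5 ∈ K)
    (h25 : K ≠ biqField 2 5) (h35 : K ≠ biqField 3 5)
    (h56 : K ≠ biqField 5 6) (h57 : K ≠ biqField 5 7) :
    (∀ α ∈ ringOfInt K, IsSumOfSquaresIn (ringOfInt K) α →
      SumOfNSquaresIn (ringOfInt K) 5 α) ∧
    (∃ α ∈ ringOfInt K, IsSumOfSquaresIn (ringOfInt K) α ∧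
      ¬ SumOfNSquaresIn (ringOfInt K) 4 α) := by
  obtain ⟨p, q, hp, hq, hp1, hq1, hpq, hKpq⟩ := hK
  obtain ⟨m, hm, hm1, hm5, hKm⟩ := GoldenPyth.exists_radicand hp hq hp1 hq1 hpq hKpq h5
  have h11 : 11 ≤ m := by
    by_contra hlt
    have hcases : m = 2 ∨ m = 3 ∨ m = 6 ∨ m = 7 := by
      have n4 : m ≠ 4 := by
        rintro rfl; exact absurd (hm 2 (by norm_num)) (by simp)
      have n8 : m ≠ 8 := by
        rintro rfl; exact absurd (hm 2 (by norm_num)) (by simp)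
      have n9 : m ≠ 9 := by
        rintro rfl; exact absurd (hm 3 (by norm_num)) (by simp)
      omega
    rcases hcases with rfl | rfl | rfl | rfl
    · exact h25 (by rw [hKm, biqField, Set.pair_comm]; norm_num)
    · exact h35 (by rw [hKm, biqField, Set.pair_comm]; norm_num)
    · exact h56 (by rw [hKm, biqField]; norm_num)
    · exact h57 (by rw [hKm, biqField]; norm_num)
  exact GoldenPyth.pythagoras hm h11 hm5 (by rw [hKm])
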